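/- arXiv:2509.02162 — 7 statements merged into one kernel-verified Lean document; each statement's English description precedes it below -/
import Mathlib

section
/- Let n ≥ 2, let H be a hyperplane in ℝⁿ, and let ∂ ∈ 𝒥_H(𝒦ⁿₙ) with associated contraction φ_∂. If φ_∂ ∉ ℐ, then ∂ cannot be weakly approximated on 𝒦ⁿₙ by finite compositions of polarizations with respect to hyperplanes parallel to H; that is, it is not the case that for every K ∈ 𝒦ⁿₙ there exist finite compositions ∂_{K,k} of polarizations with respect to hyperplanes parallel to H such that ‖1_{∂_{K,k} K} − 1_{∂K}‖_{L¹} → 0 as k → ∞. -/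
open MeasureTheory Metric Filter Topology
open scoped RealInnerProductSpace

noncomputable section

abbrev Euc (n : ℕ) : Type := EuclideanSpace ℝ (Fin n)

/-- `A` is essentially contained in `B` (up to a set of measure zero). -/
def essSub {n : ℕ} (A B : Set (Euc n)) : Prop := volume (A \ B) = 0

/-- `A` is essentially equal to `B` (up to a set of measure zero). -/
def essEq {n : ℕ} (A B : Set (Euc n)) : Prop := volume ((A \ B) ∪ (B \ A)) = 0

/-- The symmetric difference of two sets. -/
def sd {n : ℕ} (A B : Set (Euc n)) : Set (Euc n) := (A \ B) ∪ (B \ A)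

/-- A convex body: a compact convex set with nonempty interior. -/
def isConvexBody {n : ℕ} (A : Set (Euc n)) : Prop :=
  IsCompact A ∧ Convex ℝ A ∧ (interior A).Nonempty

/-- The infinite spherical cylinder of radius `ρ` whose axis passes through `c`
in direction `u`. -/
def cyl {n : ℕ} (u c : Euc n) (ρ : ℝ) : Set (Euc n) :=
  {y | ‖(y - c) - ⟪y - c, u⟫ • u‖ ≤ ρ}

/-- Membership in `𝒥_H(𝒦ⁿₙ)`: a map on convex bodies, with values in `𝓛ⁿ`, that is
monotonic, measure preserving, maps balls to balls, and respects `H`-cylinders,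
where `H` is a hyperplane with unit normal `u`. -/
def inJH {n : ℕ} (u : Euc n) (D : Set (Euc n) → Set (Euc n)) : Prop :=
  (∀ A : Set (Euc n), isConvexBody A → MeasurableSet (D A) ∧ volume (D A) ≠ ⊤) ∧
  (∀ A B : Set (Euc n), isConvexBody A → isConvexBody B →
      essSub A B → essSub (D A) (D B)) ∧
  (∀ A : Set (Euc n), isConvexBody A → volume (D A) = volume A) ∧
  (∀ A : Set (Euc n), isConvexBody A →
      (∃ (x : Euc n) (r : ℝ), 0 < r ∧ essEq A (closedBall x r)) →
      ∃ (x' : Euc n) (r' : ℝ), 0 < r' ∧ essEq (D A) (closedBall x' r')) ∧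
  (∀ A : Set (Euc n), isConvexBody A → ∀ (c : Euc n) (ρ : ℝ), 0 < ρ →
      essSub A (cyl u c ρ) → essSub (D A) (cyl u c ρ))

/-- `φ` is the contraction associated with `D` (with respect to the direction `u`):
`∂B(x + tu, r) = B(x + φ(t)u, r)`, essentially. -/
def assocContr {n : ℕ} (u : Euc n) (D : Set (Euc n) → Set (Euc n)) (φ : ℝ → ℝ) : Prop :=
  LipschitzWith 1 φ ∧ ∀ x : Euc n, ⟪x, u⟫ = 0 → ∀ t r : ℝ, 0 < r →
    essEq (D (closedBall (x + t • u) r)) (closedBall (x + φ t • u) r)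

/-- Convergence `∂_k → ∂` on the convex bodies, in the `L¹` sense of indicator functions. -/
def convOnK {n : ℕ} (Dk : ℕ → Set (Euc n) → Set (Euc n))
    (D : Set (Euc n) → Set (Euc n)) : Prop :=
  ∀ K : Set (Euc n), isConvexBody K →
    Tendsto (fun k => volume (sd (Dk k K) (D K))) atTop (𝓝 0)

/-- The polarization of `A` with respect to the oriented hyperplane `{x : ⟪x,v⟫ = c}` whose
positive closed halfspace is `{x : ⟪x,v⟫ ≥ c}`:
`(P_G A) ∩ G⁺ = (A ∪ A†) ∩ G⁺` and `(P_G A) ∩ G⁻ = (A ∩ A†) ∩ G⁻`,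
where `†` denotes reflection in the hyperplane. -/
def polzn {n : ℕ} (v : Euc n) (c : ℝ) (A : Set (Euc n)) : Set (Euc n) :=
  {x | c ≤ ⟪x, v⟫ ∧ (x ∈ A ∨ x - (2 * (⟪x, v⟫ - c)) • v ∈ A)} ∪
  {x | ⟪x, v⟫ ≤ c ∧ x ∈ A ∧ x - (2 * (⟪x, v⟫ - c)) • v ∈ A}

/-- The class `ℐ` of contractions `φ : ℝ → ℝ` such that whenever `a < b` and `φ(s)` lies in
the open interval with endpoints `φ(a)` and `φ(b)` for every `s ∈ (a,b)`, then
`|φ(b) − φ(a)| = b − a`. -/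
def memI (φ : ℝ → ℝ) : Prop :=
  LipschitzWith 1 φ ∧ ∀ a b : ℝ, a < b →
    (∀ s ∈ Set.Ioo a b, φ s ∈ Set.Ioo (min (φ a) (φ b)) (max (φ a) (φ b))) →
    |φ b - φ a| = b - a

/-- `D` is a finite composition of polarizations with respect to hyperplanes parallel to
the hyperplane with unit normal `u` (with either orientation). -/
def isPolCompParallel {n : ℕ} (u : Euc n) (D : Set (Euc n) → Set (Euc n)) : Prop :=
  ∃ l : List (Euc n × ℝ), l ≠ [] ∧ (∀ p ∈ l, p.1 = u ∨ p.1 = -u) ∧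
    D = (l.map fun p => polzn p.1 p.2).foldr (· ∘ ·) id


/-- dichotomy for compositions of folds -/
def InvF (ψ : ℝ → ℝ) : Prop := ∀ p q : ℝ, p < q → |ψ q - ψ p| = q - p ∨
  ∃ s ∈ Set.Ioo p q, (∀ x ∈ Set.Icc p q, ψ s ≤ ψ x) ∨ (∀ x ∈ Set.Icc p q, ψ x ≤ ψ s)

theorem InvF_neg {ψ : ℝ → ℝ} (h : InvF ψ) : InvF (fun x => - ψ x) := by
  intro p q hpq
  rcases h p q hpq with h | ⟨s, hs, h | h⟩
  · left; rw [← h, abs_sub_comm]; congr 1; ring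
  · exact Or.inr ⟨s, hs, Or.inr fun x hx => by have := h x hx; linarith⟩
  · exact Or.inr ⟨s, hs, Or.inl fun x hx => by have := h x hx; linarith⟩

theorem InvF_max {ψ : ℝ → ℝ} (h : InvF ψ) (hc : Continuous ψ) (c : ℝ) :
    InvF (fun x => max (ψ x) (2 * c - ψ x)) := by
  intro p q hpq
  by_cases hz : ∃ z ∈ Set.Ioo p q, ψ z = c
  · obtain ⟨z, hz, hzc⟩ := hz
    refine Or.inr ⟨z, hz, Or.inl fun x hx => ?_⟩
    simp only [hzc]
    rcases le_total (ψ x) c with h1 | h1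
    · refine le_trans ?_ (le_max_right _ _); simp; constructor <;> linarith
    · refine le_trans ?_ (le_max_left _ _); simp; constructor <;> linarith
  push Not at hz
  have key : (∀ x ∈ Set.Icc p q, c ≤ ψ x) ∨ (∀ x ∈ Set.Icc p q, ψ x ≤ c) := by
    by_contra hcon
    push Not at hcon
    obtain ⟨⟨x, hx, hxc⟩, ⟨y, hy, hyc⟩⟩ := hcon
    rcases lt_trichotomy x y with hxy | hxy | hxy
    · obtain ⟨z, hz1, hz2⟩ := intermediate_value_Ioo hxy.le hc.continuousOn (show c ∈ Set.Ioo (ψ x) (ψ y) from ⟨hxc, hyc⟩)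
      exact hz z ⟨lt_of_le_of_lt hx.1 hz1.1, lt_of_lt_of_le hz1.2 hy.2⟩ hz2
    · subst hxy; linarith
    · obtain ⟨z, hz1, hz2⟩ := intermediate_value_Ioo' hxy.le hc.continuousOn (show c ∈ Set.Ioo (ψ x) (ψ y) from ⟨hxc, hyc⟩)
      exact hz z ⟨lt_of_le_of_lt hy.1 hz1.1, lt_of_lt_of_le hz1.2 hx.2⟩ hz2
  have hp : p ∈ Set.Icc p q := ⟨le_rfl, hpq.le⟩
  have hq : q ∈ Set.Icc p q := ⟨hpq.le, le_rfl⟩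
  rcases key with key | key
  · have e : ∀ x ∈ Set.Icc p q, max (ψ x) (2 * c - ψ x) = ψ x := fun x hx => by
      have := key x hx
      exact max_eq_left (by linarith)
    rcases h p q hpq with h | ⟨s, hs, h⟩
    · left; simp only [e p hp, e q hq]; exact h
    · refine Or.inr ⟨s, hs, ?_⟩
      have hs' := e s ⟨hs.1.le, hs.2.le⟩
      rcases h with h | h
      · left; intro x hx; simp only [hs', e x hx]; exact h x hx
      · right; intro x hx; simp only [hs', e x hx]; exact h x hx
  · have e : ∀ x ∈ Set.Icc p q, max (ψ x) (2 * c - ψ x) = 2 * c - ψ x := fun x hx => by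
      have := key x hx
      exact max_eq_right (by linarith)
    rcases h p q hpq with h | ⟨s, hs, h⟩
    · left; simp only [e p hp, e q hq]; rw [← h, abs_sub_comm]; congr 1; ring
    · refine Or.inr ⟨s, hs, ?_⟩
      have hs' := e s ⟨hs.1.le, hs.2.le⟩
      rcases h with h | h
      · right; intro x hx; simp only [hs', e x hx]; have := h x hx; linarith
      · left; intro x hx; simp only [hs', e x hx]; have := h x hx; linarith

theorem InvF_min {ψ : ℝ → ℝ} (h : InvF ψ) (hc : Continuous ψ) (c : ℝ) :
    InvF (fun x => min (ψ x) (2 * c - ψ x)) := by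
  have := InvF_neg (InvF_max (InvF_neg h) hc.neg (-c))
  convert this using 2 with x
  rw [← min_neg_neg]; congr 1 <;> ring

theorem lip_max {ψ : ℝ → ℝ} (h : ∀ x y, |ψ x - ψ y| ≤ |x - y|) (c : ℝ) (x y : ℝ) :
    |max (ψ x) (2 * c - ψ x) - max (ψ y) (2 * c - ψ y)| ≤ |x - y| := by
  refine le_trans (abs_max_sub_max_le_max _ _ _ _) (max_le (h x y) ?_)
  rw [show 2 * c - ψ x - (2 * c - ψ y) = -(ψ x - ψ y) by ring, abs_neg]; exact h x y

theorem lip_min {ψ : ℝ → ℝ} (h : ∀ x y, |ψ x - ψ y| ≤ |x - y|) (c : ℝ) (x y : ℝ) :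
    |min (ψ x) (2 * c - ψ x) - min (ψ y) (2 * c - ψ y)| ≤ |x - y| := by
  refine le_trans (abs_min_sub_min_le_max _ _ _ _) (max_le (h x y) ?_)
  rw [show 2 * c - ψ x - (2 * c - ψ y) = -(ψ x - ψ y) by ring, abs_neg]; exact h x y

theorem lip_cont {ψ : ℝ → ℝ} (h : ∀ x y, |ψ x - ψ y| ≤ |x - y|) : Continuous ψ :=
  (LipschitzWith.of_dist_le_mul (K := 1) (fun x y => by simpa [Real.dist_eq] using h x y)).continuous

/-- limit argument, increasing case -/
theorem lim_inc {φ : ℝ → ℝ} (hφ : Continuous φ) {a b : ℝ} (hab : a < b)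
    (hinc : φ a < φ b) (hs : ∀ s ∈ Set.Ioo a b, φ a < φ s ∧ φ s < φ b)
    (hlt : φ b - φ a < b - a)
    (happ : ∀ δ : ℝ, 0 < δ → δ ≤ 1 → ∃ ψ : ℝ → ℝ, Continuous ψ ∧ InvF ψ ∧
      ∀ s ∈ Set.Icc a b, |ψ s - φ s| ≤ δ) : False := by
  obtain ⟨η, hη, hη1, hη2⟩ : ∃ η : ℝ, 0 < η ∧ 4 * η ≤ b - a - (φ b - φ a) ∧ 4 * η ≤ b - a :=
    ⟨(b - a - (φ b - φ a)) / 4, by linarith, by linarith, by linarith⟩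
  obtain ⟨x1, hx1, hx1m⟩ := (isCompact_Icc (a := a) (b := b - η)).exists_isMaxOn
    ⟨a, by constructor <;> linarith⟩ hφ.continuousOn
  obtain ⟨x2, hx2, hx2m⟩ := (isCompact_Icc (a := a + η) (b := b)).exists_isMinOn
    ⟨b, by constructor <;> linarith⟩ hφ.continuousOn
  have h1 : φ x1 < φ b := by
    rcases hx1.1.eq_or_lt with h | h
    · rw [← h]; exact hinc
    · exact (hs x1 ⟨h, by linarith [hx1.2]⟩).2
  have h2 : φ a < φ x2 := by
    rcases hx2.2.eq_or_lt with h | h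
    · rw [h]; exact hinc
    · exact (hs x2 ⟨by linarith [hx2.1], h⟩).1
  have hall : ∀ s ∈ Set.Icc a b, φ a ≤ φ s ∧ φ s ≤ φ b := by
    intro s hs'
    rcases hs'.1.eq_or_lt with h | h
    · rw [← h]; exact ⟨le_rfl, hinc.le⟩
    rcases hs'.2.eq_or_lt with h' | h'
    · rw [h']; exact ⟨hinc.le, le_rfl⟩
    exact ⟨(hs s ⟨h, h'⟩).1.le, (hs s ⟨h, h'⟩).2.le⟩
  set δ := min (min ((φ b - φ x1) / 3) ((φ x2 - φ a) / 3)) (min (η / 2) 1) with hδ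
  have hδ0 : 0 < δ := by
    simp only [hδ, lt_min_iff]; refine ⟨⟨?_, ?_⟩, ?_, one_pos⟩ <;> linarith
  have d1 : δ ≤ (φ b - φ x1) / 3 := (min_le_left _ _).trans (min_le_left _ _)
  have d2 : δ ≤ (φ x2 - φ a) / 3 := (min_le_left _ _).trans (min_le_right _ _)
  have d3 : δ ≤ η / 2 := (min_le_right _ _).trans (min_le_left _ _)
  have d4 : δ ≤ 1 := (min_le_right _ _).trans (min_le_right _ _)
  obtain ⟨ψ, hψc, hψI, hψ⟩ := happ δ hδ0 d4
  have ha : a ∈ Set.Icc a b := ⟨le_rfl, hab.le⟩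
  have hb : b ∈ Set.Icc a b := ⟨hab.le, le_rfl⟩
  obtain ⟨m0, hm0, hm0m⟩ := (isCompact_Icc (a := a) (b := b)).exists_isMinOn ⟨a, ha⟩ hψc.continuousOn
  obtain ⟨M0, hM0, hM0m⟩ := (isCompact_Icc (a := a) (b := b)).exists_isMaxOn ⟨a, ha⟩ hψc.continuousOn
  have cm : IsCompact (Set.Icc a b ∩ {x | ψ x = ψ m0}) :=
    isCompact_Icc.inter_right (isClosed_eq hψc continuous_const)
  have cM : IsCompact (Set.Icc a b ∩ {x | ψ x = ψ M0}) :=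
    isCompact_Icc.inter_right (isClosed_eq hψc continuous_const)
  obtain ⟨m, ⟨hmI, hmv⟩, hm⟩ := cm.exists_isGreatest ⟨m0, hm0, rfl⟩
  obtain ⟨M, ⟨hMI, hMv⟩, hM⟩ := cM.exists_isLeast ⟨M0, hM0, rfl⟩
  simp only [Set.mem_ofPred_eq] at hmv hMv
  have hmmin : ∀ x ∈ Set.Icc a b, ψ m ≤ ψ x := fun x hx => by rw [hmv]; exact hm0m hx
  have hMmax : ∀ x ∈ Set.Icc a b, ψ x ≤ ψ M := fun x hx => by rw [hMv]; exact hM0m hx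
  have am := abs_le.1 (hψ m hmI)
  have aM := abs_le.1 (hψ M hMI)
  have aa := abs_le.1 (hψ a ha)
  have ab := abs_le.1 (hψ b hb)
  have hma := hmmin a ha
  have hMb := hMmax b hb
  have m1 : m < a + η := by
    by_contra hcon
    push Not at hcon
    have : φ x2 ≤ φ m := hx2m ⟨hcon, hmI.2⟩
    linarith [am.1, aa.2]
  have M1 : b - η < M := by
    by_contra hcon
    push Not at hcon
    have : φ M ≤ φ x1 := hx1m ⟨hMI.1, hcon⟩
    linarith [aM.2, ab.1]
  have hmM : m < M := by linarith
  rcases hψI m M hmM with h | ⟨s, hs, h | h⟩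
  · rw [abs_of_nonneg (by linarith [hMmax m hmI])] at h
    linarith [(hall m hmI).1, (hall M hMI).2, am.1, aM.2]
  · have hsI : s ∈ Set.Icc a b := ⟨by linarith [hs.1, hmI.1], by linarith [hs.2, hMI.2]⟩
    have := hm ⟨hsI, show ψ s = ψ m0 from hmv ▸ le_antisymm (h m ⟨le_rfl, hmM.le⟩) (hmmin s hsI)⟩
    linarith [hs.1]
  · have hsI : s ∈ Set.Icc a b := ⟨by linarith [hs.1, hmI.1], by linarith [hs.2, hMI.2]⟩
    have := hM ⟨hsI, show ψ s = ψ M0 from hMv ▸ le_antisymm (hMmax s hsI) (h M ⟨hmM.le, le_rfl⟩)⟩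
    linarith [hs.2]

theorem lim_all {φ : ℝ → ℝ} (hφ : LipschitzWith 1 φ) (hnot : ¬ memI φ)
    (happ : ∀ a b : ℝ, a < b → ∀ δ : ℝ, 0 < δ → δ ≤ 1 → ∃ ψ : ℝ → ℝ, Continuous ψ ∧ InvF ψ ∧
      ∀ s ∈ Set.Icc a b, |ψ s - φ s| ≤ δ) : False := by
  apply hnot
  refine ⟨hφ, fun a b hab hs => ?_⟩
  by_contra hne
  have hle : |φ b - φ a| ≤ b - a := by
    have := hφ.dist_le_mul b a
    simp only [Real.dist_eq, NNReal.coe_one, one_mul, abs_of_pos (sub_pos.2 hab)] at this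
    exact this
  have hlt := lt_of_le_of_ne hle hne
  have hmid := hs ((a + b) / 2) ⟨by linarith, by linarith⟩
  rcases lt_trichotomy (φ a) (φ b) with h | h | h
  · rw [min_eq_left h.le, max_eq_right h.le] at hs
    exact lim_inc hφ.continuous hab h (fun s h => hs s h) (lt_of_le_of_lt (le_abs_self _) hlt)
      (happ a b hab)
  · rw [h] at hmid; simp at hmid
  · rw [min_eq_right h.le, max_eq_left h.le] at hs
    refine lim_inc (φ := fun x => - φ x) hφ.continuous.neg hab (by simpa using h)
      (fun s h => by simpa using (hs s h).symm) (lt_of_le_of_lt ?_ hlt) ?_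
    · rw [abs_sub_comm]; refine le_trans ?_ (le_abs_self _); linarith
    · intro δ h1 h2
      obtain ⟨ψ, c, i, p⟩ := happ a b hab δ h1 h2
      refine ⟨fun x => - ψ x, c.neg, InvF_neg i, fun s hs => ?_⟩
      rw [← abs_neg]; convert p s hs using 2; ring

theorem refl_norm {n : ℕ} (v : Euc n) (hv : ‖v‖ = 1) (c : ℝ) (y z : Euc n) :
    ‖y - (2 * (⟪y, v⟫ - c)) • v - z‖ ^ 2 =
      ‖y - z‖ ^ 2 + 4 * (⟪y, v⟫ - c) * (⟪z, v⟫ - c) := by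
  rw [show y - (2 * (⟪y, v⟫ - c)) • v - z = (y - z) - (2 * (⟪y, v⟫ - c)) • v by abel]
  rw [@norm_sub_sq_real, inner_smul_right, norm_smul, mul_pow, hv, inner_sub_left]
  simp only [Real.norm_eq_abs, sq_abs]
  ring

theorem polzn_mono {n : ℕ} (v : Euc n) (c : ℝ) {A B : Set (Euc n)} (h : A ⊆ B) :
    polzn v c A ⊆ polzn v c B := by
  rintro x (⟨h1, h2⟩ | ⟨h1, h2, h3⟩)
  · exact Or.inl ⟨h1, h2.imp (fun k => h k) (fun k => h k)⟩
  · exact Or.inr ⟨h1, h h2, h h3⟩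

theorem sq_le_of {n : ℕ} {x y : Euc n} {r : ℝ} (hr : 0 ≤ r) :
    x ∈ closedBall y r ↔ ‖x - y‖ ^ 2 ≤ r ^ 2 := by
  rw [mem_closedBall, dist_eq_norm]
  exact (sq_le_sq₀ (norm_nonneg _) hr).symm

theorem polzn_ball_pos {n : ℕ} (v : Euc n) (hv : ‖v‖ = 1) (c : ℝ) (z : Euc n) {r : ℝ} (hr : 0 ≤ r)
    (hz : c ≤ ⟪z, v⟫) : closedBall z r ⊆ polzn v c (closedBall z r) := by
  intro y hy
  rcases le_total c ⟪y, v⟫ with h | h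
  · exact Or.inl ⟨h, Or.inl hy⟩
  · refine Or.inr ⟨h, hy, ?_⟩
    rw [sq_le_of hr] at hy ⊢
    rw [refl_norm v hv]
    nlinarith [mul_nonneg (sub_nonneg.2 h) (sub_nonneg.2 hz)]

theorem polzn_ball_neg {n : ℕ} (v : Euc n) (hv : ‖v‖ = 1) (c : ℝ) (z : Euc n) {r : ℝ} (hr : 0 ≤ r)
    (hz : ⟪z, v⟫ ≤ c) :
    closedBall (z - (2 * (⟪z, v⟫ - c)) • v) r ⊆ polzn v c (closedBall z r) := by
  intro y hy
  have e := refl_norm v hv c z y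
  have e2 := refl_norm v hv c y z
  rw [sq_le_of hr, norm_sub_rev, e] at hy
  rw [norm_sub_rev] at hy
  rcases le_total c ⟪y, v⟫ with h | h
  · refine Or.inl ⟨h, Or.inr ?_⟩
    rw [sq_le_of hr, e2]; linarith
  · refine Or.inr ⟨h, ?_, ?_⟩
    · rw [sq_le_of hr]
      nlinarith [mul_nonneg (sub_nonneg.2 h) (sub_nonneg.2 hz)]
    · rw [sq_le_of hr, e2]; linarith

/-- composition data -/
theorem comp_data {n : ℕ} (u : Euc n) (hu : ‖u‖ = 1) (l : List (Euc n × ℝ))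
    (hl : ∀ p ∈ l, p.1 = u ∨ p.1 = -u) :
    ∃ ψ : ℝ → ℝ, (∀ x y, |ψ x - ψ y| ≤ |x - y|) ∧ InvF ψ ∧
      (∀ A B : Set (Euc n), A ⊆ B → (l.map fun p => polzn p.1 p.2).foldr (· ∘ ·) id A ⊆
        (l.map fun p => polzn p.1 p.2).foldr (· ∘ ·) id B) ∧
      (∀ x : Euc n, ⟪x, u⟫ = 0 → ∀ t r : ℝ, 0 < r →
        closedBall (x + ψ t • u) r ⊆
          (l.map fun p => polzn p.1 p.2).foldr (· ∘ ·) id (closedBall (x + t • u) r)) := by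
  induction l with
  | nil =>
    refine ⟨id, fun x y => le_rfl, fun p q h => Or.inl ?_, ?_, ?_⟩
    · simp [abs_of_pos (sub_pos.2 h)]
    · intro A B h; simpa using h
    · intro x _ t r _; simp
  | cons p l ih =>
    obtain ⟨ψ, hL, hI, hm, hb⟩ := ih (fun p hp => hl p (List.mem_cons_of_mem _ hp))
    have hp := hl p List.mem_cons_self
    have hmono : ∀ A B : Set (Euc n), A ⊆ B →
        ((p :: l).map fun p => polzn p.1 p.2).foldr (· ∘ ·) id A ⊆
        ((p :: l).map fun p => polzn p.1 p.2).foldr (· ∘ ·) id B := by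
      intro A B h
      simp only [List.map_cons, List.foldr_cons, Function.comp]
      exact polzn_mono _ _ (hm A B h)
    have huu : ⟪u, u⟫ = 1 := by rw [real_inner_self_eq_norm_sq, hu]; norm_num
    rcases hp with hp | hp
    · refine ⟨fun t => max (ψ t) (2 * p.2 - ψ t), lip_max hL p.2, InvF_max hI (lip_cont hL) p.2,
        hmono, ?_⟩
      intro x hx t r hr
      simp only [List.map_cons, List.foldr_cons, Function.comp, hp]
      refine subset_trans ?_ (polzn_mono _ _ (hb x hx t r hr))
      have hin : ⟪x + ψ t • u, u⟫ = ψ t := by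
        rw [inner_add_left, inner_smul_left, hx, huu]; simp
      rcases le_total p.2 (ψ t) with h | h
      · rw [max_eq_left (by linarith)]
        exact polzn_ball_pos u hu _ _ hr.le (by rw [hin]; exact h)
      · rw [max_eq_right (by linarith)]
        have := polzn_ball_neg u hu p.2 (x + ψ t • u) hr.le (by rw [hin]; exact h)
        rw [hin, show x + ψ t • u - (2 * (ψ t - p.2)) • u = x + (2 * p.2 - ψ t) • u by module] at this
        exact this
    · refine ⟨fun t => min (ψ t) (2 * (-p.2) - ψ t), lip_min hL _, InvF_min hI (lip_cont hL) _,
        hmono, ?_⟩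
      intro x hx t r hr
      simp only [List.map_cons, List.foldr_cons, Function.comp, hp]
      refine subset_trans ?_ (polzn_mono _ _ (hb x hx t r hr))
      have hin : ⟪x + ψ t • u, -u⟫ = - ψ t := by
        rw [inner_neg_right, inner_add_left, inner_smul_left, hx, huu]; simp
      have hu' : ‖-u‖ = 1 := by rw [norm_neg, hu]
      rcases le_total p.2 (-ψ t) with h | h
      · rw [min_eq_left (by linarith)]
        exact polzn_ball_pos _ hu' _ _ hr.le (by rw [hin]; exact h)
      · rw [min_eq_right (by linarith)]
        have := polzn_ball_neg _ hu' p.2 (x + ψ t • u) hr.le (by rw [hin]; exact h)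
        rw [hin, show x + ψ t • u - (2 * (-ψ t - p.2)) • (-u) = x + (2 * (-p.2) - ψ t) • u by module]
          at this
        exact this

theorem exists_coords {m : ℕ} (u : Euc (m + 2)) (hu : ‖u‖ = 1) :
    ∃ Φ : Euc (m + 2) ≃L[ℝ] ℝ × (Fin (m + 1) → ℝ),
      MeasurePreserving Φ volume volume ∧ (∀ y, (Φ y).1 = ⟪y, u⟫) ∧
      (∀ y i, |(Φ y).2 i| ≤ ‖y‖) ∧ Φ u = (1, 0) := by
  have hon : Orthonormal ℝ (Set.domRestrict ({0} : Set (Fin (m + 2))) (fun _ => u)) := by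
    constructor
    · intro i; simpa using hu
    · intro i j hij
      exact absurd (Subsingleton.elim i j) hij
  obtain ⟨b, hb⟩ := Orthonormal.exists_orthonormalBasis_extension_of_card_eq
    (𝕜 := ℝ) (E := Euc (m + 2)) (ι := Fin (m + 2)) (by simp) hon
  have hb0 : b 0 = u := hb 0 rfl
  let Ψ : Euc (m + 2) ≃L[ℝ] (Fin (m + 2) → ℝ) :=
    b.repr.toContinuousLinearEquiv.trans (EuclideanSpace.equiv (Fin (m + 2)) ℝ)
  have hΨ : ∀ y i, Ψ y i = ⟪b i, y⟫ := fun y i => by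
    simp [Ψ, b.repr_apply_apply]
  have hΨm : MeasurePreserving Ψ volume volume :=
    (PiLp.volume_preserving_ofLp (Fin (m + 2))).comp b.measurePreserving_repr
  refine ⟨Ψ.trans (Fin.consEquivL ℝ (fun _ : Fin (m + 2) => ℝ)).symm, ?_, ?_, ?_, ?_⟩
  · exact (volume_preserving_piFinSuccAbove (fun _ : Fin (m + 2) => ℝ) 0).comp hΨm
  · intro y
    change Ψ y 0 = _
    rw [hΨ, hb0, real_inner_comm]
  · intro y i
    change |Ψ y i.succ| ≤ _
    rw [hΨ]
    refine (abs_real_inner_le_norm _ _).trans ?_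
    rw [b.orthonormal.1, one_mul]
  · refine Prod.ext ?_ ?_
    · change Ψ u 0 = 1
      rw [hΨ, hb0, real_inner_self_eq_norm_sq, hu]; norm_num
    · funext i
      change Ψ u i.succ = 0
      rw [hΨ, ← hb0]
      exact b.orthonormal.2 (Fin.succ_ne_zero i)

/-- region around a graph -/
def Reg {m : ℕ} (g : (Fin (m + 1) → ℝ) → ℝ) (ρ : ℝ) (R : Set (Fin (m + 1) → ℝ)) :
    Set (ℝ × (Fin (m + 1) → ℝ)) := {p | p.2 ∈ R ∧ |p.1 - g p.2| < ρ}

theorem Reg_meas {m : ℕ} {g : (Fin (m + 1) → ℝ) → ℝ} (hg : Measurable g) (ρ : ℝ)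
    {R : Set (Fin (m + 1) → ℝ)} (hR : MeasurableSet R) : MeasurableSet (Reg g ρ R) := by
  have h1 : MeasurableSet {p : ℝ × (Fin (m + 1) → ℝ) | p.2 ∈ R} := measurable_snd hR
  have h2 : MeasurableSet {p : ℝ × (Fin (m + 1) → ℝ) | |p.1 - g p.2| < ρ} :=
    measurableSet_lt (by fun_prop) (by fun_prop)
  exact h1.inter h2

theorem Reg_vol {m : ℕ} {g : (Fin (m + 1) → ℝ) → ℝ} (hg : Measurable g) (ρ : ℝ)
    {R : Set (Fin (m + 1) → ℝ)} (hR : MeasurableSet R) :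
    volume (Reg g ρ R) = ENNReal.ofReal (2 * ρ) * volume R := by
  rw [Measure.volume_eq_prod, Measure.prod_apply_symm (Reg_meas hg ρ hR)]
  rw [← setLIntegral_const, ← lintegral_indicator hR]
  congr 1
  funext z
  by_cases hz : z ∈ R
  · rw [Set.indicator_of_mem hz]
    have : (fun x => (x, z)) ⁻¹' (Reg g ρ R) = Metric.ball (g z) ρ := by
      ext x; simp [Reg, hz, Real.dist_eq]
    rw [this, Real.volume_ball]
  · rw [Set.indicator_of_notMem hz]
    have : (fun x => (x, z)) ⁻¹' (Reg g ρ R) = ∅ := by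
      ext x; simp [Reg, hz]
    rw [this, measure_empty]

theorem box_vol {m : ℕ} (a b l r : ℝ) (h : l ≤ r) (hab : a ≤ b) :
    volume (Set.Icc (Fin.cons a (fun _ => l) : Fin (m + 1) → ℝ) (Fin.cons b (fun _ => r))) =
      ENNReal.ofReal ((b - a) * (r - l) ^ m) := by
  rw [Real.volume_Icc_pi, Fin.prod_univ_succ]
  simp only [Fin.cons_zero, Fin.cons_succ, Finset.prod_const, Finset.card_univ, Fintype.card_fin]
  rw [ENNReal.ofReal_mul (by linarith), ENNReal.ofReal_pow (by linarith)]

theorem choose_eps (m : ℕ) (L δ : ℝ) (hδ : 0 < δ) :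
    ∃ ε : ℝ, 0 < ε ∧ ε ≤ 1 ∧
      2 * (1 + 2 * ε) * ((L + 2 * ε) * (1 + 2 * ε) ^ m) < 2 * L + δ ^ 2 / 8 := by
  have hc : Continuous fun ε : ℝ => 2 * (1 + 2 * ε) * ((L + 2 * ε) * (1 + 2 * ε) ^ m) := by fun_prop
  have h0 : ∀ᶠ ε in 𝓝 (0 : ℝ), 2 * (1 + 2 * ε) * ((L + 2 * ε) * (1 + 2 * ε) ^ m) < 2 * L + δ ^ 2 / 8 :=
    hc.continuousAt.eventually_lt continuousAt_const (by
      simp; positivity)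
  obtain ⟨η, hη, h⟩ := Metric.eventually_nhds_iff.1 h0
  refine ⟨min (η / 2) 1, by positivity, min_le_right _ _, h ?_⟩
  rw [Real.dist_eq, sub_zero, abs_of_pos (by positivity)]
  linarith [min_le_left (η / 2) 1]

theorem essSub_tphi {m : ℕ} {u : Euc (m + 2)} (hu : ‖u‖ = 1) {D : Set (Euc (m + 2)) → Set (Euc (m + 2))}
    (hD : inJH u D) {φ : ℝ → ℝ} (hφ : assocContr u D φ)
    (Φ : Euc (m + 2) ≃L[ℝ] ℝ × (Fin (m + 1) → ℝ)) (hΦ1 : ∀ y, (Φ y).1 = ⟪y, u⟫)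
    (hsplit : ∀ t z, Φ.symm (t, z) = Φ.symm (0, z) + t • u)
    {K : Set (Euc (m + 2))} (hK : isConvexBody K) (ε : ℝ) (R : Set (Fin (m + 1) → ℝ))
    (hball : ∀ z ∈ R, closedBall (Φ.symm (ε * z 0, z)) 1 ⊆ K) :
    volume ((Φ ⁻¹' Reg (fun z => φ (ε * z 0)) 1 R) \ D K) = 0 := by
  obtain ⟨T, hTR, hTc, hT⟩ := TopologicalSpace.isOpen_biUnion_countable R
    (fun z => ball (Φ.symm (φ (ε * z 0), z)) 1) (fun _ _ => isOpen_ball)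
  have hsub : (Φ ⁻¹' Reg (fun z => φ (ε * z 0)) 1 R) ⊆
      ⋃ z ∈ T, ball (Φ.symm (φ (ε * z 0), z)) 1 := by
    rw [hT]
    rintro y ⟨hy1, hy2⟩
    simp only [Set.mem_iUnion]
    refine ⟨(Φ y).2, hy1, ?_⟩
    rw [mem_ball, dist_eq_norm]
    have : y = Φ.symm ((Φ y).1, (Φ y).2) := by simp
    rw [hsplit] at this ⊢
    nth_rewrite 1 [this]
    rw [add_sub_add_left_eq_sub, ← sub_smul, norm_smul, hu, mul_one]
    exact hy2
  refine measure_mono_null (t := ⋃ z ∈ T, (ball (Φ.symm (φ (ε * z 0), z)) 1 \ D K)) ?_ ?_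
  · rintro y ⟨hy, hy'⟩
    have := hsub hy
    simp only [Set.mem_iUnion] at this ⊢
    obtain ⟨z, hz, h⟩ := this
    exact ⟨z, hz, h, hy'⟩
  · rw [measure_biUnion_null_iff hTc]
    intro z hz
    have hx : ⟪Φ.symm (0, z), u⟫ = 0 := by rw [← hΦ1]; simp
    have hb : isConvexBody (closedBall (Φ.symm (ε * z 0, z)) 1) := by
      refine ⟨isCompact_closedBall _ _, convex_closedBall _ _, ⟨Φ.symm (ε * z 0, z), ?_⟩⟩
      exact ball_subset_interior_closedBall (mem_ball_self one_pos)
    have h1 := hD.2.1 _ K hb hK (by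
      unfold essSub; rw [Set.sdiff_eq_empty.2 (hball z (hTR hz))]; exact measure_empty)
    have h2 := hφ.2 _ hx (ε * z 0) 1 one_pos
    rw [← hsplit, ← hsplit] at h2
    unfold essEq at h2
    unfold essSub at h1
    refine measure_mono_null ?_ (measure_union_null h1 h2)
    rintro y ⟨hy, hy'⟩
    by_cases h : y ∈ D (closedBall (Φ.symm (ε * z 0, z)) 1)
    · exact Or.inl ⟨h, hy'⟩
    · exact Or.inr (Or.inr ⟨ball_subset_closedBall hy, h⟩)

theorem K_body {m : ℕ} (Φ : Euc (m + 2) ≃L[ℝ] ℝ × (Fin (m + 1) → ℝ)) (ε : ℝ) (hε : 0 < ε)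
    (l r : Fin (m + 1) → ℝ) (hlr : ∀ i, l i < r i) :
    isConvexBody (Φ ⁻¹' {p | p.2 ∈ Set.Icc l r ∧ |p.1 - ε * p.2 0| ≤ 1 + ε}) := by
  have hcl : IsClosed {p : ℝ × (Fin (m + 1) → ℝ) | p.2 ∈ Set.Icc l r ∧ |p.1 - ε * p.2 0| ≤ 1 + ε} := by
    have h1 : IsClosed {p : ℝ × (Fin (m + 1) → ℝ) | p.2 ∈ Set.Icc l r} :=
      isClosed_Icc.preimage continuous_snd
    have h2 : IsClosed {p : ℝ × (Fin (m + 1) → ℝ) | |p.1 - ε * p.2 0| ≤ 1 + ε} :=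
      isClosed_le (by fun_prop) continuous_const
    exact h1.inter h2
  refine ⟨?_, ?_, ?_⟩
  · rw [show (Φ : Euc (m + 2) → ℝ × (Fin (m + 1) → ℝ)) = Φ.toHomeomorph from rfl,
      Homeomorph.isCompact_preimage]
    refine IsCompact.of_isClosed_subset (isCompact_Icc (a := ((ε * l 0 - (1 + ε)), l))
      (b := ((ε * r 0 + (1 + ε)), r))) hcl ?_
    rintro ⟨t, z⟩ ⟨⟨h1, h2⟩, h3⟩
    have h3 := abs_le.1 h3
    have e1 := mul_le_mul_of_nonneg_left (h1 0) hε.le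
    have e2 := mul_le_mul_of_nonneg_left (h2 0) hε.le
    simp only at h1 h2 h3 e1 e2
    exact ⟨⟨show ε * l 0 - (1 + ε) ≤ t by linarith, h1⟩, ⟨show t ≤ ε * r 0 + (1 + ε) by linarith, h2⟩⟩
  · have hc : Convex ℝ {p : ℝ × (Fin (m + 1) → ℝ) | p.2 ∈ Set.Icc l r ∧ |p.1 - ε * p.2 0| ≤ 1 + ε} := by
      rintro ⟨t, z⟩ ⟨h1, h3⟩ ⟨t', z'⟩ ⟨h1', h3'⟩ a b ha hb hab
      refine ⟨convex_Icc l r h1 h1' ha hb hab, ?_⟩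
      have h3 := abs_le.1 h3
      have h3' := abs_le.1 h3'
      simp only at h3 h3'
      simp only [Prod.smul_mk, Prod.mk_add_mk, smul_eq_mul, Pi.add_apply, Pi.smul_apply]
      rw [show a * t + b * t' - ε * (a * z 0 + b * z' 0)
        = a * (t - ε * z 0) + b * (t' - ε * z' 0) by ring]
      have hb' : b = 1 - a := by linarith
      rw [abs_le]
      have := mul_le_mul_of_nonneg_left h3.1 ha
      have := mul_le_mul_of_nonneg_left h3.2 ha
      have := mul_le_mul_of_nonneg_left h3'.1 hb
      have := mul_le_mul_of_nonneg_left h3'.2 hb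
      subst hb'
      constructor <;> linarith
    exact hc.linear_preimage (Φ : Euc (m + 2) →ₗ[ℝ] ℝ × (Fin (m + 1) → ℝ))
  · let z : Fin (m + 1) → ℝ := fun i => (l i + r i) / 2
    refine ⟨Φ.symm (ε * z 0, z), ?_⟩
    have ho : IsOpen {p : ℝ × (Fin (m + 1) → ℝ) |
        p.2 ∈ Set.pi Set.univ (fun i => Set.Ioo (l i) (r i)) ∧ |p.1 - ε * p.2 0| < 1 + ε} := by
      have h2 : IsOpen {p : ℝ × (Fin (m + 1) → ℝ) | |p.1 - ε * p.2 0| < 1 + ε} :=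
        isOpen_lt (by fun_prop) continuous_const
      exact ((isOpen_set_pi Set.finite_univ (fun _ _ => isOpen_Ioo)).preimage continuous_snd).inter h2
    refine interior_maximal (t := Φ ⁻¹' _) ?_ (ho.preimage Φ.continuous) ?_
    · rintro y ⟨h1, h2⟩
      exact ⟨⟨fun i => (h1 i trivial).1.le, fun i => (h1 i trivial).2.le⟩, h2.le⟩
    · simp only [Set.mem_preimage, ContinuousLinearEquiv.apply_symm_apply]
      refine ⟨fun i _ => ?_, ?_⟩
      · have := hlr i
        constructor <;> simp only [z] <;> linarith
      · simp; linarith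

theorem mem_box {m : ℕ} {a b l r : ℝ} {z : Fin (m + 1) → ℝ} :
    z ∈ Set.Icc (Fin.cons a (fun _ => l) : Fin (m + 1) → ℝ) (Fin.cons b (fun _ => r)) ↔
      (a ≤ z 0 ∧ z 0 ≤ b) ∧ ∀ i : Fin m, l ≤ z i.succ ∧ z i.succ ≤ r := by
  constructor
  · rintro ⟨h1, h2⟩
    exact ⟨⟨by simpa using h1 0, by simpa using h2 0⟩,
      fun i => ⟨by simpa using h1 i.succ, by simpa using h2 i.succ⟩⟩
  · rintro ⟨⟨h1, h2⟩, h⟩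
    constructor <;> intro i <;> refine Fin.cases ?_ (fun j => ?_) i
    · simpa using h1
    · simpa using (h j).1
    · simpa using h2
    · simpa using (h j).2

theorem approx {m : ℕ} {u : Euc (m + 2)} (hu : ‖u‖ = 1) {D : Set (Euc (m + 2)) → Set (Euc (m + 2))}
    (hD : inJH u D) {φ : ℝ → ℝ} (hφ : assocContr u D φ)
    (hall : ∀ K : Set (Euc (m + 2)), isConvexBody K →
        ∃ S : ℕ → Set (Euc (m + 2)) → Set (Euc (m + 2)),
          (∀ k, isPolCompParallel u (S k)) ∧
          Tendsto (fun k => volume (sd (S k K) (D K))) atTop (𝓝 0))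
    (a b : ℝ) (hab : a < b) (δ : ℝ) (hδ : 0 < δ) (hδ1 : δ ≤ 1) :
    ∃ ψ : ℝ → ℝ, Continuous ψ ∧ InvF ψ ∧ ∀ s ∈ Set.Icc a b, |ψ s - φ s| ≤ δ := by
  obtain ⟨Φ, hΦm, hΦ1, hΦ2, hΦu⟩ := exists_coords u hu
  have hsplit : ∀ t z, Φ.symm (t, z) = Φ.symm (0, z) + t • u := by
    intro t z
    apply Φ.injective
    simp [hΦu]
  obtain ⟨ε, hε, hε1, hεlt⟩ := choose_eps m (b - a + 2) δ hδ
  set Rin : Set (Fin (m + 1) → ℝ) := Set.Icc (Fin.cons ((a - 1) / ε) (fun _ => 0))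
    (Fin.cons ((b + 1) / ε) (fun _ => 1 / ε)) with hRin
  set lo : Fin (m + 1) → ℝ := Fin.cons ((a - 1) / ε - 1) (fun _ => -1) with hlo
  set hi : Fin (m + 1) → ℝ := Fin.cons ((b + 1) / ε + 1) (fun _ => 1 / ε + 1) with hhi
  have hεi : 0 < 1 / ε := by positivity
  have hdiv : (a - 1) / ε ≤ (b + 1) / ε := by gcongr; linarith
  have hlohi : ∀ i, lo i < hi i := by
    intro i
    refine Fin.cases ?_ (fun j => ?_) i
    · simp only [hlo, hhi, Fin.cons_zero]; linarith
    · simp only [hlo, hhi, Fin.cons_succ]; linarith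
  set K : Set (Euc (m + 2)) := Φ ⁻¹' {p | p.2 ∈ Set.Icc lo hi ∧ |p.1 - ε * p.2 0| ≤ 1 + ε} with hKdef
  have hK : isConvexBody K := K_body Φ ε hε lo hi hlohi
  have hball : ∀ z ∈ Rin, closedBall (Φ.symm (ε * z 0, z)) 1 ⊆ K := by
    intro z hz y hy
    rw [mem_closedBall, dist_eq_norm] at hy
    set w := y - Φ.symm (ε * z 0, z) with hw
    have hy' : Φ y = Φ w + (ε * z 0, z) := by simp [hw]
    have c1 : |(Φ w).1| ≤ 1 := by
      rw [hΦ1]; refine (abs_real_inner_le_norm _ _).trans ?_; rw [hu, mul_one]; exact hy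
    have c2 : ∀ i, |(Φ w).2 i| ≤ 1 := fun i => (hΦ2 w i).trans hy
    rw [hRin, mem_box] at hz
    refine ⟨?_, ?_⟩
    · rw [hlo, hhi, mem_box, hy']
      simp only [Prod.snd_add, Pi.add_apply]
      refine ⟨?_, fun i => ?_⟩
      · have := abs_le.1 (c2 0)
        constructor <;> linarith [hz.1.1, hz.1.2]
      · have := abs_le.1 (c2 i.succ)
        constructor <;> linarith [(hz.2 i).1, (hz.2 i).2]
    · rw [hy']
      simp only [Prod.snd_add, Prod.fst_add, Pi.add_apply]
      have h1 := abs_le.1 c1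
      have h2 := abs_le.1 (c2 0)
      have := mul_le_mul_of_nonneg_left h2.1 hε.le
      have := mul_le_mul_of_nonneg_left h2.2 hε.le
      rw [abs_le]
      constructor <;> linarith
  have hφc : Continuous φ := hφ.1.continuous
  have hφL : ∀ x y, |φ x - φ y| ≤ |x - y| := fun x y => by
    simpa [Real.dist_eq] using hφ.1.dist_le_mul x y
  have hRm : MeasurableSet Rin := measurableSet_Icc
  set T := Φ ⁻¹' Reg (fun z => φ (ε * z 0)) 1 Rin with hT
  have hgm : Measurable (fun z : Fin (m + 1) → ℝ => φ (ε * z 0)) := by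
    have := hφc.measurable; fun_prop
  have hTm : MeasurableSet T := hΦm.measurable (Reg_meas hgm 1 hRm)
  have hT0 : volume (T \ D K) = 0 := essSub_tphi hu hD hφ Φ hΦ1 hsplit hK ε Rin hball
  -- volumes
  have hTv : volume T = ENNReal.ofReal (2 * ((b - a + 2) * (1 / ε) ^ (m + 1))) := by
    rw [hT, hΦm.measure_preimage (Reg_meas hgm 1 hRm).nullMeasurableSet, Reg_vol hgm 1 hRm, hRin,
      box_vol _ _ _ _ hεi.le hdiv, ← ENNReal.ofReal_mul (by norm_num)]
    congr 1; rw [pow_succ]; field_simp; ring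
  have hKv : volume K ≤ ENNReal.ofReal
      (2 * (1 + 2 * ε) * ((b - a + 2 + 2 * ε) * (1 + 2 * ε) ^ m) * (1 / ε) ^ (m + 1)) := by
    have hg : Measurable (fun z : Fin (m + 1) → ℝ => ε * z 0) := by fun_prop
    have hR : MeasurableSet (Set.Icc lo hi) := measurableSet_Icc
    have hsub : K ⊆ Φ ⁻¹' Reg (fun z => ε * z 0) (1 + 2 * ε) (Set.Icc lo hi) := by
      rintro y ⟨h1, h2⟩
      exact ⟨h1, lt_of_le_of_lt h2 (by linarith)⟩
    refine (measure_mono hsub).trans (le_of_eq ?_)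
    rw [hΦm.measure_preimage (Reg_meas hg _ hR).nullMeasurableSet, Reg_vol hg _ hR, hlo, hhi,
      box_vol _ _ _ _ (by linarith) (by linarith), ← ENNReal.ofReal_mul (by positivity)]
    congr 1
    rw [show (1 / ε + 1 - -1) = (1 + 2 * ε) * (1 / ε) by field_simp; ring, mul_pow, pow_succ]
    field_simp; ring
  obtain ⟨S, hS, hlim⟩ := hall K hK
  set κ := 2 * (1 + 2 * ε) * ((b - a + 2 + 2 * ε) * (1 + 2 * ε) ^ m) * (1 / ε) ^ (m + 1) with hκ
  set τ := 2 * ((b - a + 2) * (1 / ε) ^ (m + 1)) with hτ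
  set ξ := δ ^ 2 / 8 * (1 / ε) ^ (m + 1) with hξ
  have hτ0 : 0 ≤ τ := by
    have : 0 ≤ b - a + 2 := by linarith
    positivity
  have hκ0 : 0 ≤ κ := by
    have : 0 ≤ b - a + 2 + 2 * ε := by linarith
    positivity
  have hξ0 : 0 ≤ ξ := by positivity
  have hlt : κ < τ + ξ := by
    have := mul_lt_mul_of_pos_right hεlt (show 0 < (1 / ε) ^ (m + 1) by positivity)
    rw [hκ, hτ, hξ]; linarith
  obtain ⟨k, hk⟩ := (hlim.eventually (gt_mem_nhds (show (0 : ENNReal) < ENNReal.ofReal (τ + ξ - κ) from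
    ENNReal.ofReal_pos.2 (by linarith)))).exists
  obtain ⟨l, -, hl, hSk⟩ := hS k
  obtain ⟨ψ, hψL, hψI, hψm, hψb⟩ := comp_data u hu l hl
  rw [← hSk] at hψm hψb
  refine ⟨ψ, lip_cont hψL, hψI, fun s0 hs0 => ?_⟩
  by_contra hcon
  push Not at hcon
  -- points of the tube around `ψ`
  have htube : Φ ⁻¹' Reg (fun z => ψ (ε * z 0)) 1 Rin ⊆ S k K := by
    rintro y ⟨hy1, hy2⟩
    refine hψm _ _ (hball _ hy1) ?_
    rw [hsplit]
    refine hψb _ (by rw [← hΦ1]; simp) _ 1 one_pos ?_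
    rw [mem_closedBall, dist_eq_norm]
    have : y = Φ.symm ((Φ y).1, (Φ y).2) := by simp
    rw [hsplit] at this
    nth_rewrite 1 [this]
    rw [add_sub_add_left_eq_sub, ← sub_smul, norm_smul, hu, mul_one]
    exact hy2.le
  set RX : Set (Fin (m + 1) → ℝ) := Set.Icc (Fin.cons ((s0 - δ / 8) / ε) (fun _ => 0))
    (Fin.cons ((s0 + δ / 8) / ε) (fun _ => 1 / ε)) with hRX
  have hRXm : MeasurableSet RX := measurableSet_Icc
  have hRXs : ∀ z ∈ RX, z ∈ Rin ∧ |ε * z 0 - s0| ≤ δ / 8 := by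
    intro z hz
    rw [hRX, mem_box] at hz
    have e1 := (div_le_iff₀ hε).1 hz.1.1
    have e2 := (le_div_iff₀ hε).1 hz.1.2
    refine ⟨?_, abs_le.2 ⟨by linarith, by linarith⟩⟩
    rw [hRin, mem_box]
    refine ⟨⟨?_, ?_⟩, hz.2⟩
    · rw [div_le_iff₀ hε]; linarith [hs0.1]
    · rw [le_div_iff₀ hε]; linarith [hs0.2]
  obtain ⟨c, hc⟩ : ∃ c : ℝ, ∀ t s : ℝ, |t - c| < δ / 4 → |s - s0| ≤ δ / 8 →
      |t - ψ s| < 1 ∧ ¬ |t - φ s| < 1 := by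
    rcases lt_abs.1 hcon with h | h
    · refine ⟨ψ s0 + 1 - δ / 2, fun t s ht hs => ?_⟩
      have a1 := abs_le.1 ((hψL s s0).trans hs)
      have a2 := abs_le.1 ((hφL s s0).trans hs)
      have a3 := abs_lt.1 ht
      refine ⟨abs_lt.2 ⟨by linarith, by linarith⟩, fun h' => ?_⟩
      have := abs_lt.1 h'
      linarith
    · refine ⟨ψ s0 - 1 + δ / 2, fun t s ht hs => ?_⟩
      have a1 := abs_le.1 ((hψL s s0).trans hs)
      have a2 := abs_le.1 ((hφL s s0).trans hs)
      have a3 := abs_lt.1 ht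
      refine ⟨abs_lt.2 ⟨by linarith, by linarith⟩, fun h' => ?_⟩
      have := abs_lt.1 h'
      linarith
  set X := Φ ⁻¹' Reg (fun _ => c) (δ / 4) RX with hX
  have hXv : volume X = ENNReal.ofReal ξ := by
    rw [hX, hΦm.measure_preimage (Reg_meas measurable_const _ hRXm).nullMeasurableSet,
      Reg_vol measurable_const _ hRXm, hRX,
      box_vol _ _ _ _ hεi.le (by gcongr; linarith), ← ENNReal.ofReal_mul (by positivity)]
    congr 1; rw [hξ, pow_succ, sub_zero, show (s0 + δ / 8) / ε - (s0 - δ / 8) / ε = δ / 4 * (1 / ε) by ring]; ring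
  have hXsub : X ⊆ (D K \ T) ∪ sd (S k K) (D K) := by
    rintro y ⟨hy1, hy2⟩
    obtain ⟨r1, r2⟩ := hRXs _ hy1
    obtain ⟨q1, q2⟩ := hc _ _ hy2 r2
    have hyS : y ∈ S k K := htube ⟨r1, q1⟩
    by_cases hyD : y ∈ D K
    · exact Or.inl ⟨hyD, fun h => q2 h.2⟩
    · exact Or.inr (Or.inl ⟨hyS, hyD⟩)
  have hDT : volume T + volume (D K \ T) ≤ ENNReal.ofReal κ := by
    have h1 : volume T ≤ volume (D K ∩ T) := by
      calc volume T ≤ volume ((D K ∩ T) ∪ (T \ D K)) := measure_mono (fun y hy => by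
            by_cases h : y ∈ D K
            · exact Or.inl ⟨h, hy⟩
            · exact Or.inr ⟨hy, h⟩)
        _ ≤ volume (D K ∩ T) + volume (T \ D K) := measure_union_le _ _
        _ = volume (D K ∩ T) := by rw [hT0, add_zero]
    calc volume T + volume (D K \ T) ≤ volume (D K ∩ T) + volume (D K \ T) := by gcongr
      _ = volume (D K) := measure_inter_add_sdiff _ hTm
      _ = volume K := hD.2.2.1 K hK
      _ ≤ _ := hKv
  have : ENNReal.ofReal (τ + ξ) < ENNReal.ofReal (τ + ξ) := by
    calc ENNReal.ofReal (τ + ξ) = volume T + volume X := by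
          rw [hTv, hXv, ENNReal.ofReal_add hτ0 hξ0]
      _ ≤ volume T + (volume (D K \ T) + volume (sd (S k K) (D K))) := by
          gcongr; exact (measure_mono hXsub).trans (measure_union_le _ _)
      _ ≤ ENNReal.ofReal κ + volume (sd (S k K) (D K)) := by
          rw [← add_assoc]; gcongr
      _ < ENNReal.ofReal κ + ENNReal.ofReal (τ + ξ - κ) :=
          ENNReal.add_lt_add_left ENNReal.ofReal_ne_top hk
      _ = ENNReal.ofReal (τ + ξ) := by
          rw [← ENNReal.ofReal_add hκ0 (by linarith)]; congr 1; ring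
  exact lt_irrefl _ this

/-- Theorem 6.8: if `∂ ∈ 𝒥_H(𝒦ⁿₙ)` and its associated contraction `φ_∂` does not belong
to the class `ℐ`, then `∂` cannot be weakly approximated on the convex bodies by finite
compositions of polarizations with respect to hyperplanes parallel to `H`. -/
theorem stmt9 {n : ℕ} (hn : 2 ≤ n) (u : Euc n) (hu : ‖u‖ = 1) (t₀ : ℝ)
    (D : Set (Euc n) → Set (Euc n)) (hD : inJH u D)
    (φ : ℝ → ℝ) (hφ : assocContr u D φ)
    (hφnotI : ¬ memI φ) :
    ¬ ∀ K : Set (Euc n), isConvexBody K →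
        ∃ S : ℕ → Set (Euc n) → Set (Euc n),
          (∀ k, isPolCompParallel u (S k)) ∧
          Tendsto (fun k => volume (sd (S k K) (D K))) atTop (𝓝 0) := by
  intro hall
  obtain ⟨m, rfl⟩ : ∃ m, n = m + 2 := ⟨n - 2, by omega⟩
  exact lim_all hφ.1 hφnotI (fun a b hab δ hδ hδ1 => approx hu hD hφ hall a b hab δ hδ hδ1)
end
end

section
/- Let n ≥ 2, let H = u⊥ + t₀u (u a unit vector, t₀ ∈ ℝ) be a hyperplane in ℝⁿ, and let 0 < b < 1. Let ∂ ∈ 𝒥_H(𝒦ⁿₙ) be a map whose associated contraction is φ_∂(t) = b(t − t₀) + t₀ (the Brock set map with parameter b). Then ∂ cannot be weakly approximated on 𝒦ⁿₙ by finite compositions of polarizations with respect to hyperplanes parallel to H; that is, it is not the case that for every K ∈ 𝒦ⁿₙ there exist finite compositions ∂_{K,k} of polarizations with respect to hyperplanes parallel to H such that ‖1_{∂_{K,k} K} − 1_{∂K}‖_{L¹} → 0 as k → ∞. -/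
open MeasureTheory Metric Filter Topology
open scoped RealInnerProductSpace

noncomputable section

def GoodFold (f : ℝ → ℝ) : Prop :=
  (∀ s t, |f s - f t| ≤ |s - t|) ∧
  ∃ a b : ℝ, 0 ≤ a ∧ a ≤ 1 ∧ 0 ≤ b ∧ b ≤ 1 ∧ f b - f a = |b - a| ∧
    ∀ t, 0 ≤ t → t ≤ 1 → f a ≤ f t ∧ f t ≤ f b

lemma GoodFold.neg {f : ℝ → ℝ} (h : GoodFold f) : GoodFold (fun t => - f t) := by
  obtain ⟨h1, a, b, ha0, ha1, hb0, hb1, hab, ht⟩ := h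
  refine ⟨fun s t => ?_, b, a, hb0, hb1, ha0, ha1, ?_, fun t h0 h1 => ?_⟩
  · have := h1 t s
    rw [abs_sub_comm t s] at this
    convert this using 2
    ring
  · rw [abs_sub_comm]; linarith
  · have := ht t h0 h1
    constructor <;> linarith [this.1, this.2]

lemma GoodFold.fold {f : ℝ → ℝ} (h : GoodFold f) (c : ℝ) :
    GoodFold (fun t => c + |f t - c|) := by
  obtain ⟨h1, a, b, ha0, ha1, hb0, hb1, hab, ht⟩ := h
  refine ⟨fun s t => ?_, ?_⟩
  · have e : (c + |f s - c|) - (c + |f t - c|) = |f s - c| - |f t - c| := by ring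
    have := abs_abs_sub_abs_le_abs_sub (f s - c) (f t - c)
    have e2 : (f s - c) - (f t - c) = f s - f t := by ring
    simp only [e]
    rw [e2] at this
    exact this.trans (h1 s t)
  · have hle : f a ≤ f b := by have := abs_nonneg (b - a); linarith
    by_cases hc1 : c ≤ f a
    · refine ⟨a, b, ha0, ha1, hb0, hb1, ?_, fun t h0 h2 => ?_⟩
      · simp only [abs_of_nonneg (show 0 ≤ f a - c by linarith),
          abs_of_nonneg (show 0 ≤ f b - c by linarith)]
        linarith
      · obtain ⟨p, q⟩ := ht t h0 h2
        simp only [abs_of_nonneg (show 0 ≤ f a - c by linarith),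
          abs_of_nonneg (show 0 ≤ f b - c by linarith),
          abs_of_nonneg (show 0 ≤ f t - c by linarith)]
        constructor <;> linarith
    by_cases hc2 : f b ≤ c
    · refine ⟨b, a, hb0, hb1, ha0, ha1, ?_, fun t h0 h2 => ?_⟩
      · simp only [abs_of_nonpos (show f a - c ≤ 0 by linarith),
          abs_of_nonpos (show f b - c ≤ 0 by linarith)]
        rw [abs_sub_comm]
        linarith
      · obtain ⟨p, q⟩ := ht t h0 h2
        simp only [abs_of_nonpos (show f a - c ≤ 0 by linarith),
          abs_of_nonpos (show f b - c ≤ 0 by linarith),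
          abs_of_nonpos (show f t - c ≤ 0 by linarith)]
        constructor <;> linarith
    push Not at hc1 hc2
    obtain ⟨m, hm0, hm1, hma, hmb⟩ : ∃ m, 0 ≤ m ∧ m ≤ 1 ∧ |m - a| = c - f a ∧
        |b - m| = f b - c := by
      rcases le_total a b with hh | hh
      · rw [abs_of_nonneg (by linarith)] at hab
        refine ⟨a + (c - f a), by linarith, by linarith, ?_, ?_⟩
        · rw [abs_of_nonneg (by linarith)]; ring
        · rw [abs_of_nonneg (by linarith)]; linarith
      · rw [abs_of_nonpos (by linarith)] at hab
        refine ⟨a - (c - f a), by linarith, by linarith, ?_, ?_⟩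
        · rw [abs_of_nonpos (by linarith)]; ring
        · rw [abs_of_nonpos (by linarith)]; linarith
    have hfm : f m = c := by
      have p := h1 m a
      have q := h1 b m
      rw [hma] at p
      rw [hmb] at q
      have p' := (abs_le.1 p).2
      have q' := (abs_le.1 q).2
      linarith
    rcases le_total (c - f a) (f b - c) with hh | hh
    · refine ⟨m, b, hm0, hm1, hb0, hb1, ?_, fun t h0 h2 => ?_⟩
      · beta_reduce
        rw [hmb, hfm, abs_of_pos (show 0 < f b - c by linarith)]; simp
      · obtain ⟨p, q⟩ := ht t h0 h2
        simp only [hfm, abs_of_pos (show 0 < f b - c by linarith)]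
        have : |f t - c| ≤ f b - c := abs_le.2 ⟨by linarith, by linarith⟩
        have := abs_nonneg (f t - c)
        constructor
        · simp
        · linarith
    · refine ⟨m, a, hm0, hm1, ha0, ha1, ?_, fun t h0 h2 => ?_⟩
      · beta_reduce
        rw [abs_sub_comm a m, hma, hfm, abs_of_neg (show f a - c < 0 by linarith)]; simp
      · obtain ⟨p, q⟩ := ht t h0 h2
        simp only [hfm, abs_of_neg (show f a - c < 0 by linarith)]
        have : |f t - c| ≤ c - f a := abs_le.2 ⟨by linarith, by linarith⟩
        have := abs_nonneg (f t - c)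
        constructor
        · simp
        · linarith

lemma fold_strip {c t p r : ℝ}
    (h : (c ≤ t ∧ (|t - p| ≤ r ∨ |(2 * c - t) - p| ≤ r)) ∨
      (t ≤ c ∧ |t - p| ≤ r ∧ |(2 * c - t) - p| ≤ r)) :
    |t - (c + |p - c|)| ≤ r := by
  simp only [abs_le] at *
  rcases abs_cases (p - c) with ⟨e, _⟩ | ⟨e, _⟩ <;> rw [e] <;>
  rcases h with ⟨h0, h | h⟩ | ⟨h0, h, h'⟩ <;> constructor <;> linarith

lemma polzn_strip {n : ℕ} (u w : Euc n) (hu : ‖u‖ = 1) (hw : ⟪w, u⟫ = 0) (v : Euc n)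
    (hv : v = u ∨ v = -u) (c r : ℝ) (f : ℝ → ℝ) (hf : GoodFold f) :
    ∃ g, GoodFold g ∧ ∀ A : Set (Euc n), A ⊆ {y | |⟪y, u⟫ - f ⟪y, w⟫| ≤ r} →
      polzn v c A ⊆ {y | |⟪y, u⟫ - g ⟪y, w⟫| ≤ r} := by
  have huu : ⟪u, u⟫ = (1 : ℝ) := by rw [real_inner_self_eq_norm_sq, hu]; norm_num
  have huw : ⟪u, w⟫ = (0 : ℝ) := by rw [real_inner_comm]; exact hw
  rcases hv with rfl | rfl
  · refine ⟨_, hf.fold c, fun A hA x hx => ?_⟩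
    have key : x - (2 * (⟪x, v⟫ - c)) • v ∈ A →
        |(2 * c - ⟪x, v⟫) - f ⟪x, w⟫| ≤ r := fun h => by
      have := hA h
      simp only [Set.mem_ofPred_eq, inner_sub_left, real_inner_smul_left, huu, huw] at this
      convert this using 3 <;> ring_nf
    apply fold_strip
    rcases hx with ⟨h0, h | h⟩ | ⟨h0, h, h'⟩
    · exact Or.inl ⟨h0, Or.inl (hA h)⟩
    · exact Or.inl ⟨h0, Or.inr (key h)⟩
    · exact Or.inr ⟨h0, hA h, key h'⟩
  · refine ⟨_, (hf.neg.fold c).neg, fun A hA x hx => ?_⟩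
    have key : x - (2 * (⟪x, -u⟫ - c)) • (-u) ∈ A →
        |(2 * c - (-⟪x, u⟫)) - (- f ⟪x, w⟫)| ≤ r := fun h => by
      have := hA h
      simp only [Set.mem_ofPred_eq, inner_sub_left, real_inner_smul_left, inner_neg_left,
        inner_neg_right, huu, huw] at this
      rw [← abs_neg]
      convert this using 3 <;> ring_nf
    have key2 : x ∈ A → |(-⟪x, u⟫) - (- f ⟪x, w⟫)| ≤ r := fun h => by
      have : |⟪x, u⟫ - f ⟪x, w⟫| ≤ r := hA h
      rw [← abs_neg]
      convert this using 2
      ring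
    have : |(-⟪x, u⟫) - (c + |(- f ⟪x, w⟫) - c|)| ≤ r := by
      apply fold_strip
      rcases hx with ⟨h0, h | h⟩ | ⟨h0, h, h'⟩
      · rw [inner_neg_right] at h0
        exact Or.inl ⟨h0, Or.inl (key2 h)⟩
      · have h0' := h0
        rw [inner_neg_right] at h0'
        exact Or.inl ⟨h0', Or.inr (key h)⟩
      · have h0' := h0
        rw [inner_neg_right] at h0'
        exact Or.inr ⟨h0', key2 h, key h'⟩
    rw [← abs_neg] at this
    show |_| ≤ r
    convert this using 2
    ring

lemma comp_strip {n : ℕ} (u w : Euc n) (hu : ‖u‖ = 1) (hw : ⟪w, u⟫ = 0) (r : ℝ)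
    (A : Set (Euc n)) (hA : A ⊆ {y | |⟪y, u⟫ - ⟪y, w⟫| ≤ r})
    (l : List (Euc n × ℝ)) (hl : ∀ p ∈ l, p.1 = u ∨ p.1 = -u) :
    ∃ g, GoodFold g ∧
      (l.map fun p => polzn p.1 p.2).foldr (· ∘ ·) id A ⊆ {y | |⟪y, u⟫ - g ⟪y, w⟫| ≤ r} := by
  induction l with
  | nil =>
    refine ⟨id, ⟨fun s t => le_rfl, 0, 1, by simp, by simp, by simp, by simp, by simp, ?_⟩, hA⟩
    intro t h0 h1
    exact ⟨h0, h1⟩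
  | cons p l ih =>
    obtain ⟨f, hf, hfA⟩ := ih fun q hq => hl q (List.mem_cons_of_mem _ hq)
    obtain ⟨g, hg, hgA⟩ := polzn_strip u w hu hw p.1 (hl p List.mem_cons_self) p.2 r f hf
    exact ⟨g, hg, hgA _ hfA⟩

lemma exists_orth {n : ℕ} (hn : 2 ≤ n) (u : Euc n) :
    ∃ w : Euc n, ‖w‖ = 1 ∧ ⟪w, u⟫ = (0 : ℝ) := by
  have h : (Submodule.span ℝ {u})ᗮ ≠ ⊥ := by
    intro h
    rw [Submodule.orthogonal_eq_bot_iff] at h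
    have h1 := finrank_span_le_card (R := ℝ) ({u} : Set (Euc n))
    rw [h, finrank_top, finrank_euclideanSpace_fin, Set.toFinset_singleton, Finset.card_singleton] at h1
    omega
  obtain ⟨z, hz, hz0⟩ := Submodule.exists_mem_ne_zero_of_ne_bot h
  rw [Submodule.mem_orthogonal_singleton_iff_inner_left] at hz
  refine ⟨(‖z‖⁻¹ : ℝ) • z, ?_, ?_⟩
  · rw [norm_smul, norm_inv, norm_norm, inv_mul_cancel₀ (norm_ne_zero_iff.2 hz0)]
  · rw [real_inner_smul_left, hz, mul_zero]

/-- Corollary 6.9: the Brock set map with parameter `0 < b < 1` on the convex bodies,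
i.e. a map in `𝒥_H(𝒦ⁿₙ)` whose associated contraction is `t ↦ b(t − t₀) + t₀`, cannot be
weakly approximated on the convex bodies by finite compositions of polarizations with
respect to hyperplanes parallel to `H = u⊥ + t₀u`. -/
theorem stmt10 {n : ℕ} (hn : 2 ≤ n) (u : Euc n) (hu : ‖u‖ = 1) (t₀ : ℝ)
    (b : ℝ) (hb0 : 0 < b) (hb1 : b < 1)
    (D : Set (Euc n) → Set (Euc n)) (hD : inJH u D)
    (hφ : assocContr u D (fun t => b * (t - t₀) + t₀)) :
    ¬ ∀ K : Set (Euc n), isConvexBody K →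
        ∃ S : ℕ → Set (Euc n) → Set (Euc n),
          (∀ k, isPolCompParallel u (S k)) ∧
          Tendsto (fun k => volume (sd (S k K) (D K))) atTop (𝓝 0) := by
  intro hall
  obtain ⟨w, hw1, hwu⟩ := exists_orth hn u
  have huw : ⟪u, w⟫ = (0 : ℝ) := by rw [real_inner_comm]; exact hwu
  have huu : ⟪u, u⟫ = (1 : ℝ) := by rw [real_inner_self_eq_norm_sq, hu]; norm_num
  have hww : ⟪w, w⟫ = (1 : ℝ) := by rw [real_inner_self_eq_norm_sq, hw1]; norm_num
  obtain ⟨r, hr, hr0⟩ : ∃ r : ℝ, 32 * r = (1 - b) * b ∧ 0 < r :=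
    ⟨(1 - b) * b / 32, by ring, by have := mul_pos (sub_pos.2 hb1) hb0; positivity⟩
  have hin : ∀ (z v : Euc n), ‖v‖ = 1 → ‖z‖ ≤ r → |⟪z, v⟫| ≤ r := fun z v hv hz => by
    have := abs_real_inner_le_norm z v
    rw [hv, mul_one] at this
    exact this.trans hz
  set K : Set (Euc n) := closedBall 0 (2 + r) ∩ {y | |⟪y, u⟫ - ⟪y, w⟫| ≤ 2 * r} with hKdef
  have hball : ∀ s : ℝ, 0 ≤ s → s ≤ 1 → closedBall (s • w + s • u) r ⊆ K := by
    intro s hs0 hs1 y hy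
    rw [mem_closedBall, dist_eq_norm] at hy
    constructor
    · rw [mem_closedBall, dist_zero_right]
      have e : y = (y - (s • w + s • u)) + (s • w + s • u) := by abel
      have h1 : ‖s • w + s • u‖ ≤ 2 := by
        refine (norm_add_le _ _).trans ?_
        rw [norm_smul, norm_smul, hw1, hu, Real.norm_of_nonneg hs0]
        linarith
      rw [e]
      refine (norm_add_le _ _).trans ?_
      linarith
    · have h1 := abs_le.1 (hin _ u hu hy)
      have h2 := abs_le.1 (hin _ w hw1 hy)
      simp only [inner_sub_left, inner_add_left, real_inner_smul_left, huu, huw, hwu, hww] at h1 h2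
      show |⟪y, u⟫ - ⟪y, w⟫| ≤ 2 * r
      rw [abs_le]
      constructor <;> linarith [h1.1, h1.2, h2.1, h2.2]
  have hcb : ∀ x : Euc n, isConvexBody (closedBall x r) := fun x =>
    ⟨isCompact_closedBall _ _, convex_closedBall _ _,
      ⟨x, ball_subset_interior_closedBall (mem_ball_self hr0)⟩⟩
  have hK : isConvexBody K := by
    refine ⟨(isCompact_closedBall _ _).inter_right ?_, (convex_closedBall _ _).inter ?_, ?_⟩
    · exact isClosed_le (by fun_prop) continuous_const
    · intro x hx y hy p q hp hq hpq
      simp only [Set.mem_ofPred_eq, abs_le, inner_add_left, real_inner_smul_left] at *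
      have hq' : q = 1 - p := by linarith
      subst hq'
      constructor <;> nlinarith [hx.1, hx.2, hy.1, hy.2]
    · have := hball 0 le_rfl zero_le_one
      exact (hcb _).2.2.mono (interior_mono this)
  obtain ⟨S, hS, hlim⟩ := hall K hK
  have hvol : 0 < volume (closedBall (0 : Euc n) r) := measure_closedBall_pos _ _ hr0
  obtain ⟨k, hk⟩ := (hlim.eventually (gt_mem_nhds hvol)).exists
  obtain ⟨l, -, hl, hSl⟩ := hS k
  obtain ⟨g, hg, hgK⟩ := comp_strip u w hu hwu (2 * r) K Set.inter_subset_right l hl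
  rw [← hSl] at hgK
  have main : ∀ s : ℝ, 0 ≤ s → s ≤ 1 → |g s - (b * (s - t₀) + t₀)| ≤ 4 * r := by
    intro s hs0 hs1
    set φ := b * (s - t₀) + t₀ with hφdef
    have hE := hφ.2 (s • w) (by rw [real_inner_smul_left, hwu, mul_zero]) s r hr0
    have hM := hD.2.1 _ K (hcb (s • w + s • u)) hK
      (by unfold essSub; rw [Set.sdiff_eq_empty.2 (hball s hs0 hs1)]; simp)
    have hne : ((closedBall (s • w + φ • u) r) ∩ S k K).Nonempty := by
      by_contra hemp
      rw [Set.not_nonempty_iff_eq_empty] at hemp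
      have hsub : closedBall (s • w + φ • u) r ⊆
          ((D (closedBall (s • w + s • u) r) \ closedBall (s • w + φ • u) r) ∪
            (closedBall (s • w + φ • u) r \ D (closedBall (s • w + s • u) r))) ∪
          (D (closedBall (s • w + s • u) r) \ D K) ∪ sd (S k K) (D K) := by
        intro y hy
        have hyS : y ∉ S k K := fun h => by
          have : y ∈ (closedBall (s • w + φ • u) r) ∩ S k K := ⟨hy, h⟩
          rw [hemp] at this
          exact this
        by_cases h1 : y ∈ D (closedBall (s • w + s • u) r)
        · by_cases h2 : y ∈ D K
          · exact Or.inr (Or.inr ⟨h2, hyS⟩)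
          · exact Or.inl (Or.inr ⟨h1, h2⟩)
        · exact Or.inl (Or.inl (Or.inr ⟨hy, h1⟩))
      have h3 := (measure_mono hsub).trans (measure_union_le (μ := volume) _ _)
      have h4 : volume (((D (closedBall (s • w + s • u) r) \ closedBall (s • w + φ • u) r) ∪
            (closedBall (s • w + φ • u) r \ D (closedBall (s • w + s • u) r))) ∪
          (D (closedBall (s • w + s • u) r) \ D K)) = 0 := measure_union_null hE hM
      rw [h4, zero_add, Measure.addHaar_closedBall_center] at h3
      exact absurd hk (not_lt.2 h3)
    obtain ⟨y, hy, hyS⟩ := hne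
    have hyg : |⟪y, u⟫ - g ⟪y, w⟫| ≤ 2 * r := hgK hyS
    rw [mem_closedBall, dist_eq_norm] at hy
    have h1 := hin _ u hu hy
    have h2 := hin _ w hw1 hy
    simp only [inner_sub_left, inner_add_left, real_inner_smul_left, huu, huw, hwu, hww] at h1 h2
    have h3 := hg.1 ⟪y, w⟫ s
    have h2' : |⟪y, w⟫ - s| ≤ r := by convert h2 using 2; ring
    have h3' := abs_le.1 (h3.trans h2')
    have hyg' := abs_le.1 hyg
    have h1' := abs_le.1 h1
    rw [abs_le]
    constructor <;> linarith [h3'.1, h3'.2, hyg'.1, hyg'.2, h1'.1, h1'.2]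
  obtain ⟨-, p, q, hp0, hp1, hq0, hq1, hpq, ht⟩ := hg
  have m0 := abs_le.1 (main 0 le_rfl zero_le_one)
  have m1 := abs_le.1 (main 1 zero_le_one le_rfl)
  have mp := abs_le.1 (main p hp0 hp1)
  have mq := abs_le.1 (main q hq0 hq1)
  have t0 := ht 0 le_rfl zero_le_one
  have t1 := ht 1 zero_le_one le_rfl
  have hA : b - 8 * r ≤ |q - p| := by linarith [t0.1, t1.2, m0.1, m0.2, m1.1, m1.2]
  have hB : |q - p| ≤ b * |q - p| + 8 * r := by
    have : b * (q - p) ≤ b * |q - p| := mul_le_mul_of_nonneg_left (le_abs_self _) hb0.le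
    linarith [mp.1, mp.2, mq.1, mq.2]
  nlinarith [mul_le_mul_of_nonneg_left hA (sub_pos.2 hb1).le, mul_pos hb0 hr0]
end
end

section
/- Let n ≥ 2 and let ψ : ℝⁿ → ℝⁿ be a contraction. Suppose there is a sequence of maps ψ_k = ψ_{k,m_k} ∘ ⋯ ∘ ψ_{k,1}, where each ψ_{k,i} is the contraction associated with a polarization (i.e., of the form x ↦ x + (|t − ⟨x,u⟩| + (t − ⟨x,u⟩))u for some unit vector u and t ∈ ℝ), such that ψ_k → ψ pointwise on the unit ball Bⁿ. If the restriction of ψ to Bⁿ is injective, then 𝓗ⁿ(ψ(Bⁿ)) = 𝓗ⁿ(Bⁿ) = κₙ. -/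
open MeasureTheory Metric Filter Topology
open scoped RealInnerProductSpace

noncomputable section

/-- The contraction associated with the polarization with respect to the oriented
hyperplane `{x : ⟪x,u⟫ = t}` with positive halfspace `{x : ⟪x,u⟫ ≥ t}`. -/
def polContr {n : ℕ} (u : Euc n) (t : ℝ) (x : Euc n) : Euc n :=
  x + (|t - ⟪x, u⟫| + (t - ⟪x, u⟫)) • u

namespace PolAux

variable {n : ℕ}

def refl (u : Euc n) (t : ℝ) (x : Euc n) : Euc n := x + (2 * (t - ⟪x, u⟫)) • u

lemma inner_refl {u : Euc n} (hu : ‖u‖ = 1) (t : ℝ) (x : Euc n) :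
    ⟪refl u t x, u⟫ = 2 * t - ⟪x, u⟫ := by
  simp only [refl, inner_add_left, real_inner_smul_left, real_inner_self_eq_norm_sq, hu]
  ring

lemma refl_refl {u : Euc n} (hu : ‖u‖ = 1) (t : ℝ) (x : Euc n) :
    refl u t (refl u t x) = x := by
  rw [refl, inner_refl hu, refl, add_assoc, ← add_smul]
  have : 2 * (t - ⟪x, u⟫) + 2 * (t - (2 * t - ⟪x, u⟫)) = 0 := by ring
  rw [this, zero_smul, add_zero]

lemma dist_refl {u : Euc n} (hu : ‖u‖ = 1) (t : ℝ) (x y : Euc n) :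
    dist (refl u t x) (refl u t y) = dist x y := by
  rw [dist_eq_norm, dist_eq_norm]
  have h : refl u t x - refl u t y = (x - y) - (2 * ⟪x - y, u⟫) • u := by
    simp only [refl, inner_sub_left]
    module
  rw [h, ← sq_eq_sq₀ (norm_nonneg _) (norm_nonneg _), norm_sub_sq_real, norm_smul,
    real_inner_smul_right, hu, mul_one, Real.norm_eq_abs, sq_abs]
  ring

lemma refl_isometry {u : Euc n} (hu : ‖u‖ = 1) (t : ℝ) : Isometry (refl u t) :=
  Isometry.of_dist_eq (dist_refl hu t)

lemma pol_pos {u : Euc n} {t : ℝ} {x : Euc n} (h : t ≤ ⟪x, u⟫) : polContr u t x = x := by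
  rw [polContr, abs_of_nonpos (by linarith)]; simp

lemma pol_neg {u : Euc n} {t : ℝ} {x : Euc n} (h : ⟪x, u⟫ ≤ t) :
    polContr u t x = refl u t x := by
  rw [polContr, abs_of_nonneg (by linarith), refl, two_mul]

lemma pol_inner {u : Euc n} (hu : ‖u‖ = 1) (t : ℝ) (x : Euc n) :
    ⟪polContr u t x, u⟫ = t + |t - ⟪x, u⟫| := by
  simp only [polContr, inner_add_left, real_inner_smul_left, real_inner_self_eq_norm_sq, hu]
  ring

lemma pol_mem {u : Euc n} (hu : ‖u‖ = 1) (t : ℝ) (x : Euc n) :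
    t ≤ ⟪polContr u t x, u⟫ := by
  rw [pol_inner hu]; linarith [abs_nonneg (t - ⟪x, u⟫)]

lemma pol_lip {u : Euc n} (hu : ‖u‖ = 1) (t : ℝ) : LipschitzWith 1 (polContr u t) := by
  refine LipschitzWith.of_dist_le_mul fun x y => ?_
  rw [NNReal.coe_one, one_mul, dist_eq_norm, dist_eq_norm]
  have h : polContr u t x - polContr u t y = (x - y) +
      ((|t - ⟪x, u⟫| - |t - ⟪y, u⟫|) - ⟪x - y, u⟫) • u := by
    simp only [polContr, inner_sub_left]
    module
  rw [h, ← sq_le_sq₀ (norm_nonneg _) (norm_nonneg _), norm_add_sq_real, norm_smul,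
    real_inner_smul_right, hu, mul_one, Real.norm_eq_abs, sq_abs]
  have h2 : |(|t - ⟪x, u⟫| - |t - ⟪y, u⟫|)| ≤ |⟪x - y, u⟫| := by
    refine (abs_abs_sub_abs_le_abs_sub _ _).trans (le_of_eq ?_)
    rw [inner_sub_left, ← abs_neg]; congr 1; ring
  have h3 := sq_le_sq.mpr h2
  nlinarith

/-- the inductive invariant -/
def Inv (r : ℝ) (Φ : Euc n → Euc n) : Prop :=
  LipschitzWith 1 Φ ∧
  ∃ (g : Euc n → Euc n) (m : Euc n → ℤ), Isometry g ∧ Function.Surjective g ∧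
    (∀ x ∈ closedBall (0 : Euc n) r, Φ x = g x) ∧
    (∀ q, (∀ y ∈ sphere (0 : Euc n) 1, Φ y ≠ q) → ∀ᶠ p in 𝓝 q, m p = m q) ∧
    (∀ q, m q ≠ 0 → ∃ x ∈ closedBall (0 : Euc n) 1, Φ x = q) ∧
    (∀ q ∈ closedBall (g 0) r, m q ≠ 0)

lemma inv_id {r : ℝ} (hr : r < 1) : Inv r (id : Euc n → Euc n) := by
  classical
  refine ⟨LipschitzWith.id, id, fun q => if q ∈ closedBall (0 : Euc n) 1 then 1 else 0,
    isometry_id, Function.surjective_id, fun _ _ => rfl, ?_, ?_, ?_⟩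
  · intro q hq
    have hq1 : dist q 0 ≠ 1 := fun h => hq q (mem_sphere.2 h) rfl
    rcases lt_or_gt_of_ne hq1 with h | h
    · filter_upwards [isOpen_ball.mem_nhds (mem_ball.2 h)] with p hp
      simp only [mem_closedBall]
      rw [if_pos (mem_ball.1 hp).le, if_pos h.le]
    · filter_upwards [isClosed_closedBall.isOpen_compl.mem_nhds
        (show q ∈ (closedBall (0 : Euc n) 1)ᶜ by simpa using h)] with p hp
      rw [if_neg hp, if_neg (by simpa using h)]
  · intro q hq
    refine ⟨q, ?_, rfl⟩
    by_contra h
    simp [h] at hq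
  · intro q hq
    have : q ∈ closedBall (0 : Euc n) 1 := closedBall_subset_closedBall hr.le hq
    simp only [this, if_true]; norm_num

lemma inv_step {r : ℝ} (hr1 : r < 1) (hr : 1 / 2 ≤ r) {Φ : Euc n → Euc n} (h : Inv r Φ)
    {u : Euc n} (hu : ‖u‖ = 1) (t : ℝ)
    (hinj : ∀ y ∈ closedBall (0 : Euc n) 1, ∀ z ∈ closedBall (0 : Euc n) 1,
      polContr u t (Φ y) = polContr u t (Φ z) → dist y z < 1 - r) :
    Inv r (polContr u t ∘ Φ) := by
  classical
  obtain ⟨hL, g, m, hg, hgs, hΦ, hloc, hsupp, hm⟩ := h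
  refine ⟨by simpa using (pol_lip hu t).comp hL, ?_⟩
  have hsub : closedBall (0 : Euc n) r ⊆ closedBall (0 : Euc n) 1 :=
    closedBall_subset_closedBall hr1.le
  have h0r : (0 : Euc n) ∈ closedBall (0 : Euc n) r := mem_closedBall_self (by linarith)
  set o := g 0 with ho
  have hoΦ : Φ 0 = o := hΦ 0 h0r
  have hgpre : ∀ q ∈ closedBall o r, ∃ z ∈ closedBall (0 : Euc n) r, Φ z = q := by
    intro q hq
    obtain ⟨z, rfl⟩ := hgs q
    have hz : z ∈ closedBall (0 : Euc n) r := by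
      rw [mem_closedBall, ← hg.dist_eq]; exact hq
    exact ⟨z, hz, hΦ z hz⟩
  have huu : ⟪u, u⟫ = 1 := by rw [real_inner_self_eq_norm_sq, hu]; norm_num
  set a := polContr u t o with ha
  set c := |t - ⟪o, u⟫| with hc
  have hac : ⟪a, u⟫ = t + c := pol_inner hu t o
  have hc0 : 0 ≤ c := abs_nonneg _
  -- the centre is far from the hyperplane
  have hcbig : (1 - r) / 2 < c := by
    by_contra hcon
    push Not at hcon
    set s := (1 - r) / 2 with hs
    have key : ∀ σ : ℝ, |σ| = s → o + (t - ⟪o, u⟫ + σ) • u ∈ closedBall o r := by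
      intro σ hσ
      rw [mem_closedBall, dist_eq_norm, add_sub_cancel_left, norm_smul, hu, mul_one,
        Real.norm_eq_abs]
      refine (abs_add_le _ _).trans ?_
      rw [hσ]; linarith
    have hs0 : 0 < s := by rw [hs]; linarith
    obtain ⟨z1, hz1, e1⟩ := hgpre _ (key s (abs_of_pos hs0))
    obtain ⟨z2, hz2, e2⟩ := hgpre _ (key (-s) (by rw [abs_neg, abs_of_pos hs0]))
    have hd : dist z1 z2 = 1 - r := by
      rw [← hg.dist_eq, ← hΦ z1 hz1, ← hΦ z2 hz2, e1, e2, dist_eq_norm]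
      have : o + (t - ⟪o, u⟫ + s) • u - (o + (t - ⟪o, u⟫ + -s) • u) = (2 * s) • u := by module
      rw [this, norm_smul, hu, mul_one, Real.norm_eq_abs, abs_of_pos (by linarith)]
      rw [hs]; ring
    have hlt := hinj z1 (hsub hz1) z2 (hsub hz2) (by
      rw [e1, e2]
      rw [pol_pos (by rw [inner_add_left, real_inner_smul_left, huu]; linarith),
        pol_neg (by rw [inner_add_left, real_inner_smul_left, huu]; linarith), refl,
        inner_add_left, real_inner_smul_left, huu]
      module)
    linarith
  -- avoidance
  have havoid : ∀ q ∈ closedBall a r, ∀ y ∈ sphere (0 : Euc n) 1, (polContr u t ∘ Φ) y ≠ q := by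
    intro q hq y hy heq
    have hqt : t ≤ ⟪q, u⟫ := by rw [← heq]; exact pol_mem hu t _
    have hz : ∃ z ∈ closedBall (0 : Euc n) r, polContr u t (Φ z) = q := by
      rcases le_total t ⟪o, u⟫ with h | h
      · rw [ha, pol_pos h] at hq
        obtain ⟨z, hz, e⟩ := hgpre q hq
        exact ⟨z, hz, by rw [e, pol_pos hqt]⟩
      · rw [ha, pol_neg h] at hq
        have : refl u t q ∈ closedBall o r := by
          rw [mem_closedBall, ← dist_refl hu t, refl_refl hu]; exact hq
        obtain ⟨z, hz, e⟩ := hgpre _ this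
        refine ⟨z, hz, ?_⟩
        rw [e, pol_neg (by rw [inner_refl hu]; linarith), refl_refl hu]
    obtain ⟨z, hz, e⟩ := hz
    have h1 := hinj y (sphere_subset_closedBall hy) z (hsub hz) (heq.trans e.symm)
    have h2 : dist y 0 ≤ dist y z + dist z 0 := dist_triangle _ _ _
    rw [mem_sphere.1 hy] at h2
    have h3 := mem_closedBall.1 hz
    linarith
  -- the new multiplicity function
  set m' : Euc n → ℤ := fun q => if t ≤ ⟪q, u⟫ then m q - m (refl u t q) else 0 with hm'
  have hloc' : ∀ q, (∀ y ∈ sphere (0 : Euc n) 1, (polContr u t ∘ Φ) y ≠ q) →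
      ∀ᶠ p in 𝓝 q, m' p = m' q := by
    intro q hq
    have hcont : Continuous fun p : Euc n => ⟪p, u⟫ := by fun_prop
    have hrc : Tendsto (refl u t) (𝓝 q) (𝓝 (refl u t q)) :=
      (refl_isometry hu t).continuous.tendsto q
    rcases lt_or_ge ⟪q, u⟫ t with h | h
    · filter_upwards [hcont.continuousAt.eventually_lt continuousAt_const h] with p hp
      simp only [hm']
      rw [if_neg (not_le.2 hp), if_neg (not_le.2 h)]
    · have h1 := hloc q (fun y hy e => hq y hy (by
        rw [Function.comp_apply, e, pol_pos h]))
      have h2 := hloc (refl u t q) (fun y hy e => hq y hy (by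
        rw [Function.comp_apply, e, pol_neg (by rw [inner_refl hu]; linarith), refl_refl hu]))
      rcases h.eq_or_lt with h' | h'
      · have hqq : refl u t q = q := by rw [refl, ← h']; simp
        have h3 := hrc.eventually h2
        rw [hqq] at h3
        filter_upwards [h1, h3] with p hp1 hp2
        simp only [hm', hp1, hp2, hqq, sub_self, ite_self]
      · have h3 := hrc.eventually h2
        filter_upwards [h1, h3, continuousAt_const.eventually_lt hcont.continuousAt h']
          with p hp1 hp2 hp3
        simp only [hm']
        rw [if_pos hp3.le, if_pos h, hp1, hp2]
  have hsupp' : ∀ q, m' q ≠ 0 → ∃ x ∈ closedBall (0 : Euc n) 1, (polContr u t ∘ Φ) x = q := by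
    intro q hq
    have hqt : t ≤ ⟪q, u⟫ := by
      by_contra hcon
      simp [hm', hcon] at hq
    simp only [hm', if_pos hqt] at hq
    by_cases h1 : m q = 0
    · have h2 : m (refl u t q) ≠ 0 := by
        intro h2; simp [h1, h2] at hq
      obtain ⟨x, hx, e⟩ := hsupp _ h2
      exact ⟨x, hx, by
        rw [Function.comp_apply, e, pol_neg (by rw [inner_refl hu]; linarith), refl_refl hu]⟩
    · obtain ⟨x, hx, e⟩ := hsupp _ h1
      exact ⟨x, hx, by rw [Function.comp_apply, e, pol_pos hqt]⟩
  have hball : ∀ q, m q ≠ 0 → dist q o ≤ 1 := by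
    intro q hq
    obtain ⟨x, hx, rfl⟩ := hsupp q hq
    rw [← hoΦ]
    exact (hL.dist_le_mul x 0).trans (by simpa using hx)
  have hr0 : 0 ≤ r := by linarith
  have hq0mem : a + r • u ∈ closedBall a r := by
    rw [mem_closedBall, dist_eq_norm, add_sub_cancel_left, norm_smul, hu, mul_one,
      Real.norm_eq_abs, abs_of_nonneg hr0]
  have hq1mem : a - r • u ∈ closedBall a r := by
    rw [mem_closedBall, dist_eq_norm, sub_sub_cancel_left, norm_neg, norm_smul, hu, mul_one,
      Real.norm_eq_abs, abs_of_nonneg hr0]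
  have hq0in : ⟪a + r • u, u⟫ = t + c + r := by
    rw [inner_add_left, real_inner_smul_left, huu, hac]; ring
  have hdistge : ∀ x : Euc n, |⟪x - o, u⟫| ≤ dist x o := by
    intro x
    have := abs_real_inner_le_norm (x - o) u
    rwa [hu, mul_one, ← dist_eq_norm] at this
  have hq0 : m' (a + r • u) ≠ 0 := by
    simp only [hm']
    rw [if_pos (by rw [hq0in]; linarith)]
    rcases le_total t ⟪o, u⟫ with h | h
    · have hao : a = o := pol_pos h
      have hz : m (refl u t (a + r • u)) = 0 := by
        by_contra hne
        have h1 := (hdistge _).trans (hball _ hne)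
        have h2 : ⟪refl u t (a + r • u) - o, u⟫ = - (2 * c + r) := by
          rw [inner_sub_left, inner_refl hu, hq0in, ← hao, hac]; ring
        rw [h2, abs_neg, abs_of_nonneg (by linarith)] at h1
        linarith
      rw [hz, sub_zero]
      exact hm _ (hao ▸ hq0mem)
    · have hao : a = refl u t o := pol_neg h
      have hoc : ⟪o, u⟫ = t - c := by
        rw [hc, abs_of_nonneg (by linarith)]; ring
      have hz : m (a + r • u) = 0 := by
        by_contra hne
        have h1 := (hdistge _).trans (hball _ hne)
        have h2 : ⟪(a + r • u) - o, u⟫ = 2 * c + r := by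
          rw [inner_sub_left, hq0in, hoc]; ring
        rw [h2, abs_of_nonneg (by linarith)] at h1
        linarith
      rw [hz, zero_sub]
      refine neg_ne_zero.2 (hm _ ?_)
      rw [mem_closedBall, ← dist_refl hu t, refl_refl hu, ← hao]; exact hq0mem
  have hconst : ∀ q ∈ closedBall a r, m' q = m' (a + r • u) := by
    intro q hq
    have hpc : IsPreconnected (closedBall a r) := (convex_closedBall a r).isPreconnected
    have hco : ContinuousOn m' (closedBall a r) := by
      intro x hx
      have : ContinuousAt m' x := by
        rw [ContinuousAt, nhds_discrete ℤ]
        exact tendsto_pure.2 (hloc' x (havoid x hx))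
      exact this.continuousWithinAt
    exact hpc.constant hco hq hq0mem
  have hm'ne : ∀ q ∈ closedBall a r, m' q ≠ 0 := fun q hq => by rw [hconst q hq]; exact hq0
  have hcr : r ≤ c := by
    by_contra hcon
    apply hm'ne _ hq1mem
    simp only [hm']
    rw [if_neg]
    rw [inner_sub_left, real_inner_smul_left, huu, hac]; linarith
  have hgin : ∀ x ∈ closedBall (0 : Euc n) r, |⟪g x, u⟫ - ⟪o, u⟫| ≤ c := by
    intro x hx
    have h1 := hdistge (g x)
    rw [inner_sub_left, ho, hg.dist_eq, ← ho] at h1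
    exact h1.trans ((mem_closedBall.1 hx).trans hcr)
  rcases le_total t ⟪o, u⟫ with h | h
  · have hao : a = o := pol_pos h
    refine ⟨g, m', hg, hgs, ?_, hloc', hsupp', by rw [← ho, ← hao]; exact hm'ne⟩
    intro x hx
    rw [Function.comp_apply, hΦ x hx, pol_pos]
    have h1 := (abs_le.1 (hgin x hx)).1
    rw [hc, abs_of_nonpos (by linarith)] at h1
    linarith
  · have hao : a = refl u t o := pol_neg h
    refine ⟨refl u t ∘ g, m', (refl_isometry hu t).comp hg,
      (Function.Involutive.surjective (refl_refl hu t)).comp hgs, ?_, hloc', hsupp', by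
        rw [Function.comp_apply, ← ho, ← hao]; exact hm'ne⟩
    intro x hx
    rw [Function.comp_apply, hΦ x hx, pol_neg, Function.comp_apply]
    have h1 := (abs_le.1 (hgin x hx)).2
    rw [hc, abs_of_nonneg (by linarith)] at h1
    linarith

lemma comp_lip (l : List (Euc n → Euc n))
    (hl : ∀ f ∈ l, ∃ (u : Euc n) (t : ℝ), ‖u‖ = 1 ∧ f = polContr u t) :
    LipschitzWith 1 (l.foldr (· ∘ ·) id) := by
  induction l with
  | nil => exact LipschitzWith.id
  | cons f l ih =>
    obtain ⟨u, t, hu, rfl⟩ := hl f (by simp)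
    simpa using (pol_lip hu t).comp (ih fun f hf => hl f (by simp [hf]))

lemma comp_inv {r : ℝ} (hr1 : r < 1) (hr : 1 / 2 ≤ r) (l : List (Euc n → Euc n))
    (hl : ∀ f ∈ l, ∃ (u : Euc n) (t : ℝ), ‖u‖ = 1 ∧ f = polContr u t)
    (hinj : ∀ y ∈ closedBall (0 : Euc n) 1, ∀ z ∈ closedBall (0 : Euc n) 1,
      l.foldr (· ∘ ·) id y = l.foldr (· ∘ ·) id z → dist y z < 1 - r) :
    Inv r (l.foldr (· ∘ ·) id) := by
  induction l with
  | nil => exact inv_id hr1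
  | cons f l ih =>
    obtain ⟨u, t, hu, rfl⟩ := hl f (by simp)
    refine inv_step hr1 hr (ih (fun f hf => hl f (by simp [hf])) ?_) hu t hinj
    intro y hy z hz e
    exact hinj y hy z hz (by simp only [List.foldr_cons, Function.comp_apply]; rw [e])

lemma unif_inj (ψ : Euc n → Euc n) (ψk : ℕ → Euc n → Euc n)
    (hL : ∀ k, LipschitzWith 1 (ψk k))
    (hconv : ∀ x ∈ closedBall (0 : Euc n) 1,
        Tendsto (fun k => ψk k x) atTop (𝓝 (ψ x)))
    (hinj : Set.InjOn ψ (closedBall (0 : Euc n) 1)) {η : ℝ} (hη : 0 < η) :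
    ∀ᶠ k in atTop, ∀ y ∈ closedBall (0 : Euc n) 1, ∀ z ∈ closedBall (0 : Euc n) 1,
      ψk k y = ψk k z → dist y z < η := by
  by_contra hcon
  obtain ⟨φ, hφ, hP⟩ := extraction_of_frequently_atTop (not_eventually.1 hcon)
  push Not at hP
  choose y hy z hz e hd using hP
  obtain ⟨⟨y0, z0⟩, ⟨hy0, hz0⟩, θ, hθ, hlim⟩ :=
    ((isCompact_closedBall (0 : Euc n) 1).prod (isCompact_closedBall (0 : Euc n) 1)).tendsto_subseq
      (x := fun k => (y k, z k)) (fun k => ⟨hy k, hz k⟩)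
  have hly : Tendsto (fun k => y (θ k)) atTop (𝓝 y0) := (continuous_fst.tendsto _).comp hlim
  have hlz : Tendsto (fun k => z (θ k)) atTop (𝓝 z0) := (continuous_snd.tendsto _).comp hlim
  have key : ∀ (w : ℕ → Euc n) (w0 : Euc n), w0 ∈ closedBall (0 : Euc n) 1 →
      Tendsto w atTop (𝓝 w0) → Tendsto (fun k => ψk (φ (θ k)) (w k)) atTop (𝓝 (ψ w0)) := by
    intro w w0 hw0 hw
    have h1 : Tendsto (fun k => ψk (φ (θ k)) w0) atTop (𝓝 (ψ w0)) :=
      (hconv w0 hw0).comp (hφ.comp hθ).tendsto_atTop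
    rw [tendsto_iff_dist_tendsto_zero] at h1 hw ⊢
    refine squeeze_zero (fun _ => dist_nonneg) (fun k => ?_) (by simpa using hw.add h1)
    refine (dist_triangle _ (ψk (φ (θ k)) w0) _).trans ?_
    gcongr
    simpa using (hL (φ (θ k))).dist_le_mul (w k) w0
  have hyz : ψ y0 = ψ z0 := by
    refine tendsto_nhds_unique (key _ y0 hy0 hly) ?_
    simpa only [e] using key _ z0 hz0 hlz
  have hyz0 : y0 = z0 := hinj hy0 hz0 hyz
  have hdl : η ≤ dist y0 z0 := ge_of_tendsto' (hly.dist hlz) (fun k => hd (θ k))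
  rw [hyz0, dist_self] at hdl
  linarith

end PolAux

/-- Theorem 7.1: if a contraction `ψ : ℝⁿ → ℝⁿ` can be approximated pointwise on the unit
ball by finite compositions of contractions associated with polarizations, and `ψ` is
injective on the unit ball, then `ψ` preserves the volume of the unit ball. -/
theorem stmt11 {n : ℕ} (hn : 2 ≤ n)
    (ψ : Euc n → Euc n) (hψ : LipschitzWith 1 ψ)
    (ψk : ℕ → Euc n → Euc n)
    (hcomp : ∀ k, ∃ l : List (Euc n → Euc n), l ≠ [] ∧
        (∀ f ∈ l, ∃ (u : Euc n) (t : ℝ), ‖u‖ = 1 ∧ f = polContr u t) ∧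
        ψk k = l.foldr (· ∘ ·) id)
    (hconv : ∀ x ∈ closedBall (0 : Euc n) 1,
        Tendsto (fun k => ψk k x) atTop (𝓝 (ψ x)))
    (hinj : Set.InjOn ψ (closedBall (0 : Euc n) 1)) :
    volume (ψ '' closedBall (0 : Euc n) 1) = volume (closedBall (0 : Euc n) 1) := by
  have hL : ∀ k, LipschitzWith 1 (ψk k) := by
    intro k
    obtain ⟨l, -, hl, e⟩ := hcomp k
    rw [e]; exact PolAux.comp_lip l hl
  have hiso1 : ∀ x ∈ ball (0 : Euc n) 1, ∀ y ∈ ball (0 : Euc n) 1,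
      dist (ψ x) (ψ y) = dist x y := by
    intro x hx y hy
    obtain ⟨r, hr, hr1⟩ : ∃ r : ℝ, max (1 / 2) (max (dist x 0) (dist y 0)) < r ∧ r < 1 :=
      exists_between (max_lt (by norm_num) (max_lt hx hy))
    have ha : 1 / 2 < r := (le_max_left _ _).trans_lt hr
    have hb : dist x 0 < r := ((le_max_left _ _).trans (le_max_right _ _)).trans_lt hr
    have hc : dist y 0 < r := ((le_max_right _ _).trans (le_max_right _ _)).trans_lt hr
    have hev : ∀ᶠ k in atTop, dist (ψk k x) (ψk k y) = dist x y := by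
      filter_upwards [PolAux.unif_inj ψ ψk hL hconv hinj (sub_pos.2 hr1)] with k hk
      obtain ⟨l, -, hl, e⟩ := hcomp k
      rw [e] at hk ⊢
      obtain ⟨-, g, m, hg, -, hΦ, -⟩ := PolAux.comp_inv hr1 ha.le l hl hk
      rw [hΦ x (mem_closedBall.2 hb.le), hΦ y (mem_closedBall.2 hc.le), hg.dist_eq]
    have hlim := (hconv x (ball_subset_closedBall hx)).dist (hconv y (ball_subset_closedBall hy))
    exact tendsto_nhds_unique hlim (tendsto_const_nhds.congr' (hev.mono fun k hk => hk.symm))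
  have hiso : ∀ x ∈ closedBall (0 : Euc n) 1, ∀ y ∈ closedBall (0 : Euc n) 1,
      dist (ψ x) (ψ y) = dist x y := by
    intro x hx y hy
    have hcl : closure (ball (0 : Euc n) 1) = closedBall 0 1 := closure_ball _ one_ne_zero
    have hmem : (x, y) ∈ closure (ball (0 : Euc n) 1 ×ˢ ball (0 : Euc n) 1) := by
      rw [closure_prod_eq, hcl]; exact ⟨hx, hy⟩
    have hψc := hψ.continuous
    have hclosed : IsClosed {p : Euc n × Euc n | dist (ψ p.1) (ψ p.2) = dist p.1 p.2} :=
      isClosed_eq (by fun_prop) (by fun_prop)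
    have hss : ball (0 : Euc n) 1 ×ˢ ball (0 : Euc n) 1 ⊆
        {p : Euc n × Euc n | dist (ψ p.1) (ψ p.2) = dist p.1 p.2} := by
      rintro ⟨p, q⟩ hp
      rw [Set.mem_prod] at hp
      rw [Set.mem_setOf_eq]
      exact hiso1 p hp.1 q hp.2
    have := closure_minimal hss hclosed hmem
    rwa [Set.mem_setOf_eq] at this
  have hf : Isometry (fun x : closedBall (0 : Euc n) 1 => ψ x) :=
    Isometry.of_dist_eq fun x y => hiso x x.2 y y.2
  have h1 := hf.euclideanHausdorffMeasure_image (d := n) Set.univ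
  have h2 := (isometry_subtype_coe (s := closedBall (0 : Euc n) 1)).euclideanHausdorffMeasure_image
    (d := n) Set.univ
  have e1 : (fun x : closedBall (0 : Euc n) 1 => ψ x) '' Set.univ = ψ '' closedBall 0 1 := by
    rw [Set.image_univ, Set.image_eq_range]
  rw [Set.image_univ, Subtype.range_coe] at h2
  rw [e1, ← h2, EuclideanSpace.euclideanHausdorffMeasure_eq_volume] at h1
  exact h1
end
end

section
/- Let n ≥ 2, let 𝓔 ⊂ 𝓛ⁿ contain all closed balls, and let ∂, ♥ be maps in 𝒥(𝓔) with associated contractions ψ_{∂,r}, ψ_{♥,r} satisfying ∂B(x,r) = B(ψ_{∂,r}(x), r) and ♥B(x,r) = B(ψ_{♥,r}(x), r) essentially. Then for all x ∈ ℝⁿ and r > 0 such that (∂B(x,r)) ∩ ♥B(x,r) ≠ ∅, one has ‖ψ_{∂,r}(x) − ψ_{♥,r}(x)‖ ≤ (n / (2 r^{n−1} κ_{n−1})) · ‖1_{∂B(x,r)} − 1_{♥B(x,r)}‖_{L¹}. -/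
open MeasureTheory Metric Filter Topology
open scoped RealInnerProductSpace

noncomputable section

lemma aux_map {m : ℕ} (a b : Euc (m+1)) (hab : a ≠ b) :
    ∃ Φ : Euc (m+1) → Euc m × ℝ, MeasurePreserving Φ volume volume ∧
      (∀ p, ‖p - a‖^2 = ‖(Φ p).1‖^2 + (Φ p).2^2) ∧
      (∀ p, ‖p - b‖^2 = ‖(Φ p).1‖^2 + ((Φ p).2 - ‖a - b‖)^2) := by
  have hd : ‖b - a‖ ≠ 0 := by rw [norm_ne_zero_iff, sub_ne_zero]; exact hab.symm
  set e : Euc (m+1) := (‖b - a‖)⁻¹ • (b - a) with he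
  have hen : ‖e‖ = 1 := by
    rw [he, norm_smul, norm_inv, norm_norm, inv_mul_cancel₀ hd]
  have hbe : b = a + ‖a - b‖ • e := by
    rw [norm_sub_rev a b, he, smul_smul, mul_inv_cancel₀ hd, one_smul]; abel
  obtain ⟨B, hB⟩ := Orthonormal.exists_orthonormalBasis_extension_of_card_eq (𝕜 := ℝ)
    (E := Euc (m+1)) (ι := Fin (m+1)) (by simp) (v := fun _ => e) (s := {0}) (by
      rw [orthonormal_iff_ite]
      rintro ⟨i, hi⟩ ⟨j, hj⟩
      simp only [Set.mem_singleton_iff] at hi hj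
      subst hi; subst hj
      simp [Set.domRestrict, hen])
  have hB0 : B 0 = e := hB 0 rfl
  have h1 : MeasurePreserving (fun p : Euc (m+1) => p - a) volume volume :=
    measurePreserving_sub_right volume a
  have h2 : MeasurePreserving B.repr volume volume := B.repr.measurePreserving
  have h3 := EuclideanSpace.volume_preserving_symm_measurableEquiv_toLp (Fin (m+1))
  have h4 := volume_preserving_piFinSuccAbove (fun _ : Fin (m+1) => ℝ) 0
  have h5 : MeasurePreserving (Prod.swap : ℝ × (Fin m → ℝ) → (Fin m → ℝ) × ℝ) volume volume :=
    Measure.measurePreserving_swap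
  have h6 : MeasurePreserving (Prod.map (WithLp.toLp 2) id : (Fin m → ℝ) × ℝ → Euc m × ℝ) volume volume :=
    (PiLp.volume_preserving_toLp (Fin m)).prod (MeasurePreserving.id volume)
  have key : ∀ v : Euc (m+1), ‖v‖^2 = ‖(WithLp.toLp 2 (fun i : Fin m => B.repr v i.succ) : Euc m)‖^2
      + (B.repr v 0)^2 := by
    intro v
    rw [← B.repr.norm_map v, EuclideanSpace.norm_sq_eq, EuclideanSpace.norm_sq_eq, Fin.sum_univ_succ]
    simp [add_comm]
  refine ⟨_, h6.comp (h5.comp (h4.comp (h3.comp (h2.comp h1)))), ?_, ?_⟩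
  · intro p
    exact key (p - a)
  · intro p
    have hk := key (p - b)
    have : p - b = (p - a) - ‖a - b‖ • B 0 := by rw [hB0]; conv_lhs => rw [hbe]
                                                 abel
    rw [this] at hk ⊢
    rw [hk]
    simp only [map_sub, map_smul, B.repr_self]
    simp [Fin.succ_ne_zero]
    rfl

lemma aux_int {m : ℕ} (hm : 1 ≤ m) (r : ℝ) (hr : 0 < r) :
    ∫ y in ball (0 : Euc m) r, (1 - ‖y‖ / r) =
      r ^ m / (m + 1) * (volume (closedBall (0 : Euc m) 1)).toReal := by
  have : Nonempty (Fin m) := ⟨⟨0, hm⟩⟩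
  rw [← integral_indicator measurableSet_ball]
  have h := integral_fun_norm_addHaar (volume : Measure (Euc m))
    ((Set.Iio r).indicator (fun t : ℝ => 1 - t / r))
  have e1 : (fun y : Euc m => (ball (0 : Euc m) r).indicator (fun y => 1 - ‖y‖ / r) y) =
     fun y => (Set.Iio r).indicator (fun t : ℝ => 1 - t / r) ‖y‖ := by
    ext y
    simp [Set.indicator]
  rw [e1, h]
  have e2 : (fun y : ℝ => y ^ (Module.finrank ℝ (Euc m) - 1) • (Set.Iio r).indicator (fun t : ℝ => 1 - t / r) y)
     = (Set.Iio r).indicator (fun y : ℝ => y ^ (m - 1) - y ^ m / r) := by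
    ext y
    by_cases hy : y < r
    · obtain ⟨k, rfl⟩ : ∃ k, m = k + 1 := ⟨m - 1, by omega⟩
      simp [Set.indicator, hy]; ring
    · simp [Set.indicator, hy]
  rw [e2, setIntegral_indicator measurableSet_Iio]
  have e3 : Set.Ioi (0:ℝ) ∩ Set.Iio r = Set.Ioo 0 r := rfl
  rw [e3, ← integral_Ioc_eq_integral_Ioo, ← intervalIntegral.integral_of_le hr.le,
    intervalIntegral.integral_sub
    (Continuous.intervalIntegrable (by fun_prop) _ _) (Continuous.intervalIntegrable (by fun_prop) _ _), intervalIntegral.integral_div,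
    integral_pow, integral_pow]
  rw [Measure.addHaar_closedBall_eq_addHaar_ball]
  obtain ⟨k, rfl⟩ : ∃ k, m = k + 1 := ⟨m - 1, by omega⟩
  simp [Measure.real]
  field_simp
  ring

lemma aux_vol {m : ℕ} (hm : 1 ≤ m) (a b : Euc (m+1)) (r : ℝ) (hr : 0 < r) (hab : ‖a - b‖ ≤ 2 * r) :
    ENNReal.ofReal (‖a - b‖ * (r ^ m / (m + 1) * (volume (closedBall (0 : Euc m) 1)).toReal)) ≤
      volume (closedBall a r \ closedBall b r) := by
  by_cases h : a = b
  · simp [h]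
  obtain ⟨Φ, hΦ, ha, hb⟩ := aux_map a b h
  set d := ‖a - b‖ with hd
  have hd0 : 0 ≤ d := norm_nonneg _
  set f : Euc m → ℝ := fun y => - √(r^2 - ‖y‖^2)
  set g : Euc m → ℝ := fun y => - √(r^2 - ‖y‖^2) + d * (1 - ‖y‖ / r)
  have hf : Continuous f := by fun_prop
  have hg : Continuous g := by fun_prop
  have hfi : ∀ f : Euc m → ℝ, Continuous f → IntegrableOn f (ball 0 r) := fun f hf =>
    (hf.continuousOn.integrableOn_compact (isCompact_closedBall (0 : Euc m) r)).mono_set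
      ball_subset_closedBall
  have hv := volume_regionBetween_eq_integral (μ := (volume : Measure (Euc m))) (hfi f hf) (hfi g hg)
    measurableSet_ball (by
      intro y hy
      have : ‖y‖ / r ≤ 1 := by rw [div_le_one hr]; exact (mem_ball_zero_iff.1 hy).le
      have : 0 ≤ d * (1 - ‖y‖ / r) := mul_nonneg hd0 (by linarith)
      simp only [f, g]; linarith)
  have hgf : ∫ y in ball (0 : Euc m) r, (g - f) y = d * (r ^ m / (m + 1) * (volume (closedBall (0 : Euc m) 1)).toReal) := by
    rw [← aux_int hm r hr, ← integral_const_mul]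
    congr 1
    ext y
    simp [f, g]
  rw [hgf] at hv
  rw [← hv]
  have hR : MeasurableSet (regionBetween f g (ball (0 : Euc m) r)) :=
    measurableSet_regionBetween hf.measurable hg.measurable measurableSet_ball
  have h2 := hΦ.measure_preimage hR.nullMeasurableSet
  change volume (regionBetween f g (ball (0 : Euc m) r)) ≤ _
  rw [← h2]
  apply measure_mono
  intro p hp
  have ha := ha p
  have hb := hb p
  obtain ⟨hp1, hp2, hp3⟩ := hp
  generalize (Φ p).1 = y at *
  generalize (Φ p).2 = t at *
  simp only [f, g] at hp2 hp3
  rw [mem_ball_zero_iff] at hp1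
  set s := ‖y‖ with hs
  have hs0 : 0 ≤ s := norm_nonneg _
  have hh : √(r^2 - s^2) ^ 2 = r^2 - s^2 := Real.sq_sqrt (by nlinarith)
  have hh0 : 0 ≤ √(r^2 - s^2) := Real.sqrt_nonneg _
  set h := √(r^2 - s^2)
  have hhs : r - s ≤ h := by
    apply Real.le_sqrt_of_sq_le; nlinarith
  have hq : 0 ≤ s / r := by positivity
  have hk1 : d * (1 - s / r) ≤ d := by nlinarith
  have hk2 : d * (1 - s / r) ≤ 2 * (r - s) := by
    have : 2 * (r - s) = 2 * r * (1 - s / r) := by field_simp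
    rw [this]
    apply mul_le_mul_of_nonneg_right hab
    have : s / r ≤ 1 := by rw [div_le_one hr]; exact hp1.le
    linarith
  constructor
  · rw [mem_closedBall, dist_eq_norm]
    refine (pow_le_pow_iff_left₀ (norm_nonneg _) hr.le two_ne_zero).1 ?_
    rw [ha]
    nlinarith
  · rw [mem_closedBall, dist_eq_norm, not_le]
    apply lt_of_pow_lt_pow_left₀ 2 (norm_nonneg _)
    rw [hb]
    nlinarith

/-- Lemma 7.3: for two maps `∂, ♥ ∈ 𝒥(𝓔)` (monotonic, measure preserving, mapping balls
to balls) on a class `𝓔 ⊂ 𝓛ⁿ` containing all balls, with associated contractions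
`ψ_{∂,r}`, `ψ_{♥,r}`, if the images of a ball `B(x,r)` under `∂` and `♥` meet, then the
distance between their centres is bounded by `n/(2 r^{n-1} κ_{n-1})` times the `L¹` norm
of the difference of the indicator functions of the images. -/
theorem stmt12 {n : ℕ} (hn : 2 ≤ n)
    (𝓔 : Set (Set (Euc n)))
    (h𝓔meas : ∀ A ∈ 𝓔, MeasurableSet A ∧ volume A ≠ ⊤)
    (h𝓔balls : ∀ (x : Euc n) (r : ℝ), 0 < r → closedBall x r ∈ 𝓔)
    (D W : Set (Euc n) → Set (Euc n))
    (hDmeas : ∀ A ∈ 𝓔, MeasurableSet (D A) ∧ volume (D A) ≠ ⊤)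
    (hWmeas : ∀ A ∈ 𝓔, MeasurableSet (W A) ∧ volume (W A) ≠ ⊤)
    (hDmono : ∀ A ∈ 𝓔, ∀ B ∈ 𝓔, essSub A B → essSub (D A) (D B))
    (hWmono : ∀ A ∈ 𝓔, ∀ B ∈ 𝓔, essSub A B → essSub (W A) (W B))
    (hDpres : ∀ A ∈ 𝓔, volume (D A) = volume A)
    (hWpres : ∀ A ∈ 𝓔, volume (W A) = volume A)
    (hDballs : ∀ A ∈ 𝓔, (∃ (x : Euc n) (r : ℝ), 0 < r ∧ essEq A (closedBall x r)) →
        ∃ (x' : Euc n) (r' : ℝ), 0 < r' ∧ essEq (D A) (closedBall x' r'))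
    (hWballs : ∀ A ∈ 𝓔, (∃ (x : Euc n) (r : ℝ), 0 < r ∧ essEq A (closedBall x r)) →
        ∃ (x' : Euc n) (r' : ℝ), 0 < r' ∧ essEq (W A) (closedBall x' r'))
    (ψD ψW : ℝ → Euc n → Euc n)
    (hψD : ∀ (x : Euc n) (r : ℝ), 0 < r →
        essEq (D (closedBall x r)) (closedBall (ψD r x) r))
    (hψW : ∀ (x : Euc n) (r : ℝ), 0 < r →
        essEq (W (closedBall x r)) (closedBall (ψW r x) r))
    (x : Euc n) (r : ℝ) (hr : 0 < r)
    (hmeet : (closedBall (ψD r x) r ∩ closedBall (ψW r x) r).Nonempty) :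
    ‖ψD r x - ψW r x‖ ≤
      (n : ℝ) / (2 * r ^ (n - 1) * (volume (closedBall (0 : Euc (n - 1)) 1)).toReal) *
        (volume (sd (D (closedBall x r)) (W (closedBall x r)))).toReal := by

  obtain ⟨m, rfl⟩ : ∃ m, n = m + 1 := ⟨n - 1, by omega⟩
  have hD := hψD x r hr
  have hW := hψW x r hr
  have hDf := (hDmeas _ (h𝓔balls x r hr)).2
  have hWf := (hWmeas _ (h𝓔balls x r hr)).2
  generalize D (closedBall x r) = P at *
  generalize W (closedBall x r) = Q at *
  generalize ψD r x = a at *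
  generalize ψW r x = b at *
  have hab : ‖a - b‖ ≤ 2 * r := by
    obtain ⟨z, hz1, hz2⟩ := hmeet
    rw [mem_closedBall] at hz1 hz2
    rw [← dist_eq_norm]
    linarith [dist_triangle_left a b z]
  have v1 := aux_vol (m := m) (by omega) a b r hr hab
  have v2 := aux_vol (m := m) (by omega) b a r hr (by rwa [norm_sub_rev])
  rw [norm_sub_rev b a] at v2
  have hfin : volume (sd P Q) ≠ ⊤ :=
    ((measure_mono (show sd P Q ⊆ P ∪ Q by
      rintro z (h | h)
      · exact Or.inl h.1
      · exact Or.inr h.1)).trans_lt (measure_union_lt_top hDf.lt_top hWf.lt_top)).ne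
  have hle : volume (sd (closedBall a r) (closedBall b r)) ≤ volume (sd P Q) := by
    have : sd (closedBall a r) (closedBall b r) ⊆ sd P Q ∪ (((P \ closedBall a r) ∪ (closedBall a r \ P)) ∪
      ((Q \ closedBall b r) ∪ (closedBall b r \ Q))) := by
      intro z
      simp only [sd, Set.mem_union, Set.mem_sdiff]
      tauto
    refine (measure_mono this).trans ((measure_union_le _ _).trans ?_)
    have h0 : volume (((P \ closedBall a r) ∪ (closedBall a r \ P)) ∪
      ((Q \ closedBall b r) ∪ (closedBall b r \ Q))) = 0 := measure_union_null hD hW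
    rw [h0, add_zero]
  have hsum : volume (sd (closedBall a r) (closedBall b r)) =
      volume (closedBall a r \ closedBall b r) + volume (closedBall b r \ closedBall a r) := by
    apply measure_union
    · exact Set.disjoint_left.2 fun z h1 h2 => h2.2 h1.1
    · exact measurableSet_closedBall.diff measurableSet_closedBall
  have hκ : 0 < (volume (closedBall (0 : Euc m) 1)).toReal :=
    ENNReal.toReal_pos (measure_closedBall_pos _ _ one_pos).ne' measure_closedBall_lt_top.ne
  have htot := (add_le_add v1 v2).trans (hsum.symm.le.trans hle)
  simp only [Nat.add_sub_cancel]
  set κ := (volume (closedBall (0 : Euc m) 1)).toReal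
  rw [← ENNReal.ofReal_add (by positivity) (by positivity), ENNReal.ofReal_le_iff_le_toReal hfin] at htot
  push_cast
  calc ‖a - b‖ = ((m : ℝ) + 1) / (2 * r ^ m * κ) * (‖a - b‖ * (r ^ m / (m + 1) * κ) + ‖a - b‖ * (r ^ m / (m + 1) * κ)) := by
        field_simp; ring
    _ ≤ _ := mul_le_mul_of_nonneg_left htot (by positivity)
end
end

section
/- Let ψ : ℝⁿ → ℝⁿ be a contraction and let ε ≥ 0. If x, x′ ∈ ℝⁿ are such that L = ‖ψ(x) − ψ(x′)‖ satisfies ‖x − x′‖ ≤ L + ε, then for every t ∈ [0,1], ‖ψ((1−t)x + tx′) − ((1−t)ψ(x) + tψ(x′))‖ ≤ √(ε(2L + ε)). -/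
open Metric

noncomputable section

/-- Lemma 7.4: if a contraction `ψ` does not decrease the distance between `x` and `x′` by
more than `ε`, then on the segment `[x, x′]` it is within `√(ε(2L + ε))` of the affine map
interpolating `ψ(x)` and `ψ(x′)`. -/
theorem stmt13 {n : ℕ} (ψ : Euc n → Euc n) (hψ : LipschitzWith 1 ψ)
    (ε : ℝ) (hε : 0 ≤ ε) (x x' : Euc n) (L : ℝ)
    (hL : L = ‖ψ x - ψ x'‖) (hxx' : ‖x - x'‖ ≤ L + ε) :
    ∀ t ∈ Set.Icc (0 : ℝ) 1,
      ‖ψ ((1 - t) • x + t • x') - ((1 - t) • ψ x + t • ψ x')‖ ≤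
        Real.sqrt (ε * (2 * L + ε)) := by
  intro t ht
  obtain ⟨h0, h1⟩ := ht
  apply Real.le_sqrt_of_sq_le
  set z := (1 - t) • x + t • x' with hz
  have e1 : ‖ψ z - ψ x‖ ≤ t * ‖x - x'‖ := by
    have h := hψ.dist_le_mul z x
    rw [dist_eq_norm, dist_eq_norm] at h
    have hzx : z - x = (-t) • (x - x') := by rw [hz]; module
    rw [hzx, norm_smul, Real.norm_eq_abs, abs_neg, abs_of_nonneg h0] at h
    simpa using h
  have e2 : ‖ψ z - ψ x'‖ ≤ (1 - t) * ‖x - x'‖ := by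
    have h := hψ.dist_le_mul z x'
    rw [dist_eq_norm, dist_eq_norm] at h
    have hzx : z - x' = (1 - t) • (x - x') := by rw [hz]; module
    rw [hzx, norm_smul, Real.norm_eq_abs, abs_of_nonneg (sub_nonneg.2 h1)] at h
    simpa using h
  have hu : ψ z - ((1 - t) • ψ x + t • ψ x')
      = (1 - t) • (ψ z - ψ x) + t • (ψ z - ψ x') := by module
  have hv : ψ x - ψ x' = (ψ z - ψ x') - (ψ z - ψ x) := by abel
  rw [hv] at hL
  rw [hu]
  generalize ψ z - ψ x = u at *
  generalize ψ z - ψ x' = v at *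
  have i1 := norm_add_sq_real ((1 - t) • u) (t • v)
  have i2 := norm_sub_sq_real v u
  rw [real_inner_smul_left, real_inner_smul_right, norm_smul, norm_smul, Real.norm_eq_abs,
    Real.norm_eq_abs, mul_pow, mul_pow, sq_abs, sq_abs, real_inner_comm] at i1
  rw [← hL] at i2
  have hL0 : 0 ≤ L := hL ▸ norm_nonneg _
  have hD : ‖x - x'‖ ^ 2 ≤ (L + ε) ^ 2 := pow_le_pow_left₀ (norm_nonneg _) hxx' 2
  have s1 : ‖u‖ ^ 2 ≤ (t * ‖x - x'‖) ^ 2 := pow_le_pow_left₀ (norm_nonneg _) e1 2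
  have s2 : ‖v‖ ^ 2 ≤ ((1 - t) * ‖x - x'‖) ^ 2 := pow_le_pow_left₀ (norm_nonneg _) e2 2
  have ht1 : 0 ≤ 1 - t := sub_nonneg.2 h1
  have key : ‖(1 - t) • u + t • v‖ ^ 2
      = (1 - t) * ‖u‖ ^ 2 + t * ‖v‖ ^ 2 - t * (1 - t) * L ^ 2 := by
    rw [i1, i2]; ring
  have a1 := mul_le_mul_of_nonneg_left s1 ht1
  have a2 := mul_le_mul_of_nonneg_left s2 h0
  have a3 := mul_le_mul_of_nonneg_left hD (mul_nonneg h0 ht1)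
  have hP : 0 ≤ ε * (2 * L + ε) := by positivity
  have a4 : t * (1 - t) * (ε * (2 * L + ε)) ≤ 1 * (ε * (2 * L + ε)) :=
    mul_le_mul_of_nonneg_right (by nlinarith) hP
  rw [key]
  linarith
end
end

section
/- Let n ≥ 2, let H be a hyperplane in ℝⁿ, and let ∂ ∈ 𝒥_H(𝓕ⁿₙ). Let 𝒥′ ⊂ 𝒥(𝓕ⁿₙ) be a family such that for each ♥ ∈ 𝒥′ the associated contraction ψ_{♥,r} (with ♥B(x,r) = B(ψ_{♥,r}(x), r) essentially) is independent of r > 0. If ∂ is weakly approximable on 𝓕ⁿₙ by maps in 𝒥′ (i.e., for each A ∈ 𝓕ⁿₙ there are maps in 𝒥′ whose images of A converge to ∂A in the L¹ sense of indicator functions), then there is a sequence (∂_k) of maps in 𝒥′ such that the associated contractions ψ_{∂_k} converge uniformly on the unit ball Bⁿ to the contraction ψ_∂ associated with ∂. -/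
open MeasureTheory Metric Filter Topology
open scoped RealInnerProductSpace

noncomputable section

/-- Membership in `𝓕ⁿₙ`, the family of (nonempty) finite unions of closed balls. -/
def isFUB {n : ℕ} (A : Set (Euc n)) : Prop :=
  ∃ l : List (Euc n × ℝ), l ≠ [] ∧ (∀ p ∈ l, 0 < p.2) ∧
    A = ⋃ p ∈ l, closedBall p.1 p.2

/-- Membership in `𝒥(𝓕ⁿₙ)`: maps from `𝓕ⁿₙ` to `𝓛ⁿ` that are monotonic, measure
preserving, and map balls to balls. -/
def inJFUB {n : ℕ} (W : Set (Euc n) → Set (Euc n)) : Prop :=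
  (∀ A : Set (Euc n), isFUB A → MeasurableSet (W A) ∧ volume (W A) ≠ ⊤) ∧
  (∀ A B : Set (Euc n), isFUB A → isFUB B → essSub A B → essSub (W A) (W B)) ∧
  (∀ A : Set (Euc n), isFUB A → volume (W A) = volume A) ∧
  (∀ A : Set (Euc n), isFUB A →
      (∃ (x : Euc n) (r : ℝ), 0 < r ∧ essEq A (closedBall x r)) →
      ∃ (x' : Euc n) (r' : ℝ), 0 < r' ∧ essEq (W A) (closedBall x' r'))

/-- projection orthogonal to `u` -/
def Pr {n : ℕ} (u y : Euc n) : Euc n := y - ⟪y, u⟫ • u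

lemma Pr_sub {n : ℕ} (u y z : Euc n) : Pr u (y - z) = Pr u y - Pr u z := by
  simp only [Pr, inner_sub_left, sub_smul]; abel

lemma Pr_norm_le {n : ℕ} (u : Euc n) (hu : ‖u‖ = 1) (y : Euc n) : ‖Pr u y‖ ≤ ‖y‖ := by
  have h : ‖Pr u y‖ ^ 2 = ‖y‖ ^ 2 - ⟪y, u⟫ ^ 2 := by
    rw [Pr, norm_sub_sq_real, inner_smul_right, norm_smul, hu, mul_one, Real.norm_eq_abs, sq_abs]
    ring
  exact le_of_sq_le_sq (by nlinarith [sq_nonneg ⟪y, u⟫]) (norm_nonneg _)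

lemma Pr_inf {n : ℕ} (hn : 2 ≤ n) (u : Euc n) (x : Euc n) (ε : ℝ) (hε : 0 < ε) :
    (Pr u '' ball x ε).Infinite := by
  obtain ⟨v, hv0, hv⟩ : ∃ v : Euc n, v ≠ 0 ∧ ⟪v, u⟫ = 0 := by
    have h1 : (ℝ ∙ u)ᗮ ≠ ⊥ := by
      intro h
      have h2 := Submodule.finrank_add_finrank_orthogonal (ℝ ∙ u)
      rw [h, finrank_bot] at h2
      have h3 := finrank_span_le_card (R := ℝ) ({u} : Set (Euc n))
      simp at h3 h2
      omega
    obtain ⟨v, hv, hv0⟩ := Submodule.exists_mem_ne_zero_of_ne_bot h1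
    exact ⟨v, hv0, Submodule.mem_orthogonal_singleton_iff_inner_left.1 hv⟩
  have hvn : 0 < ‖v‖ := norm_pos_iff.2 hv0
  have hinj : Function.Injective (fun s : ℝ => Pr u (x + s • v)) := by
    intro s t hst
    have : Pr u ((x + s • v) - (x + t • v)) = 0 := by rw [Pr_sub]; exact sub_eq_zero.2 hst
    have h2 : (x + s • v) - (x + t • v) = (s - t) • v := by rw [sub_smul]; abel
    rw [h2, Pr, inner_smul_left, hv] at this
    simp [hv0, sub_eq_zero] at this
    exact this
  have hinf : (Set.Ioo (0:ℝ) (ε / ‖v‖)).Infinite := Set.Ioo_infinite (by positivity)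
  refine (hinf.image hinj.injOn).mono ?_
  rintro _ ⟨s, hs, rfl⟩
  refine ⟨x + s • v, ?_, rfl⟩
  simp only [mem_ball, dist_self_add_left, norm_smul, Real.norm_eq_abs, abs_of_pos hs.1]
  exact (lt_div_iff₀ hvn).1 hs.2

lemma exists_sep {E : Type*} [NormedAddCommGroup E] (P : E → E) (C : Finset E)
    (hC : Set.InjOn P C) : ∃ δ > 0, ∀ p ∈ C, ∀ q ∈ C, p ≠ q → δ < ‖P p - P q‖ := by
  have h : ∀ᶠ δ in 𝓝[>] (0:ℝ), ∀ p ∈ C, ∀ q ∈ C, p ≠ q → δ < ‖P p - P q‖ := by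
    rw [Filter.eventually_all_finset]; intro p hp
    rw [Filter.eventually_all_finset]; intro q hq
    by_cases hpq : p = q
    · simp [hpq]
    · have : 0 < ‖P p - P q‖ := norm_pos_iff.2 (sub_ne_zero.2 fun h => hpq (hC hp hq h))
      filter_upwards [nhdsWithin_le_nhds (eventually_lt_nhds this)] with δ hδ _ using hδ
  obtain ⟨δ, h1, h2⟩ := (h.and self_mem_nhdsWithin).exists
  exact ⟨δ, h2, h1⟩

open Classical in
lemma cloud {E : Type*} [NormedAddCommGroup E] (P : E → E)
    (hPn : ∀ x y, ‖P x - P y‖ ≤ ‖x - y‖)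
    (hP : ∀ (x : E) (ε : ℝ), 0 < ε → (P '' ball x ε).Infinite) (l : List E) :
    ∀ K : ℕ, ∃ N : ℕ, ∀ ε > 0, ∀ F : Finset E, ∃ Q : Finset E, Q.card = N ∧
      Set.InjOn P Q ∧ (∀ q ∈ Q, ∀ a ∈ F, P q ≠ P a) ∧
      ∀ x ∈ l, ∃ R R' : ℝ, 0 < R ∧ R < R' ∧ R' < ε ∧ ∀ f : E → E, (∀ y, P (f y) = P y) → ∀ z,
        (Q.filter (fun q => ‖q - x‖ ≤ R)).card ≤ (Q.filter (fun q => ‖f q - z‖ ≤ R')).card + K →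
        ∃ q ∈ Q, ‖q - x‖ ≤ R ∧ ‖f q - z‖ ≤ R' := by
  induction l with
  | nil => intro K; exact ⟨0, fun ε _ F => ⟨∅, by simp⟩⟩
  | cons x l ih =>
    intro K
    obtain ⟨N, hN⟩ := ih (K + 1)
    refine ⟨N + (N + K + 1), fun ε hε F => ?_⟩
    have hinf : (P '' ball x (ε / 2) \ (F.image P : Finset E)).Infinite :=
      (hP x (ε / 2) (by positivity)).diff (Finset.finite_toSet _)
    obtain ⟨t, ht, htc⟩ := hinf.exists_subset_card_eq (N + K + 1)
    have : ∀ p ∈ t, ∃ y, y ∈ ball x (ε / 2) ∧ P y = p := fun p hp => (ht hp).1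
    choose! g hg using this
    have hginj : Set.InjOn g t := by
      intro p hp q hq h
      rw [← (hg p hp).2, ← (hg q hq).2, h]
    set C := t.image g with hCdef
    have hCc : C.card = N + K + 1 := by rw [hCdef, Finset.card_image_of_injOn hginj, htc]
    have hCx : ∀ q ∈ C, ‖q - x‖ ≤ ε / 2 := by
      intro q hq
      obtain ⟨p, hp, rfl⟩ := Finset.mem_image.1 hq
      have := (hg p hp).1
      rw [mem_ball, dist_eq_norm] at this
      exact this.le
    have hCinj : Set.InjOn P C := by
      intro a ha b hb h
      obtain ⟨p, hp, rfl⟩ := Finset.mem_image.1 ha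
      obtain ⟨q, hq, rfl⟩ := Finset.mem_image.1 hb
      rw [(hg p hp).2, (hg q hq).2] at h
      rw [h]
    have hCF : ∀ q ∈ C, ∀ a ∈ F, P q ≠ P a := by
      intro q hq a ha h
      obtain ⟨p, hp, rfl⟩ := Finset.mem_image.1 hq
      rw [(hg p hp).2] at h
      exact (ht hp).2 (by rw [h]; exact_mod_cast Finset.mem_image_of_mem P ha)
    obtain ⟨δ, hδ, hsep⟩ := exists_sep P C hCinj
    obtain ⟨Q, hQc, hQinj, hQF, hQ⟩ := hN (min ε (δ / 2)) (lt_min hε (by positivity)) (F ∪ C)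
    have hdisj : Disjoint Q C := by
      rw [Finset.disjoint_left]
      intro q hq hqC
      exact hQF q hq q (Finset.mem_union_right _ hqC) rfl
    refine ⟨Q ∪ C, by rw [Finset.card_union_of_disjoint hdisj, hQc, hCc], ?_, ?_, ?_⟩
    · intro a ha b hb h
      rw [Finset.coe_union] at ha hb
      rcases ha with ha | ha <;> rcases hb with hb | hb
      · exact hQinj ha hb h
      · exact absurd h (hQF a ha b (Finset.mem_union_right _ hb))
      · exact absurd h.symm (hQF b hb a (Finset.mem_union_right _ ha))
      · exact hCinj ha hb h
    · intro q hq a ha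
      rcases Finset.mem_union.1 hq with hq | hq
      · exact hQF q hq a (Finset.mem_union_left _ ha)
      · exact hCF q hq a ha
    · intro y hy
      rcases List.mem_cons.1 hy with rfl | hy
      · refine ⟨ε / 2, 3 * ε / 4, by positivity, by linarith, by linarith, fun f hf z hcard => ?_⟩
        by_contra hcon
        push Not at hcon
        have h1 : C ⊆ (Q ∪ C).filter (fun q => ‖q - y‖ ≤ ε / 2) := fun q hq =>
          Finset.mem_filter.2 ⟨Finset.mem_union_right _ hq, hCx q hq⟩
        have h2 : (Q ∪ C).filter (fun q => ‖f q - z‖ ≤ 3 * ε / 4) ⊆ Q := by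
          intro q hq
          obtain ⟨hq1, hq2⟩ := Finset.mem_filter.1 hq
          rcases Finset.mem_union.1 hq1 with h | h
          · exact h
          · exact absurd hq2 (not_le.2 (hcon q hq1 (hCx q h)))
        have h3 := Finset.card_le_card h1
        have h4 := Finset.card_le_card h2
        omega
      · obtain ⟨R, R', h0, h1, h2, h3⟩ := hQ y hy
        refine ⟨R, R', h0, h1, h2.trans_le (min_le_left _ _), fun f hf z hcard => ?_⟩
        have hR' : R' < δ / 2 := h2.trans_le (min_le_right _ _)
        have hone : (C.filter (fun q => ‖f q - z‖ ≤ R')).card ≤ 1 := by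
          rw [Finset.card_le_one]
          intro a ha b hb
          obtain ⟨ha1, ha2⟩ := Finset.mem_filter.1 ha
          obtain ⟨hb1, hb2⟩ := Finset.mem_filter.1 hb
          by_contra hab
          have h5 := hsep a ha1 b hb1 hab
          have h6 := hPn (f a) (f b)
          rw [hf, hf] at h6
          have h7 : ‖f a - f b‖ ≤ ‖f a - z‖ + ‖f b - z‖ := by
            have := norm_sub_le (f a - z) (f b - z)
            rwa [sub_sub_sub_cancel_right] at this
          linarith
        obtain ⟨q, hq, hq'⟩ := h3 f hf z (by
          have h8 : (Q.filter (fun q => ‖q - y‖ ≤ R)).card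
              ≤ ((Q ∪ C).filter (fun q => ‖q - y‖ ≤ R)).card :=
            Finset.card_le_card (Finset.filter_subset_filter _ Finset.subset_union_left)
          rw [Finset.filter_union] at hcard
          rw [Finset.filter_union] at h8
          have h9 := Finset.card_union_le (Q.filter (fun q => ‖f q - z‖ ≤ R'))
            (C.filter (fun q => ‖f q - z‖ ≤ R'))
          rw [Finset.filter_union] at hcard
          omega)
        exact ⟨q, Finset.mem_union_left _ hq, hq'⟩

lemma vol_cb {n : ℕ} (x : Euc n) (r : ℝ) : volume (closedBall x r) = volume (closedBall (0 : Euc n) r) :=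
  Measure.addHaar_closedBall_center volume x r

lemma psi_Pr {n : ℕ} (u : Euc n) (hu : ‖u‖ = 1)
    (D : Set (Euc n) → Set (Euc n))
    (hDcyl : ∀ A : Set (Euc n), isFUB A → ∀ (c : Euc n) (ρ : ℝ), 0 < ρ →
        essSub A (cyl u c ρ) → essSub (D A) (cyl u c ρ))
    (ψD : Euc n → Euc n)
    (hψD : ∀ (x : Euc n) (r : ℝ), 0 < r →
        essEq (D (closedBall x r)) (closedBall (ψD x) r)) (x : Euc n) :
    Pr u (ψD x) = Pr u x := by
  have key : ∀ r > 0, ‖Pr u (ψD x - x)‖ ≤ r := by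
    intro r hr
    have h1 : essSub (closedBall x r) (cyl u x r) := by
      have : closedBall x r \ cyl u x r = ∅ := by
        rw [Set.diff_eq_empty]
        intro y hy
        rw [mem_closedBall, dist_eq_norm] at hy
        exact (Pr_norm_le u hu (y - x)).trans hy
      rw [essSub, this, measure_empty]
    have h2 := hDcyl _ ⟨[(x, r)], by simp, by simpa using hr, by simp⟩ x r hr h1
    have h3 := hψD x r hr
    have hcl : IsClosed (cyl u x r) := by
      apply isClosed_le <;> fun_prop
    have h4 : volume (ball (ψD x) r \ cyl u x r) = 0 := by
      refine measure_mono_null ?_ (measure_union_null h2 h3)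
      intro y hy
      by_cases hyD : y ∈ D (closedBall x r)
      · exact Or.inl ⟨hyD, hy.2⟩
      · exact Or.inr (Or.inr ⟨ball_subset_closedBall hy.1, hyD⟩)
    have h5 : ball (ψD x) r \ cyl u x r = ∅ :=
      (isOpen_ball.sdiff hcl).measure_eq_zero_iff volume |>.1 h4
    have h6 := Set.diff_eq_empty.1 h5 (mem_ball_self hr)
    exact h6
  have h0 : ‖Pr u (ψD x - x)‖ ≤ 0 := le_of_forall_pos_le_add fun r hr => by simpa using key r hr
  rw [Pr_sub] at h0
  exact sub_eq_zero.1 (norm_le_zero_iff.1 h0)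

lemma fub_finset {n : ℕ} (Q : Finset (Euc n)) (hQ : Q.Nonempty) (r : ℝ) (hr : 0 < r) :
    isFUB (⋃ q ∈ Q, closedBall q r) := by
  refine ⟨Q.toList.map (fun q => (q, r)), ?_, ?_, ?_⟩
  · simpa using hQ.ne_empty
  · intro p hp
    obtain ⟨q, _, rfl⟩ := List.mem_map.1 hp
    exact hr
  · ext y; simp

lemma fub_union {n : ℕ} {A B : Set (Euc n)} (hA : isFUB A) (hB : isFUB B) : isFUB (A ∪ B) := by
  obtain ⟨l, h1, h2, rfl⟩ := hA
  obtain ⟨m, h3, h4, rfl⟩ := hB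
  refine ⟨l ++ m, by simp [h1], ?_, ?_⟩
  · intro p hp
    rcases List.mem_append.1 hp with h | h
    exacts [h2 p h, h4 p h]
  · ext y; simp only [Set.mem_union, Set.mem_iUnion, List.mem_append, exists_prop]
    constructor
    · rintro (⟨p, h, h'⟩ | ⟨p, h, h'⟩)
      exacts [⟨p, Or.inl h, h'⟩, ⟨p, Or.inr h, h'⟩]
    · rintro ⟨p, h | h, h'⟩
      exacts [Or.inl ⟨p, h, h'⟩, Or.inr ⟨p, h, h'⟩]

lemma fub_meas {n : ℕ} {A : Set (Euc n)} (hA : isFUB A) : MeasurableSet A ∧ volume A ≠ ⊤ := by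
  obtain ⟨l, h1, h2, rfl⟩ := hA
  have : IsCompact (⋃ p ∈ l, closedBall p.1 p.2) := by
    have := (l.toFinset (α := Euc n × ℝ)).finite_toSet.isCompact_biUnion
      (f := fun p : Euc n × ℝ => closedBall p.1 p.2) (fun p _ => isCompact_closedBall _ _)
    simpa using this
  exact ⟨this.measurableSet, this.measure_lt_top.ne⟩

lemma inter_le {n : ℕ} {W : Set (Euc n) → Set (Euc n)} (hW : inJFUB W) {A B : Set (Euc n)}
    (hA : isFUB A) (hB : isFUB B) : volume (A ∩ B) ≤ volume (W A ∩ W B) := by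
  obtain ⟨w1, w2, w3, w4⟩ := hW
  have hAB := fub_union hA hB
  have e1 := measure_union_add_inter (μ := volume) A (fub_meas hB).1
  have e2 := measure_union_add_inter (μ := volume) (W A) (w1 B hB).1
  rw [w3 A hA, w3 B hB, ← e1] at e2
  have h1 : volume (W A ∪ W B) ≤ volume (A ∪ B) := by
    rw [← w3 _ hAB]
    have a1 : essSub (W A) (W (A ∪ B)) := w2 _ _ hA hAB (by
      rw [essSub, Set.diff_eq_empty.2 Set.subset_union_left, measure_empty])
    have a2 : essSub (W B) (W (A ∪ B)) := w2 _ _ hB hAB (by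
      rw [essSub, Set.diff_eq_empty.2 Set.subset_union_right, measure_empty])
    refine measure_mono_ae ?_
    rw [ae_le_set, Set.union_diff_distrib]
    exact measure_union_null a1 a2
  by_contra hcon
  push Not at hcon
  have := ENNReal.add_lt_add_of_le_of_lt (ne_top_of_le_ne_top (fub_meas hAB).2 h1) h1 hcon
  exact absurd e2 this.ne

lemma vol_balls {n : ℕ} (Q : Finset (Euc n)) (f : Euc n → Euc n) (r : ℝ)
    (hd : ∀ p ∈ Q, ∀ q ∈ Q, p ≠ q → 2 * r < ‖f p - f q‖) :
    volume (⋃ q ∈ Q, closedBall (f q) r) = Q.card * volume (closedBall (0 : Euc n) r) := by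
  rw [measure_biUnion_finset]
  · simp [vol_cb (f _)]
  · intro p hp q hq hpq
    refine closedBall_disjoint_closedBall ?_
    rw [dist_eq_norm]
    linarith [hd p hp q hq hpq]
  · intro q _; exact measurableSet_closedBall

lemma D_balls {n : ℕ} {D : Set (Euc n) → Set (Euc n)} (hD : inJFUB D)
    (ψD : Euc n → Euc n)
    (hψD : ∀ (x : Euc n) (r : ℝ), 0 < r →
        essEq (D (closedBall x r)) (closedBall (ψD x) r))
    (Q : Finset (Euc n)) (hQ : Q.Nonempty) (r : ℝ) (hr : 0 < r)
    (hd : ∀ p ∈ Q, ∀ q ∈ Q, p ≠ q → 2 * r < ‖p - q‖)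
    (hd' : ∀ p ∈ Q, ∀ q ∈ Q, p ≠ q → 2 * r < ‖ψD p - ψD q‖) :
    volume (D (⋃ q ∈ Q, closedBall q r) \ ⋃ q ∈ Q, closedBall (ψD q) r) = 0 := by
  obtain ⟨w1, w2, w3, w4⟩ := hD
  have hA := fub_finset Q hQ r hr
  set A := ⋃ q ∈ Q, closedBall q r with hAdef
  set U := ⋃ q ∈ Q, closedBall (ψD q) r with hUdef
  have hUA : volume U = volume (D A) := by
    rw [w3 A hA, hUdef, vol_balls Q ψD r hd', hAdef, vol_balls Q (fun q => q) r hd]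
  have hsub : U ≤ᵐ[volume] D A := by
    rw [ae_le_set, hUdef]
    simp only [Set.iUnion_sdiff]
    refine (measure_biUnion_null_iff Q.countable_toSet).2 fun q hq => ?_
    have hB : isFUB (closedBall q r) := ⟨[(q, r)], by simp, by simpa using hr, by simp⟩
    have h1 : essSub (D (closedBall q r)) (D A) := w2 _ _ hB hA (by
      rw [essSub, Set.diff_eq_empty.2, measure_empty]
      exact Set.subset_biUnion_of_mem (u := fun q => closedBall q r) hq)
    refine measure_mono_null ?_ (measure_union_null h1 (hψD q r hr))
    intro y hy
    by_cases hyD : y ∈ D (closedBall q r)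
    · exact Or.inl ⟨hyD, hy.2⟩
    · exact Or.inr (Or.inr ⟨hy.1, hyD⟩)
  have hUm : MeasurableSet U := Q.measurableSet_biUnion fun q _ => measurableSet_closedBall
  have := ae_eq_of_ae_subset_of_measure_ge hsub hUA.ge hUm.nullMeasurableSet (w1 A hA).2
  exact ae_le_set.1 this.symm.le

open Classical in
lemma approx_fin {n : ℕ} (hn : 2 ≤ n) (u : Euc n) (hu : ‖u‖ = 1)
    (D : Set (Euc n) → Set (Euc n)) (hD : inJFUB D)
    (hDcyl : ∀ A : Set (Euc n), isFUB A → ∀ (c : Euc n) (ρ : ℝ), 0 < ρ →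
        essSub A (cyl u c ρ) → essSub (D A) (cyl u c ρ))
    (ψD : Euc n → Euc n) (hψDlip : LipschitzWith 1 ψD)
    (hψD : ∀ (x : Euc n) (r : ℝ), 0 < r →
        essEq (D (closedBall x r)) (closedBall (ψD x) r))
    (𝓙' : Set (Set (Euc n) → Set (Euc n)))
    (h𝓙'J : ∀ W ∈ 𝓙', inJFUB W)
    (hweak : ∀ A : Set (Euc n), isFUB A →
        ∃ S : ℕ → Set (Euc n) → Set (Euc n), (∀ k, S k ∈ 𝓙') ∧
          Tendsto (fun k => volume (sd (S k A) (D A))) atTop (𝓝 0))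
    (l : List (Euc n)) (hl : l ≠ []) (ε : ℝ) (hε : 0 < ε) :
    ∃ W ∈ 𝓙', ∀ ψ : Euc n → Euc n,
      (∀ (x : Euc n) (r : ℝ), 0 < r → essEq (W (closedBall x r)) (closedBall (ψ x) r)) →
      ∀ x ∈ l, ‖ψ x - ψD x‖ ≤ 2 * ε := by
  have hPn : ∀ x y, ‖Pr u x - Pr u y‖ ≤ ‖x - y‖ := fun x y => by
    rw [← Pr_sub]; exact Pr_norm_le u hu _
  have hψP := psi_Pr u hu D hDcyl ψD hψD
  obtain ⟨N, hN⟩ := cloud (Pr u) hPn (Pr_inf hn u) l 0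
  obtain ⟨Q, -, hQinj, -, hQ⟩ := hN ε hε ∅
  choose! R R' h0 h1 h2 h3 using hQ
  obtain ⟨x₀, hx₀⟩ := List.exists_mem_of_ne_nil l hl
  have hQne : Q.Nonempty := by
    obtain ⟨q, hq, -⟩ := h3 x₀ hx₀ id (fun _ => rfl) x₀ (by
      refine Finset.card_le_card ?_
      intro q hq
      rw [Finset.mem_filter] at hq ⊢
      exact ⟨hq.1, hq.2.trans (h1 x₀ hx₀).le⟩)
    exact ⟨q, hq⟩
  obtain ⟨δ, hδ, hsep⟩ := exists_sep (Pr u) Q hQinj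
  obtain ⟨r, hr, hrδ, hrl⟩ : ∃ r : ℝ, 0 < r ∧ 2 * r < δ ∧ ∀ x ∈ l.toFinset, R x + 2 * r < R' x := by
    have e1 : ∀ᶠ r in 𝓝[>] (0:ℝ), 2 * r < δ := by
      filter_upwards [nhdsWithin_le_nhds (eventually_lt_nhds (half_pos hδ))] with r hr
      linarith
    have e2 : ∀ᶠ r in 𝓝[>] (0:ℝ), ∀ x ∈ l.toFinset, R x + 2 * r < R' x := by
      rw [Filter.eventually_all_finset]
      intro x hx
      have : 0 < (R' x - R x) / 2 := by linarith [h1 x (List.mem_toFinset.1 hx)]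
      filter_upwards [nhdsWithin_le_nhds (eventually_lt_nhds this)] with r hr
      linarith
    obtain ⟨r, ⟨a, b⟩, c⟩ := ((e1.and e2).and self_mem_nhdsWithin).exists
    exact ⟨r, c, a, b⟩
  have hd : ∀ p ∈ Q, ∀ q ∈ Q, p ≠ q → 2 * r < ‖p - q‖ := fun p hp q hq hpq =>
    hrδ.trans ((hsep p hp q hq hpq).trans_le (hPn p q))
  have hd' : ∀ p ∈ Q, ∀ q ∈ Q, p ≠ q → 2 * r < ‖ψD p - ψD q‖ := fun p hp q hq hpq => by
    have := hPn (ψD p) (ψD q)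
    rw [hψP, hψP] at this
    exact hrδ.trans ((hsep p hp q hq hpq).trans_le this)
  have hA := fub_finset Q hQne r hr
  have hDA := D_balls hD ψD hψD Q hQne r hr hd hd'
  set A := ⋃ q ∈ Q, closedBall q r with hAdef
  set U := ⋃ q ∈ Q, closedBall (ψD q) r with hUdef
  set ω := volume (closedBall (0 : Euc n) r) with hω
  have hω0 : 0 < ω := measure_closedBall_pos volume _ hr
  have hωt : ω ≠ ⊤ := measure_closedBall_lt_top.ne
  obtain ⟨S, hS, hSt⟩ := hweak A hA
  obtain ⟨k, hk⟩ := (hSt.eventually (eventually_lt_nhds hω0)).exists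
  refine ⟨S k, hS k, fun ψ hψ x hx => ?_⟩
  have hB : isFUB (closedBall x (R x + r)) :=
    ⟨[(x, R x + r)], by simp, by simpa using add_pos (h0 x hx) hr, by simp⟩
  have hint := inter_le (h𝓙'J _ (hS k)) hA hB
  have hψB := hψ x (R x + r) (add_pos (h0 x hx) hr)
  have lower : ((Q.filter (fun q => ‖q - x‖ ≤ R x)).card : ENNReal) * ω
      ≤ volume (A ∩ closedBall x (R x + r)) := by
    rw [hω, ← vol_balls (Q.filter (fun q => ‖q - x‖ ≤ R x)) (fun q => q) r
      (fun p hp q hq => hd p (Finset.mem_filter.1 hp).1 q (Finset.mem_filter.1 hq).1)]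
    refine measure_mono (Set.iUnion₂_subset fun q hq => ?_)
    obtain ⟨hq1, hq2⟩ := Finset.mem_filter.1 hq
    refine Set.subset_inter (Set.subset_biUnion_of_mem (u := fun q => closedBall q r) hq1) ?_
    refine closedBall_subset_closedBall' ?_
    rw [dist_eq_norm]; linarith
  have upper : volume (S k A ∩ S k (closedBall x (R x + r)))
      < ((Q.filter (fun q => ‖ψD q - ψ x‖ ≤ R' x)).card : ENNReal) * ω + ω := by
    set V := ⋃ q ∈ Q.filter (fun q => ‖ψD q - ψ x‖ ≤ R' x), closedBall (ψD q) r with hV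
    have hVv : volume V = ((Q.filter (fun q => ‖ψD q - ψ x‖ ≤ R' x)).card : ENNReal) * ω :=
      vol_balls _ ψD r
        (fun p hp q hq => hd' p (Finset.mem_filter.1 hp).1 q (Finset.mem_filter.1 hq).1)
    have hsub : S k A ∩ S k (closedBall x (R x + r)) ⊆ V ∪ (sd (S k A) (D A) ∪
        ((D A \ U) ∪ ((S k (closedBall x (R x + r)) \ closedBall (ψ x) (R x + r)) ∪
          (closedBall (ψ x) (R x + r) \ S k (closedBall x (R x + r)))))) := by
      rintro y ⟨hy1, hy2⟩
      by_cases a1 : y ∈ D A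
      swap
      · exact Or.inr (Or.inl (Or.inl ⟨hy1, a1⟩))
      by_cases a2 : y ∈ U
      swap
      · exact Or.inr (Or.inr (Or.inl ⟨a1, a2⟩))
      by_cases a3 : y ∈ closedBall (ψ x) (R x + r)
      swap
      · exact Or.inr (Or.inr (Or.inr (Or.inl ⟨hy2, a3⟩)))
      left
      obtain ⟨q, hq, hqy⟩ := Set.mem_iUnion₂.1 a2
      refine Set.mem_iUnion₂.2 ⟨q, Finset.mem_filter.2 ⟨hq, ?_⟩, hqy⟩
      rw [mem_closedBall] at a3 hqy
      have := dist_triangle_left (ψD q) (ψ x) y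
      rw [← dist_eq_norm]
      linarith [hrl x (List.mem_toFinset.2 hx)]
    have hnull := measure_union_null hDA hψB
    calc _ ≤ _ := measure_mono hsub
      _ ≤ volume V + (volume (sd (S k A) (D A)) + 0) := by
          rw [← hnull]
          exact (measure_union_le _ _).trans (by gcongr; exact measure_union_le _ _)
      _ < _ := by
          rw [add_zero, hVv]
          exact ENNReal.add_lt_add_left (ENNReal.mul_ne_top (ENNReal.natCast_ne_top _) hωt) hk
  have hcount : (Q.filter (fun q => ‖q - x‖ ≤ R x)).card
      ≤ (Q.filter (fun q => ‖ψD q - ψ x‖ ≤ R' x)).card + 0 := by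
    have h := (lower.trans hint).trans_lt upper
    rw [← add_one_mul] at h
    have h' := lt_of_mul_lt_mul_right' h
    have h'' : (Q.filter (fun q => ‖q - x‖ ≤ R x)).card
      < (Q.filter (fun q => ‖ψD q - ψ x‖ ≤ R' x)).card + 1 := by exact_mod_cast h'
    omega
  obtain ⟨q, hq, hq1, hq2⟩ := h3 x hx ψD hψP (ψ x) hcount
  have hlip : ‖ψD q - ψD x‖ ≤ ‖q - x‖ := by
    simpa [dist_eq_norm] using hψDlip.dist_le_mul q x
  have htri : ‖ψ x - ψD x‖ ≤ ‖ψD q - ψD x‖ + ‖ψD q - ψ x‖ := by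
    have := norm_sub_le (ψD q - ψD x) (ψD q - ψ x)
    rwa [sub_sub_sub_cancel_left] at this
  linarith [h1 x hx, h2 x hx]

/-- Theorem 7.5: if `∂ ∈ 𝒥_H(𝓕ⁿₙ)` is weakly approximable on `𝓕ⁿₙ` by maps in a family
`𝒥′ ⊂ 𝒥(𝓕ⁿₙ)` whose members have `r`-independent associated contractions, then there is a
sequence of maps in `𝒥′` whose associated contractions converge uniformly on the unit
ball to the contraction `ψ_∂` associated with `∂`. -/
theorem stmt14 {n : ℕ} (hn : 2 ≤ n) (u : Euc n) (hu : ‖u‖ = 1) (t₀ : ℝ)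
    (D : Set (Euc n) → Set (Euc n)) (hD : inJFUB D)
    (hDcyl : ∀ A : Set (Euc n), isFUB A → ∀ (c : Euc n) (ρ : ℝ), 0 < ρ →
        essSub A (cyl u c ρ) → essSub (D A) (cyl u c ρ))
    (ψD : Euc n → Euc n) (hψDlip : LipschitzWith 1 ψD)
    (hψD : ∀ (x : Euc n) (r : ℝ), 0 < r →
        essEq (D (closedBall x r)) (closedBall (ψD x) r))
    (𝓙' : Set (Set (Euc n) → Set (Euc n)))
    (h𝓙'J : ∀ W ∈ 𝓙', inJFUB W)
    (h𝓙'contr : ∀ W ∈ 𝓙', ∃ ψ : Euc n → Euc n, LipschitzWith 1 ψ ∧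
        ∀ (x : Euc n) (r : ℝ), 0 < r → essEq (W (closedBall x r)) (closedBall (ψ x) r))
    (hweak : ∀ A : Set (Euc n), isFUB A →
        ∃ S : ℕ → Set (Euc n) → Set (Euc n), (∀ k, S k ∈ 𝓙') ∧
          Tendsto (fun k => volume (sd (S k A) (D A))) atTop (𝓝 0)) :
    ∃ Dk : ℕ → Set (Euc n) → Set (Euc n), (∀ k, Dk k ∈ 𝓙') ∧
      ∃ ψk : ℕ → Euc n → Euc n,
        (∀ k, LipschitzWith 1 (ψk k) ∧
          ∀ (x : Euc n) (r : ℝ), 0 < r →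
            essEq (Dk k (closedBall x r)) (closedBall (ψk k x) r)) ∧
        TendstoUniformlyOn (fun k => ψk k) ψD atTop (closedBall (0 : Euc n) 1) := by
  have main : ∀ ε > 0, ∃ W ∈ 𝓙', ∀ ψ : Euc n → Euc n, LipschitzWith 1 ψ →
      (∀ (x : Euc n) (r : ℝ), 0 < r → essEq (W (closedBall x r)) (closedBall (ψ x) r)) →
      ∀ x ∈ closedBall (0 : Euc n) 1, dist (ψD x) (ψ x) < 5 * ε := by
    intro ε hε
    obtain ⟨t, -, ht, htc⟩ := finite_cover_balls_of_compact
      (isCompact_closedBall (0 : Euc n) 1) hε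
    obtain ⟨W, hW, h⟩ := approx_fin hn u hu D hD hDcyl ψD hψDlip hψD 𝓙' h𝓙'J hweak
      (0 :: ht.toFinset.toList) (by simp) ε hε
    refine ⟨W, hW, fun ψ hψl hψ x hx => ?_⟩
    obtain ⟨p, hp, hxp⟩ := Set.mem_iUnion₂.1 (htc hx)
    have a1 := h ψ hψ p (by simp [hp])
    have a2 := hψl.dist_le_mul p x
    have a3 := hψDlip.dist_le_mul x p
    rw [← dist_eq_norm] at a1
    rw [mem_ball] at hxp
    simp only [NNReal.coe_one, one_mul] at a2 a3
    rw [dist_comm p x] at a2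
    have a4 := dist_triangle4 (ψD x) (ψD p) (ψ p) (ψ x)
    rw [dist_comm (ψD p) (ψ p)] at a4
    linarith
  have hpos : ∀ k : ℕ, (0:ℝ) < 1 / ((k:ℝ) + 1) := fun k => Nat.one_div_pos_of_nat
  choose Dk hDk hDk' using fun k : ℕ => main (1 / ((k:ℝ) + 1)) (hpos k)
  choose ψk hψk using fun k => h𝓙'contr (Dk k) (hDk k)
  refine ⟨Dk, hDk, ψk, hψk, ?_⟩
  rw [Metric.tendstoUniformlyOn_iff]
  intro ε hε
  have ht : Tendsto (fun k : ℕ => 5 * (1 / ((k:ℝ) + 1))) atTop (𝓝 0) := by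
    simpa using (tendsto_one_div_add_atTop_nhds_zero_nat (𝕜 := ℝ)).const_mul 5
  filter_upwards [ht.eventually (eventually_lt_nhds hε)] with k hk x hx
  exact (hDk' k (ψk k) (hψk k).1 (hψk k).2 x hx).trans hk
end
end

section
/- Let n ≥ 2, let 𝓕ⁿₙ ⊂ 𝓔 ⊂ 𝓛ⁿ, let H = u⊥ + t₀u (u a unit vector, t₀ ∈ ℝ) be a hyperplane in ℝⁿ, and let 0 < b < 1. Let ∂ ∈ 𝒥_H(𝓔) be a map whose associated contraction is ψ_∂(x) = x + (b − 1)(⟨x,u⟩ − t₀)u (the Brock set map with parameter b). Then ∂ cannot be weakly approximated on 𝓔 by finite compositions of polarizations; that is, it is not the case that for every A ∈ 𝓔 there exist finite compositions ∂_{A,k} of polarizations (with respect to arbitrary oriented hyperplanes) such that ‖1_{∂_{A,k}A} − 1_{∂A}‖_{L¹} → 0 as k → ∞. -/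
open MeasureTheory Metric Filter Topology
open scoped RealInnerProductSpace

noncomputable section

/-- `D` is a finite composition of polarizations (with respect to arbitrary oriented
hyperplanes). -/
def isPolComp {n : ℕ} (D : Set (Euc n) → Set (Euc n)) : Prop :=
  ∃ l : List (Euc n × ℝ), l ≠ [] ∧ (∀ p ∈ l, ‖p.1‖ = 1) ∧
    D = (l.map fun p => polzn p.1 p.2).foldr (· ∘ ·) id

/-- reflection in the hyperplane -/
def sg {n : ℕ} (v : Euc n) (c : ℝ) (x : Euc n) : Euc n := x - (2 * (⟪x, v⟫ - c)) • v

open Classical in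
/-- folding map -/
def fld {n : ℕ} (v : Euc n) (c : ℝ) (x : Euc n) : Euc n := if c ≤ ⟪x, v⟫ then x else sg v c x

theorem inner_vv {n : ℕ} {v : Euc n} (hv : ‖v‖ = 1) : ⟪v, v⟫ = 1 := by
  rw [real_inner_self_eq_norm_sq, hv]; norm_num

theorem sg_inner {n : ℕ} {v : Euc n} (hv : ‖v‖ = 1) (c : ℝ) (x : Euc n) :
    ⟪sg v c x, v⟫ = 2 * c - ⟪x, v⟫ := by
  simp only [sg, inner_sub_left, real_inner_smul_left, inner_vv hv]; ring

theorem sg_sg {n : ℕ} {v : Euc n} (hv : ‖v‖ = 1) (c : ℝ) (x : Euc n) :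
    sg v c (sg v c x) = x := by
  have h := sg_inner hv c x
  rw [sg, h, sg, sub_sub, ← add_smul]
  ring_nf; simp

theorem sg_cross {n : ℕ} {v : Euc n} (hv : ‖v‖ = 1) (c : ℝ) (x y : Euc n) :
    ‖x - sg v c y‖ ^ 2 = ‖x - y‖ ^ 2 + 4 * (⟪x, v⟫ - c) * (⟪y, v⟫ - c) := by
  have : x - sg v c y = (x - y) + (2 * (⟪y, v⟫ - c)) • v := by rw [sg]; abel
  rw [this, norm_add_sq_real, norm_smul, real_inner_smul_right, inner_sub_left, hv]
  rw [mul_one, Real.norm_eq_abs, sq_abs]; ring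

theorem sg_dist {n : ℕ} {v : Euc n} (hv : ‖v‖ = 1) (c : ℝ) (x y : Euc n) :
    ‖sg v c x - sg v c y‖ = ‖x - y‖ := by
  have h := sg_cross hv c (sg v c x) y
  have h2 := sg_cross hv c y x
  rw [norm_sub_rev, sg_inner hv] at h
  rw [norm_sub_rev (sg v c x) y, h2, norm_sub_rev y x] at h
  rw [norm_sub_rev]
  refine (sq_eq_sq₀ (norm_nonneg _) (norm_nonneg _)).1 ?_
  rw [h]; ring

theorem sg_isom {n : ℕ} {v : Euc n} (hv : ‖v‖ = 1) (c : ℝ) : Isometry (sg v c) :=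
  Isometry.of_dist_eq fun x y => by rw [dist_eq_norm, dist_eq_norm, sg_dist hv]

theorem sg_adj {n : ℕ} {v : Euc n} (hv : ‖v‖ = 1) (c : ℝ) (x y : Euc n) :
    ‖x - sg v c y‖ = ‖sg v c x - y‖ := by
  rw [← sg_dist hv c, sg_sg hv]

theorem fld_lip {n : ℕ} {v : Euc n} (hv : ‖v‖ = 1) (c : ℝ) (x y : Euc n) :
    ‖fld v c x - fld v c y‖ ≤ ‖x - y‖ := by
  unfold fld
  split_ifs with h1 h2 h2
  · exact le_rfl
  · refine le_of_sq_le_sq ?_ (norm_nonneg _)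
    rw [sg_cross hv]; push Not at h2
    nlinarith [mul_nonneg (sub_nonneg.2 h1) (sub_nonneg.2 h2.le)]
  · rw [← sg_adj hv]
    refine le_of_sq_le_sq ?_ (norm_nonneg _)
    rw [sg_cross hv]; push Not at h1
    nlinarith [mul_nonneg (sub_nonneg.2 h2) (sub_nonneg.2 h1.le)]
  · rw [sg_dist hv]

theorem polzn_ball {n : ℕ} {v : Euc n} (hv : ‖v‖ = 1) (c : ℝ) (x : Euc n) (r : ℝ) :
    polzn v c (closedBall x r) ⊆ closedBall (fld v c x) r := by
  intro y hy
  have hy' : (c ≤ ⟪y, v⟫ ∧ (‖y - x‖ ≤ r ∨ ‖sg v c y - x‖ ≤ r)) ∨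
      (⟪y, v⟫ ≤ c ∧ ‖y - x‖ ≤ r ∧ ‖sg v c y - x‖ ≤ r) := by
    simpa [polzn, sg, mem_closedBall, dist_eq_norm] using hy
  have hc := sg_cross hv c y x
  have ha := sg_adj hv c y x
  rw [mem_closedBall, dist_eq_norm]
  unfold fld
  split_ifs with h1
  · rcases hy' with ⟨h, h' | h'⟩ | ⟨h, h', h''⟩
    · exact h'
    · refine le_trans (le_of_sq_le_sq ?_ (norm_nonneg _)) h'
      rw [← ha, hc]
      nlinarith [mul_nonneg (sub_nonneg.2 h) (sub_nonneg.2 h1)]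
    · exact h'
  · push Not at h1
    rcases hy' with ⟨h, h' | h'⟩ | ⟨h, h', h''⟩
    · refine le_trans (le_of_sq_le_sq ?_ (norm_nonneg _)) h'
      rw [hc]
      nlinarith [mul_nonneg (sub_nonneg.2 h) (sub_nonneg.2 h1.le)]
    · rw [ha]; exact h'
    · rw [ha]; exact h''

theorem sg_mp {n : ℕ} {v : Euc n} (hv : ‖v‖ = 1) (c : ℝ) :
    MeasurePreserving (sg v c) volume volume := by
  let e : Euc n ≃ᵢ Euc n :=
    { toFun := sg v c, invFun := sg v c, left_inv := sg_sg hv c, right_inv := sg_sg hv c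
      isometry_toFun := sg_isom hv c }
  have h1 := e.toRealLinearIsometryEquiv.measurePreserving
  have h2 := measurePreserving_add_right (volume : Measure (Euc n)) (e 0)
  have h3 := h2.comp h1
  have : sg v c = (fun x => x + e 0) ∘ e.toRealLinearIsometryEquiv := by
    funext x
    simp [IsometryEquiv.toRealLinearIsometryEquiv_apply, e]
  rw [this]; exact h3

theorem polzn_eq {n : ℕ} (v : Euc n) (c : ℝ) (A : Set (Euc n)) :
    polzn v c A = ({x | c ≤ ⟪x, v⟫} ∩ (A ∪ sg v c ⁻¹' A)) ∪
      ({x | ⟪x, v⟫ ≤ c} ∩ (A ∩ sg v c ⁻¹' A)) := rfl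

theorem polzn_meas {n : ℕ} {v : Euc n} (hv : ‖v‖ = 1) (c : ℝ) {A : Set (Euc n)}
    (hA : MeasurableSet A) : MeasurableSet (polzn v c A) := by
  have h1 : MeasurableSet (sg v c ⁻¹' A) := (sg_isom hv c).continuous.measurable hA
  have hin : Continuous fun x : Euc n => ⟪x, v⟫ := by fun_prop
  rw [polzn_eq]
  exact ((measurableSet_le measurable_const hin.measurable).inter (hA.union h1)).union
    ((measurableSet_le hin.measurable measurable_const).inter (hA.inter h1))

theorem polzn_vol {n : ℕ} {v : Euc n} (hv : ‖v‖ = 1) (c : ℝ) {A : Set (Euc n)}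
    (hA : MeasurableSet A) : volume (polzn v c A) = volume A := by
  have h1 : MeasurableSet (sg v c ⁻¹' A) := (sg_isom hv c).continuous.measurable hA
  have hin : Continuous fun x : Euc n => ⟪x, v⟫ := by fun_prop
  set U : Set (Euc n) := {x | c < ⟪x, v⟫} with hU
  set L : Set (Euc n) := {x | ⟪x, v⟫ < c} with hL
  have mU : MeasurableSet U := measurableSet_lt measurable_const hin.measurable
  have mL : MeasurableSet L := measurableSet_lt hin.measurable measurable_const
  have key : ∀ B : Set (Euc n), volume B = volume (B ∩ U) + (volume (B ∩ L) + volume ((B \ U) \ L)) := by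
    intro B
    rw [← measure_inter_add_sdiff B mU, ← measure_inter_add_sdiff (B \ U) mL]
    congr 3
    ext x
    simp only [hU, hL, Set.mem_inter_iff, Set.mem_sdiff, Set.mem_ofPred_eq]
    constructor
    · rintro ⟨⟨a, b⟩, d⟩; exact ⟨a, d⟩
    · rintro ⟨a, d⟩; exact ⟨⟨a, by linarith⟩, d⟩
  rw [key (polzn v c A), key A]
  have e1 : polzn v c A ∩ U = (A ∩ U) ∪ (sg v c ⁻¹' A ∩ U) := by
    ext x
    simp only [polzn_eq, hU, Set.mem_inter_iff, Set.mem_union, Set.mem_ofPred_eq]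
    constructor
    · rintro ⟨⟨_, h⟩ | ⟨_, h⟩, h'⟩ <;> tauto
    · rintro (⟨h, h'⟩ | ⟨h, h'⟩) <;> have := h'.le <;> tauto
  have e2 : polzn v c A ∩ L = sg v c ⁻¹' ((A ∩ U) ∩ (sg v c ⁻¹' A ∩ U)) := by
    ext x
    simp only [polzn_eq, hU, hL, Set.mem_inter_iff, Set.mem_union, Set.mem_ofPred_eq,
      Set.mem_preimage, sg_sg hv, sg_inner hv]
    constructor
    · rintro ⟨⟨h0, h⟩ | ⟨_, h⟩, h'⟩
      · linarith
      · have : c < 2 * c - ⟪x, v⟫ := by linarith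
        tauto
    · rintro ⟨⟨h, h'⟩, h2, _⟩
      have : ⟪x, v⟫ < c := by linarith
      have := this.le
      tauto
  have e3 : (polzn v c A \ U) \ L = (A \ U) \ L := by
    ext x
    simp only [polzn_eq, hU, hL, Set.mem_inter_iff, Set.mem_union, Set.mem_ofPred_eq,
      Set.mem_preimage, Set.mem_sdiff, not_lt]
    by_cases hx : ⟪x, v⟫ = c
    · have : sg v c x = x := by simp [sg, hx]
      simp [this, hx]
    · constructor
      · rintro ⟨⟨_, h⟩, h'⟩; exact absurd (le_antisymm h h') hx
      · rintro ⟨⟨_, h⟩, h'⟩; exact absurd (le_antisymm h h') hx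
  have e4 : sg v c ⁻¹' A ∩ U = sg v c ⁻¹' (A ∩ L) := by
    ext x
    simp only [hU, hL, Set.mem_inter_iff, Set.mem_ofPred_eq, Set.mem_preimage, sg_inner hv]
    refine and_congr_right fun _ => ?_
    constructor <;> intro h <;> linarith
  have m1 : MeasurableSet (sg v c ⁻¹' A ∩ U) := h1.inter mU
  rw [e3, e2, (sg_mp hv c).measure_preimage ((hA.inter mU).inter m1).nullMeasurableSet, ← add_assoc,
    ← add_assoc, e1, measure_union_add_inter _ m1, e4,
    (sg_mp hv c).measure_preimage (hA.inter mL).nullMeasurableSet]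

/-- composition of foldings -/
def FL {n : ℕ} (l : List (Euc n × ℝ)) : Euc n → Euc n :=
  (l.map fun p => fld p.1 p.2).foldr (· ∘ ·) id

/-- composition of polarizations -/
def PL {n : ℕ} (l : List (Euc n × ℝ)) : Set (Euc n) → Set (Euc n) :=
  (l.map fun p => polzn p.1 p.2).foldr (· ∘ ·) id

theorem FL_cons {n : ℕ} (p : Euc n × ℝ) (l : List (Euc n × ℝ)) (x : Euc n) :
    FL (p :: l) x = fld p.1 p.2 (FL l x) := rfl

theorem PL_cons {n : ℕ} (p : Euc n × ℝ) (l : List (Euc n × ℝ)) (A : Set (Euc n)) :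
    PL (p :: l) A = polzn p.1 p.2 (PL l A) := rfl

theorem FL_lip {n : ℕ} (l : List (Euc n × ℝ)) (hl : ∀ p ∈ l, ‖p.1‖ = 1) (x y : Euc n) :
    ‖FL l x - FL l y‖ ≤ ‖x - y‖ := by
  induction l with
  | nil => exact le_rfl
  | cons p l ih =>
    rw [FL_cons, FL_cons]
    exact (fld_lip (hl p (by simp)) _ _ _).trans (ih fun q hq => hl q (by simp [hq]))

theorem PL_mono {n : ℕ} (l : List (Euc n × ℝ)) {A B : Set (Euc n)} (h : A ⊆ B) :
    PL l A ⊆ PL l B := by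
  induction l with
  | nil => exact h
  | cons p l ih => exact polzn_mono _ _ ih

theorem PL_ball {n : ℕ} (l : List (Euc n × ℝ)) (hl : ∀ p ∈ l, ‖p.1‖ = 1) (x : Euc n) (r : ℝ) :
    PL l (closedBall x r) ⊆ closedBall (FL l x) r := by
  induction l with
  | nil => exact subset_rfl
  | cons p l ih =>
    rw [FL_cons, PL_cons]
    exact (polzn_mono _ _ (ih fun q hq => hl q (by simp [hq]))).trans
      (polzn_ball (hl p (by simp)) _ _ _)

theorem PL_vol {n : ℕ} (l : List (Euc n × ℝ)) (hl : ∀ p ∈ l, ‖p.1‖ = 1) {A : Set (Euc n)}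
    (hA : MeasurableSet A) : MeasurableSet (PL l A) ∧ volume (PL l A) = volume A := by
  induction l with
  | nil => exact ⟨hA, rfl⟩
  | cons p l ih =>
    obtain ⟨h1, h2⟩ := ih fun q hq => hl q (by simp [hq])
    rw [PL_cons]
    exact ⟨polzn_meas (hl p (by simp)) _ h1, (polzn_vol (hl p (by simp)) _ h1).trans h2⟩

theorem fld_neg {n : ℕ} {v : Euc n} (hv : ‖v‖ = 1) (c : ℝ) (x : Euc n) :
    fld (-v) (-c) x = sg v c (fld v c x) := by
  have e : sg (-v) (-c) x = sg v c x := by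
    simp only [sg, inner_neg_right]
    rw [smul_neg, ← neg_smul]; congr 2; ring
  unfold fld
  rw [inner_neg_right, e]
  split_ifs with h1 h2 h2
  · have : ⟪x, v⟫ = c := by linarith
    simp [sg, this]
  · rw [sg_sg hv]
  · rfl
  · exfalso; linarith

set_option maxHeartbeats 2000000 in
theorem core_aux {n : ℕ} {b : ℝ} (hb0 : 0 < b) (hb1 : b < 1) {v : Euc n} (hv : ‖v‖ = 1) (c : ℝ)
    (o : Euc n) (g : Euc n → Euc n) (hg : ∀ x y, ‖g x - g y‖ ≤ ‖x - y‖)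
    (hid : ∀ x, ‖x - o‖ ≤ 1 - b / 2 → g x = x)
    (hlow : ∀ x y, ‖x - o‖ ≤ 1 → ‖y - o‖ ≤ 1 →
      b * ‖x - y‖ - b ^ 2 / 8 ≤ ‖fld v c (g x) - fld v c (g y)‖)
    (hk0 : 0 ≤ ⟪o, v⟫ - c) (hk1 : ⟪o, v⟫ - c < 1 - b / 2) : False := by
  obtain ⟨k, hk⟩ : ∃ k, k = ⟪o, v⟫ - c := ⟨_, rfl⟩
  rw [← hk] at hk0 hk1
  obtain ⟨ρ, hρ⟩ : ∃ ρ, ρ = 1 - b / 2 := ⟨_, rfl⟩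
  rw [← hρ] at hk1 hid
  have hvv := inner_vv hv
  have hns : ∀ t : ℝ, ‖o + t • v - o‖ = |t| := by
    intro t; rw [add_sub_cancel_left, norm_smul, hv, mul_one, Real.norm_eq_abs]
  have hin : ∀ t : ℝ, ⟪o + t • v, v⟫ = k + c + t := by
    intro t; rw [inner_add_left, real_inner_smul_left, hvv, hk]; ring
  -- symmetric pair
  have h1 : 2 * (ρ - k) ≤ b / 8 := by
    have g1 := hid (o + (-ρ) • v) (by rw [hns, abs_neg, abs_of_nonneg]; linarith)
    have g2 := hid (o + (ρ - 2 * k) • v) (by rw [hns, abs_le]; constructor <;> linarith)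
    have hl := hlow (o + (-ρ) • v) (o + (ρ - 2 * k) • v)
      (by rw [hns, abs_neg, abs_of_nonneg] <;> linarith)
      (by rw [hns, abs_le]; constructor <;> linarith)
    rw [g1, g2] at hl
    have f1 : fld v c (o + (-ρ) • v) = o + (ρ - 2 * k) • v := by
      unfold fld
      rw [if_neg (by rw [hin]; push Not; linarith), sg, hin, add_sub_assoc, ← sub_smul]
      congr 2; ring
    have f2 : fld v c (o + (ρ - 2 * k) • v) = o + (ρ - 2 * k) • v := by
      unfold fld
      rw [if_pos (by rw [hin]; linarith)]
    have e : o + (-ρ) • v - (o + (ρ - 2 * k) • v) = (-(2 * (ρ - k))) • v := by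
      rw [add_sub_add_left_eq_sub, ← sub_smul]; congr 1; ring
    rw [f1, f2, sub_self, norm_zero, e, norm_smul, hv, mul_one, Real.norm_eq_abs, abs_neg,
      abs_of_nonneg (by linarith)] at hl
    by_contra hcon
    push Not at hcon
    nlinarith
  -- outer point
  have gp := hid (o + (-ρ) • v) (by rw [hns, abs_neg, abs_of_nonneg]; linarith)
  obtain ⟨w, hw⟩ : ∃ w, w = g (o + (-1 : ℝ) • v) := ⟨_, rfl⟩
  have hw1 : ‖w - (o + (-ρ) • v)‖ ≤ b / 2 := by
    have := hg (o + (-1 : ℝ) • v) (o + (-ρ) • v)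
    rw [gp, ← hw, add_sub_add_left_eq_sub, ← sub_smul, norm_smul, hv, mul_one, Real.norm_eq_abs]
      at this
    refine this.trans ?_
    rw [abs_le]; constructor <;> linarith
  obtain ⟨s, hs⟩ : ∃ s, s = -⟪w - o, v⟫ := ⟨_, rfl⟩
  have hwv : ⟪w, v⟫ = k + c - s := by rw [hs, inner_sub_left, hk]; ring
  have hnw : ‖w - o‖ ^ 2 ≤ (b / 2) ^ 2 + s ^ 2 - (s - ρ) ^ 2 := by
    have : w - (o + (-ρ) • v) = (w - o) + ρ • v := by rw [neg_smul]; abel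
    rw [this] at hw1
    have h2 : ‖w - o + ρ • v‖ ^ 2 ≤ (b / 2) ^ 2 := by
      have := norm_nonneg (w - o + ρ • v)
      gcongr
    rw [norm_add_sq_real, norm_smul, real_inner_smul_right, hv, mul_one, Real.norm_eq_abs,
      sq_abs] at h2
    have : ⟪w - o, v⟫ = -s := by rw [hs]; ring
    rw [this] at h2
    nlinarith
  have hsl : |s| ≤ ‖w - o‖ := by
    rw [hs, abs_neg]
    have := abs_real_inner_le_norm (w - o) v
    rwa [hv, mul_one] at this
  have hsl2 : s ^ 2 ≤ ‖w - o‖ ^ 2 := by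
    rw [← sq_abs]; gcongr
  have hsρ : |s - ρ| ≤ b / 2 := by
    apply abs_le_of_sq_le_sq _ (by linarith)
    linarith
  rw [abs_le] at hsρ
  -- folded point
  obtain ⟨q, hq⟩ : ∃ q, q = fld v c w := ⟨_, rfl⟩
  have hq2 : ∃ s', s' ≤ k ∧ -ρ ≤ s' ∧ ⟪q - o, v⟫ = -s' ∧
      ‖q - o‖ ^ 2 = ‖w - o‖ ^ 2 - s ^ 2 + s' ^ 2 := by
    rw [hq]
    unfold fld
    split_ifs with h
    · exact ⟨s, by linarith, by linarith, by rw [hs]; ring, by ring⟩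
    · push Not at h
      refine ⟨2 * k - s, by linarith, by linarith, ?_, ?_⟩
      · rw [inner_sub_left, sg_inner hv, hwv, ]; linarith
      · rw [norm_sub_rev, sg_cross hv, norm_sub_rev, hwv, ← hk]; ring
  obtain ⟨s', hs1, hs2, hs3, hs4⟩ := hq2
  have hs5 : s' ^ 2 ≤ ρ ^ 2 := by
    apply sq_le_sq'  <;> linarith
  have hqn : ‖q - o‖ ^ 2 ≤ ρ ^ 2 + (b / 2) ^ 2 := by
    nlinarith [sq_nonneg (s - ρ)]
  have hqn2 : ‖q - o‖ ≤ ρ + (b / 2) ^ 2 := by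
    apply le_of_sq_le_sq _ (by nlinarith)
    have : (1 : ℝ) / 2 ≤ ρ := by linarith
    nlinarith [sq_nonneg ((b / 2) ^ 2), sq_nonneg (b / 2)]
  -- nearest point
  have hz : ∃ z, ‖z - o‖ ≤ ρ ∧ c ≤ ⟪z, v⟫ ∧ ‖q - z‖ ≤ (b / 2) ^ 2 := by
    by_cases h : ‖q - o‖ ≤ ρ
    · refine ⟨q, h, ?_, by simp; positivity⟩
      rw [inner_sub_left] at hs3
      linarith
    · push Not at h
      have hρ0 : 0 < ρ := by linarith
      have hpos : 0 < ‖q - o‖ := hρ0.trans h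
      have hl1 : ρ / ‖q - o‖ ≤ 1 := by rw [div_le_one hpos]; exact h.le
      have hl0 : 0 ≤ ρ / ‖q - o‖ := by positivity
      refine ⟨o + (ρ / ‖q - o‖) • (q - o), ?_, ?_, ?_⟩
      · rw [add_sub_cancel_left, norm_smul, Real.norm_eq_abs, abs_of_nonneg hl0,
          div_mul_cancel₀ _ hpos.ne']
      · rw [inner_add_left, real_inner_smul_left, hs3]
        have : ⟪o, v⟫ = k + c := by rw [hk]; ring
        rw [this]
        nlinarith
      · have : q - (o + (ρ / ‖q - o‖) • (q - o)) = (1 - ρ / ‖q - o‖) • (q - o) := by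
          rw [sub_smul, one_smul]; abel
        rw [this, norm_smul, Real.norm_eq_abs, abs_of_nonneg (by linarith), sub_mul,
          div_mul_cancel₀ _ hpos.ne']
        linarith
  obtain ⟨z, hz1, hz2, hz3⟩ := hz
  have hl := hlow (o + (-1 : ℝ) • v) z (by rw [hns]; simp) (by linarith)
  rw [← hw, ← hq, hid z hz1] at hl
  have : fld v c z = z := by unfold fld; rw [if_pos hz2]
  rw [this] at hl
  have hd : b / 2 ≤ ‖o + (-1 : ℝ) • v - z‖ := by
    have h1 := norm_sub_norm_le (o + (-1 : ℝ) • v - o) (z - o)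
    rw [hns, sub_sub_sub_cancel_right] at h1
    norm_num at h1
    norm_num
    linarith
  nlinarith

theorem core {n : ℕ} {b : ℝ} (hb0 : 0 < b) (hb1 : b < 1) {v : Euc n} (hv : ‖v‖ = 1) (c : ℝ)
    (o : Euc n) (g : Euc n → Euc n) (hg : ∀ x y, ‖g x - g y‖ ≤ ‖x - y‖)
    (hid : ∀ x, ‖x - o‖ ≤ 1 - b / 2 → g x = x)
    (hlow : ∀ x y, ‖x - o‖ ≤ 1 → ‖y - o‖ ≤ 1 →
      b * ‖x - y‖ - b ^ 2 / 8 ≤ ‖fld v c (g x) - fld v c (g y)‖) :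
    (∀ x, ‖x - o‖ ≤ 1 - b / 2 → fld v c (g x) = x) ∨
    (∀ x, ‖x - o‖ ≤ 1 - b / 2 → fld v c (g x) = sg v c x) := by
  have hxo : ∀ x : Euc n, |⟪x, v⟫ - ⟪o, v⟫| ≤ ‖x - o‖ := by
    intro x
    have := abs_real_inner_le_norm (x - o) v
    rwa [hv, mul_one, inner_sub_left] at this
  rcases le_or_gt 0 (⟪o, v⟫ - c) with h0 | h0
  · rcases lt_or_ge (⟪o, v⟫ - c) (1 - b / 2) with h1 | h1
    · exact (core_aux hb0 hb1 hv c o g hg hid hlow h0 h1).elim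
    · left
      intro x hx
      rw [hid x hx]
      unfold fld
      have := (abs_le.1 ((hxo x).trans hx)).1
      rw [if_pos (by linarith)]
  · rcases lt_or_ge (c - ⟪o, v⟫) (1 - b / 2) with h1 | h1
    · refine (core_aux hb0 hb1 (v := -v) (by rw [norm_neg, hv]) (-c) o g hg hid ?_ ?_ ?_).elim
      · intro x y hx hy
        rw [fld_neg hv, fld_neg hv, sg_dist hv]
        exact hlow x y hx hy
      · rw [inner_neg_right]; linarith
      · rw [inner_neg_right]; linarith
    · right
      intro x hx
      rw [hid x hx]
      unfold fld
      have := (abs_le.1 ((hxo x).trans hx)).2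
      split_ifs with h
      · have : ⟪x, v⟫ = c := by linarith
        simp [sg, this]
      · rfl

/-- reflection as an isometry -/
def sgE {n : ℕ} {v : Euc n} (hv : ‖v‖ = 1) (c : ℝ) : Euc n ≃ᵢ Euc n :=
  { toFun := sg v c, invFun := sg v c, left_inv := sg_sg hv c, right_inv := sg_sg hv c
    isometry_toFun := sg_isom hv c }

theorem rigid {n : ℕ} {b : ℝ} (hb0 : 0 < b) (hb1 : b < 1) (l : List (Euc n × ℝ))
    (hl : ∀ p ∈ l, ‖p.1‖ = 1)
    (hlow : ∀ x y : Euc n, ‖x‖ ≤ 1 → ‖y‖ ≤ 1 →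
      b * ‖x - y‖ - b ^ 2 / 8 ≤ ‖FL l x - FL l y‖) :
    ∃ T : Euc n ≃ᵢ Euc n, ∀ x, ‖x‖ ≤ 1 - b / 2 → FL l x = T x := by
  induction l with
  | nil => exact ⟨IsometryEquiv.refl _, fun x _ => rfl⟩
  | cons p l ih =>
    have hp : ‖p.1‖ = 1 := hl p (by simp)
    have hl' : ∀ q ∈ l, ‖q.1‖ = 1 := fun q hq => hl q (by simp [hq])
    obtain ⟨T, hT⟩ := ih hl' fun x y hx hy =>
      (hlow x y hx hy).trans (fld_lip hp _ _ _)
    have hTs : ∀ x y, ‖T.symm x - T.symm y‖ = ‖x - y‖ := fun x y => by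
      rw [← dist_eq_norm, T.symm.dist_eq, dist_eq_norm]
    have hTs0 : ∀ x, ‖T.symm x‖ = ‖x - T 0‖ := fun x => by
      rw [← hTs, T.symm_apply_apply, sub_zero]
    have hT0 : ∀ x, ‖T x - T 0‖ = ‖x‖ := fun x => by
      rw [← hTs0, T.symm_apply_apply]
    rcases core hb0 hb1 hp p.2 (T 0) (fun x => FL l (T.symm x))
      (fun x y => by
        have := FL_lip l hl' (T.symm x) (T.symm y)
        rwa [hTs] at this)
      (fun x hx => by
        rw [hT _ (by rw [hTs0]; exact hx), T.apply_symm_apply])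
      (fun x y hx hy => by
        have := hlow (T.symm x) (T.symm y) (by rw [hTs0]; exact hx) (by rw [hTs0]; exact hy)
        rwa [hTs] at this) with h | h
    · refine ⟨T, fun x hx => ?_⟩
      have := h (T x) (by rw [hT0]; exact hx)
      rwa [T.symm_apply_apply] at this
    · refine ⟨T.trans (sgE hp p.2), fun x hx => ?_⟩
      have := h (T x) (by rw [hT0]; exact hx)
      rwa [T.symm_apply_apply] at this

theorem not_close {n : ℕ} {b : ℝ} (hb0 : 0 < b) (hb1 : b < 1) (u : Euc n) (hu : ‖u‖ = 1) (t₀ : ℝ)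
    (l : List (Euc n × ℝ)) (hl : ∀ p ∈ l, ‖p.1‖ = 1) (η : ℝ) (h1 : η ≤ b ^ 2 / 16)
    (h2 : η ≤ (1 - b) / 4)
    (hc : ∀ x : Euc n, ‖x‖ ≤ 1 → ‖FL l x - (x + ((b - 1) * (⟪x, u⟫ - t₀)) • u)‖ ≤ η) : False := by
  have hψ : ∀ x y : Euc n, (x + ((b - 1) * (⟪x, u⟫ - t₀)) • u) - (y + ((b - 1) * (⟪y, u⟫ - t₀)) • u)
      = (x - y) + ((b - 1) * ⟪x - y, u⟫) • u := by
    intro x y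
    have : (b - 1) * ⟪x - y, u⟫ = (b - 1) * (⟪x, u⟫ - t₀) - (b - 1) * (⟪y, u⟫ - t₀) := by
      rw [inner_sub_left]; ring
    rw [this, sub_smul]; abel
  have hψl : ∀ d : Euc n, b * ‖d‖ ≤ ‖d + ((b - 1) * ⟪d, u⟫) • u‖ := by
    intro d
    refine le_of_sq_le_sq ?_ (norm_nonneg _)
    rw [norm_add_sq_real, norm_smul, real_inner_smul_right, hu, mul_one, Real.norm_eq_abs, sq_abs]
    have h3 : ⟪d, u⟫ ^ 2 ≤ ‖d‖ ^ 2 := by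
      have := abs_real_inner_le_norm d u
      rw [hu, mul_one] at this
      rw [← sq_abs]; gcongr
    nlinarith [mul_nonneg (sub_nonneg.2 h3) (show 0 ≤ 1 - b ^ 2 by nlinarith)]
  have tri : ∀ a a' c c' : Euc n, ‖a - a'‖ ≤ η → ‖c - c'‖ ≤ η →
      ‖a - c‖ ≤ ‖a' - c'‖ + 2 * η := by
    intro a a' c c' h h'
    have : a - c = (a' - c') + (a - a') - (c - c') := by abel
    rw [this]
    have := norm_sub_le (a' - c' + (a - a')) (c - c')
    have := norm_add_le (a' - c') (a - a')
    linarith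
  obtain ⟨T, hT⟩ := rigid hb0 hb1 l hl fun x y hx hy => by
    have := tri _ _ _ _ (by rw [norm_sub_rev]; exact hc x hx) (by rw [norm_sub_rev]; exact hc y hy)
    rw [hψ] at this
    have := hψl (x - y)
    linarith
  have hx : ‖(1 - b / 2) • u‖ = 1 - b / 2 := by
    rw [norm_smul, hu, Real.norm_eq_abs, abs_of_nonneg (by linarith), mul_one]
  have e := tri _ _ _ _ (hc ((1 - b / 2) • u) (by rw [hx]; linarith))
    (hc (0 : Euc n) (by simp))
  rw [hψ, hT _ hx.le, hT 0 (by rw [norm_zero]; linarith), ← dist_eq_norm, T.dist_eq, dist_eq_norm,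
    sub_zero, hx, real_inner_smul_left, inner_vv hu, ← add_smul, norm_smul, hu, Real.norm_eq_abs,
    show 1 - b / 2 + (b - 1) * ((1 - b / 2) * 1) = b * (1 - b / 2) by ring,
    abs_of_nonneg (by nlinarith)] at e
  nlinarith

theorem exists_perp {n : ℕ} (hn : 2 ≤ n) (u : Euc n) (hu : ‖u‖ = 1) :
    ∃ e : Euc n, ‖e‖ = 1 ∧ ⟪e, u⟫ = 0 := by
  obtain ⟨k, rfl⟩ : ∃ k, n = k + 1 := ⟨n - 1, by omega⟩
  have : Fact (Module.finrank ℝ (Euc (k + 1)) = k + 1) := ⟨by simp⟩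
  have hu0 : u ≠ 0 := by intro h; rw [h] at hu; simp at hu
  have h := Submodule.finrank_orthogonal_span_singleton (𝕜 := ℝ) (n := k) hu0
  have : Nontrivial (Submodule.orthogonal (Submodule.span ℝ {u})) :=
    Module.nontrivial_of_finrank_pos (R := ℝ) (by omega)
  obtain ⟨⟨w, hw⟩, hw0⟩ := exists_ne (0 : (Submodule.orthogonal (Submodule.span ℝ {u})))
  have hw0' : w ≠ 0 := by intro h; apply hw0; ext1; exact h
  refine ⟨(‖w‖⁻¹ : ℝ) • w, ?_, ?_⟩
  · rw [norm_smul, norm_inv, norm_norm, inv_mul_cancel₀ (norm_ne_zero_iff.2 hw0')]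
  · rw [real_inner_smul_left, real_inner_comm, Submodule.mem_orthogonal_singleton_iff_inner_right.1 hw,
      mul_zero]

/-- pair of test balls -/
def CC {n : ℕ} (e : Euc n) (x : ℕ → Euc n) (θ : ℝ) (i : ℕ) : Set (Euc n) :=
  closedBall (x i + (4 * ((i : ℝ) + 1)) • e) (θ ^ (i + 1)) ∪
  closedBall (x i - (4 * ((i : ℝ) + 1)) • e) (θ ^ (i + 1))

theorem CC_sub {n : ℕ} {e : Euc n} (he : ‖e‖ = 1) {x : ℕ → Euc n} (hx : ∀ i, ‖x i‖ ≤ 1) {θ : ℝ}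
    (h0 : 0 < θ) (h1 : θ ≤ 1) {i j : ℕ} (hij : j ≤ i) :
    CC e x θ j ⊆ closedBall (x i) (4 * ((i : ℝ) + 1) + θ ^ (i + 1)) := by
  have hn : ‖(4 * ((j : ℝ) + 1)) • e‖ = 4 * ((j : ℝ) + 1) := by
    rw [norm_smul, he, mul_one, Real.norm_eq_abs, abs_of_nonneg (by positivity)]
  have hθi : 0 < θ ^ (i + 1) := by positivity
  have hθj : θ ^ (j + 1) ≤ 1 := pow_le_one₀ h0.le h1
  have hd := norm_sub_le (x j) (x i)
  have := hx i
  have := hx j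
  rcases hij.lt_or_eq with h | rfl
  · have h' : (j : ℝ) + 1 ≤ i := by exact_mod_cast h
    refine Set.union_subset (closedBall_subset_closedBall' ?_) (closedBall_subset_closedBall' ?_)
    · rw [dist_eq_norm, show x j + (4 * ((j : ℝ) + 1)) • e - x i
        = (x j - x i) + (4 * ((j : ℝ) + 1)) • e by abel]
      have := norm_add_le (x j - x i) ((4 * ((j : ℝ) + 1)) • e)
      linarith
    · rw [dist_eq_norm, show x j - (4 * ((j : ℝ) + 1)) • e - x i
        = (x j - x i) - (4 * ((j : ℝ) + 1)) • e by abel]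
      have := norm_sub_le (x j - x i) ((4 * ((j : ℝ) + 1)) • e)
      linarith
  · refine Set.union_subset (closedBall_subset_closedBall' ?_) (closedBall_subset_closedBall' ?_)
    · rw [dist_eq_norm, add_sub_cancel_left, hn]; linarith
    · rw [dist_eq_norm, sub_sub_cancel_left, norm_neg, hn]; linarith

theorem isFUB_CC {n : ℕ} (e : Euc n) (x : ℕ → Euc n) {θ : ℝ} (h0 : 0 < θ) {m : ℕ} (hm : 0 < m) :
    isFUB (⋃ i ∈ Finset.range m, CC e x θ i) := by
  refine ⟨(List.range m).flatMap fun i =>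
    [(x i + (4 * ((i : ℝ) + 1)) • e, θ ^ (i + 1)), (x i - (4 * ((i : ℝ) + 1)) • e, θ ^ (i + 1))],
    ?_, ?_, ?_⟩
  · intro h
    rw [List.flatMap_eq_nil_iff] at h
    exact absurd (h 0 (List.mem_range.2 hm)) (by simp)
  · intro p hp
    rw [List.mem_flatMap] at hp
    obtain ⟨i, _, hi⟩ := hp
    simp only [List.mem_cons, List.not_mem_nil, or_false] at hi
    rcases hi with rfl | rfl <;> exact pow_pos h0 _
  · ext y
    simp only [Set.mem_iUnion, List.mem_flatMap, Finset.mem_range, List.mem_range, CC,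
      Set.mem_union, exists_prop, List.mem_cons, List.not_mem_nil, or_false]
    constructor
    · rintro ⟨i, hi, h | h⟩
      · exact ⟨_, ⟨i, hi, Or.inl rfl⟩, h⟩
      · exact ⟨_, ⟨i, hi, Or.inr rfl⟩, h⟩
    · rintro ⟨p, ⟨i, hi, rfl | rfl⟩, h⟩
      · exact ⟨i, hi, Or.inl h⟩
      · exact ⟨i, hi, Or.inr h⟩

theorem isFUB_ball {n : ℕ} (x : Euc n) {r : ℝ} (h : 0 < r) : isFUB (closedBall x r) :=
  ⟨[(x, r)], by simp, by simpa using h, by simp⟩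

theorem vol_step {n : ℕ} (hn : 2 ≤ n) {θ : ℝ} (h0 : 0 < θ) {m : ℕ} (hm : 0 < m)
    (h1 : θ ≤ 1 / (4 * m)) (i : ℕ) :
    3 * (m : ENNReal) * volume (closedBall (0 : Euc n) (θ ^ (i + 1 + 1))) <
      volume (closedBall (0 : Euc n) (θ ^ (i + 1))) := by
  have hV0 : volume (closedBall (0 : Euc n) (θ ^ (i + 1))) ≠ 0 :=
    (measure_closedBall_pos _ _ (by positivity)).ne'
  have hVt : volume (closedBall (0 : Euc n) (θ ^ (i + 1))) ≠ ⊤ := measure_closedBall_lt_top.ne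
  have hm1 : (1 : ℝ) ≤ m := by exact_mod_cast hm
  have hθ1 : θ ≤ 1 := h1.trans (by rw [div_le_one (by positivity)]; linarith)
  rw [pow_succ' θ (i + 1), Measure.addHaar_closedBall_mul _ _ h0.le (by positivity), ← mul_assoc]
  have hlt : 3 * (m : ENNReal) * ENNReal.ofReal (θ ^ Module.finrank ℝ (Euc n)) < 1 := by
    have e : 3 * (m : ENNReal) = ENNReal.ofReal (3 * m) := by
      rw [ENNReal.ofReal_mul (by norm_num), ENNReal.ofReal_natCast]; norm_num
    rw [e, ← ENNReal.ofReal_mul (by positivity), ENNReal.ofReal_lt_one, finrank_euclideanSpace_fin]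
    have h2 : θ ^ n ≤ θ := pow_le_of_le_one h0.le hθ1 (by omega)
    have h3 : θ * (4 * m) ≤ 1 := by rwa [le_div_iff₀ (by positivity)] at h1
    nlinarith
  calc _ < 1 * volume (closedBall (0 : Euc n) (θ ^ (i + 1))) :=
        (ENNReal.mul_lt_mul_iff_left hV0 hVt).2 hlt
    _ = _ := one_mul _

theorem vol_CC {n : ℕ} (e : Euc n) (x : ℕ → Euc n) (θ : ℝ) (i : ℕ) :
    volume (CC e x θ i) ≤ 2 * volume (closedBall (0 : Euc n) (θ ^ (i + 1))) := by
  refine (measure_union_le _ _).trans ?_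
  rw [Measure.addHaar_closedBall_center, Measure.addHaar_closedBall_center volume (x i - _), two_mul]

theorem vol_hi {n : ℕ} (e : Euc n) (x : ℕ → Euc n) {θ : ℝ} (h0 : 0 < θ) (h1 : θ ≤ 1) (i m : ℕ) :
    volume (⋃ j ∈ Finset.Ico (i + 1) m, CC e x θ j) ≤
      2 * (m : ENNReal) * volume (closedBall (0 : Euc n) (θ ^ (i + 1 + 1))) := by
  refine (measure_biUnion_finset_le _ _).trans ?_
  have : ∀ j ∈ Finset.Ico (i + 1) m, volume (CC e x θ j) ≤
      2 * volume (closedBall (0 : Euc n) (θ ^ (i + 1 + 1))) := by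
    intro j hj
    refine (vol_CC e x θ j).trans ?_
    refine mul_le_mul_right (measure_mono (closedBall_subset_closedBall ?_)) _
    exact pow_le_pow_of_le_one h0.le h1 (by have := (Finset.mem_Ico.1 hj).1; omega)
  refine (Finset.sum_le_card_nsmul _ _ _ this).trans ?_
  rw [nsmul_eq_mul, Nat.card_Ico, mul_comm 2 (m : ENNReal), mul_assoc]
  gcongr
  omega

theorem meas_CC {n : ℕ} (e : Euc n) (x : ℕ → Euc n) (θ : ℝ) (i : ℕ) :
    MeasurableSet (CC e x θ i) := by
  unfold CC
  exact measurableSet_closedBall.union measurableSet_closedBall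

theorem hit {n : ℕ} (hn : 2 ≤ n) {e : Euc n} (he : ‖e‖ = 1) {x : ℕ → Euc n}
    (hx : ∀ i, ‖x i‖ ≤ 1) {θ : ℝ} (h0 : 0 < θ) {m : ℕ} (hm : 0 < m) (h1 : θ ≤ 1 / (4 * m))
    (DA : Set (Euc n)) (l : List (Euc n × ℝ)) (hl : ∀ p ∈ l, ‖p.1‖ = 1)
    (hclose : volume (sd (PL l (⋃ i ∈ Finset.range m, CC e x θ i)) DA) <
      volume (closedBall (0 : Euc n) (θ ^ (m + 1))))
    (i : ℕ) (hi : i < m) (y : Euc n)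
    (hy : volume (closedBall y (θ ^ (i + 1)) \ DA) = 0) :
    ‖y - FL l (x i)‖ ≤ 4 * ((i : ℝ) + 1) + 2 * θ ^ (i + 1) := by
  have hm1 : (1 : ℝ) ≤ m := by exact_mod_cast hm
  have hθ1 : θ ≤ 1 := h1.trans (by rw [div_le_one (by positivity)]; linarith)
  set A := ⋃ i ∈ Finset.range m, CC e x θ i with hA
  set A1 := ⋃ j ∈ Finset.range (i + 1), CC e x θ j with hA1
  have mA : MeasurableSet A := Finset.measurableSet_biUnion _ fun j _ => meas_CC e x θ j
  have mA1 : MeasurableSet A1 := Finset.measurableSet_biUnion _ fun j _ => meas_CC e x θ j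
  have hA1A : A1 ⊆ A := by
    refine Set.biUnion_subset_biUnion_left ?_
    intro j hj
    have hj' : j < i + 1 := by simpa using hj
    simpa using (show j < m by omega)
  have hA1Q : A1 ⊆ closedBall (x i) (4 * ((i : ℝ) + 1) + θ ^ (i + 1)) :=
    Set.iUnion₂_subset fun j hj => CC_sub he hx h0 hθ1 (by have := Finset.mem_range.1 hj; omega)
  obtain ⟨Q, hQ⟩ : ∃ Q, Q = closedBall (FL l (x i)) (4 * ((i : ℝ) + 1) + θ ^ (i + 1)) := ⟨_, rfl⟩
  have hPQ : PL l A1 ⊆ Q := hQ ▸ (PL_mono l hA1Q).trans (PL_ball l hl _ _)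
  obtain ⟨mP, vP⟩ := PL_vol l hl mA
  obtain ⟨mP1, vP1⟩ := PL_vol l hl mA1
  have fA1 : volume A1 ≠ ⊤ := ((measure_mono hA1Q).trans_lt measure_closedBall_lt_top).ne
  have hAA1 : A \ A1 ⊆ ⋃ j ∈ Finset.Ico (i + 1) m, CC e x θ j := by
    rintro z ⟨hz, hz1⟩
    simp only [hA, hA1, Set.mem_iUnion, Finset.mem_range, not_exists] at hz hz1
    obtain ⟨j, hj, hzj⟩ := hz
    simp only [Set.mem_iUnion, Finset.mem_Ico]
    refine ⟨j, ⟨?_, hj⟩, hzj⟩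
    by_contra hcon
    exact hz1 j (by omega) hzj
  have hPQvol : volume (PL l A \ Q) ≤
      2 * (m : ENNReal) * volume (closedBall (0 : Euc n) (θ ^ (i + 1 + 1))) := by
    calc volume (PL l A \ Q) ≤ volume (PL l A \ PL l A1) :=
          measure_mono (Set.sdiff_subset_sdiff_right hPQ)
      _ = volume (A \ A1) := by
          rw [measure_sdiff (PL_mono l hA1A) mP1.nullMeasurableSet (by rw [vP1]; exact fA1), vP, vP1,
            measure_sdiff hA1A mA1.nullMeasurableSet fA1]
      _ ≤ _ := (measure_mono hAA1).trans (vol_hi e x h0 hθ1 i m)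
  have hne : (closedBall y (θ ^ (i + 1)) ∩ Q).Nonempty := by
    by_contra hcon
    rw [Set.not_nonempty_iff_eq_empty] at hcon
    have hsub : closedBall y (θ ^ (i + 1)) ⊆
        (closedBall y (θ ^ (i + 1)) \ DA) ∪ (sd (PL l A) DA ∪ (PL l A \ Q)) := by
      intro z hz
      have hzQ : z ∉ Q := fun h => by
        have : z ∈ closedBall y (θ ^ (i + 1)) ∩ Q := ⟨hz, h⟩
        rw [hcon] at this; exact this
      by_cases hzD : z ∈ DA
      · by_cases hzP : z ∈ PL l A
        · exact Or.inr (Or.inr ⟨hzP, hzQ⟩)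
        · exact Or.inr (Or.inl (Or.inr ⟨hzD, hzP⟩))
      · exact Or.inl ⟨hz, hzD⟩
    have hv : volume (closedBall y (θ ^ (i + 1))) ≤
        volume (sd (PL l A) DA) + volume (PL l A \ Q) := by
      refine (measure_mono hsub).trans ((measure_union_le _ _).trans ?_)
      rw [hy, zero_add]
      exact measure_union_le _ _
    have hε : volume (sd (PL l A) DA) ≤
        (m : ENNReal) * volume (closedBall (0 : Euc n) (θ ^ (i + 1 + 1))) := by
      refine hclose.le.trans ?_
      calc _ ≤ 1 * volume (closedBall (0 : Euc n) (θ ^ (i + 1 + 1))) := by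
            rw [one_mul]
            refine measure_mono (closedBall_subset_closedBall ?_)
            exact pow_le_pow_of_le_one h0.le hθ1 (by omega)
        _ ≤ _ := by gcongr; exact_mod_cast hm
    have hs := vol_step hn h0 hm h1 i
    rw [← Measure.addHaar_closedBall_center volume y (θ ^ (i + 1))] at hs
    refine absurd (hs.trans_le (hv.trans (add_le_add hε hPQvol))) ?_
    rw [← add_mul, show (m : ENNReal) + 2 * m = 3 * m by ring]
    exact lt_irrefl _
  obtain ⟨z, hz1, hz2⟩ := hne
  rw [hQ, mem_closedBall] at hz2
  rw [mem_closedBall] at hz1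
  rw [← dist_eq_norm]
  have := dist_triangle_left y (FL l (x i)) z
  linarith

/-- Corollary 7.6: for `𝓕ⁿₙ ⊂ 𝓔 ⊂ 𝓛ⁿ` and a hyperplane `H = u⊥ + t₀u`, the Brock set map
with parameter `0 < b < 1` (a map in `𝒥_H(𝓔)` whose associated contraction is
`x ↦ x + (b − 1)(⟪x,u⟫ − t₀)u`) cannot be weakly approximated on `𝓔` by finite
compositions of polarizations. -/
theorem stmt15 {n : ℕ} (hn : 2 ≤ n) (u : Euc n) (hu : ‖u‖ = 1) (t₀ : ℝ)
    (b : ℝ) (hb0 : 0 < b) (hb1 : b < 1)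
    (𝓔 : Set (Set (Euc n)))
    (hFUB𝓔 : ∀ A : Set (Euc n), isFUB A → A ∈ 𝓔)
    (h𝓔meas : ∀ A ∈ 𝓔, MeasurableSet A ∧ volume A ≠ ⊤)
    (D : Set (Euc n) → Set (Euc n))
    (hDmeas : ∀ A ∈ 𝓔, MeasurableSet (D A) ∧ volume (D A) ≠ ⊤)
    (hmono : ∀ A ∈ 𝓔, ∀ B ∈ 𝓔, essSub A B → essSub (D A) (D B))
    (hmeaspres : ∀ A ∈ 𝓔, volume (D A) = volume A)
    (hballs : ∀ A ∈ 𝓔, (∃ (x : Euc n) (r : ℝ), 0 < r ∧ essEq A (closedBall x r)) →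
        ∃ (x' : Euc n) (r' : ℝ), 0 < r' ∧ essEq (D A) (closedBall x' r'))
    (hcyl : ∀ A ∈ 𝓔, ∀ (c : Euc n) (ρ : ℝ), 0 < ρ →
        essSub A (cyl u c ρ) → essSub (D A) (cyl u c ρ))
    (hψ : ∀ (x : Euc n) (r : ℝ), 0 < r →
        essEq (D (closedBall x r))
          (closedBall (x + ((b - 1) * (⟪x, u⟫ - t₀)) • u) r)) :
    ¬ ∀ A ∈ 𝓔, ∃ S : ℕ → Set (Euc n) → Set (Euc n),
        (∀ k, isPolComp (S k)) ∧
        Tendsto (fun k => volume (sd (S k A) (D A))) atTop (𝓝 0) := by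
  intro hall
  obtain ⟨e, he, heu⟩ := exists_perp hn u hu
  obtain ⟨η, hη0, hη1, hη2⟩ : ∃ η : ℝ, 0 < η ∧ η ≤ b ^ 2 / 16 ∧ η ≤ (1 - b) / 4 :=
    ⟨min (b ^ 2 / 16) ((1 - b) / 4), lt_min (by positivity) (by linarith), min_le_left _ _,
      min_le_right _ _⟩
  -- the net
  obtain ⟨t, ht, htf, hcov⟩ := (isCompact_closedBall (0 : Euc n) 1).finite_cover_balls
    (show 0 < η / 4 by linarith)
  obtain ⟨x, hx, m, hm, hxt⟩ : ∃ x : ℕ → Euc n, (∀ i, ‖x i‖ ≤ 1) ∧ ∃ m : ℕ, 0 < m ∧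
      ∀ y ∈ t, ∃ i < m, x i = y := by
    refine ⟨fun i => htf.toFinset.toList.getD i 0, ?_, htf.toFinset.toList.length + 1,
      Nat.succ_pos _, ?_⟩
    · intro i
      rcases lt_or_ge i htf.toFinset.toList.length with h | h
      · have hmem : htf.toFinset.toList[i] ∈ htf.toFinset.toList := List.getElem_mem h
        rw [Finset.mem_toList, Set.Finite.mem_toFinset] at hmem
        have := ht hmem
        simp only [List.getD_eq_getElem _ _ h]
        simpa using this
      · simp only [List.getD_eq_default _ _ h]
        simp
    · intro y hy
      have : y ∈ htf.toFinset.toList := by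
        rw [Finset.mem_toList, Set.Finite.mem_toFinset]; exact hy
      obtain ⟨i, hi, h⟩ := List.getElem_of_mem this
      exact ⟨i, by omega, by simp only [List.getD_eq_getElem _ _ hi]; exact h⟩
  have hm1 : (1 : ℝ) ≤ m := by exact_mod_cast hm
  obtain ⟨θ, hθ0, hθ1, hθ2⟩ : ∃ θ : ℝ, 0 < θ ∧ θ ≤ 1 / (4 * m) ∧ θ ≤ (η / 2) ^ 2 / (20 * m) :=
    ⟨min (1 / (4 * m)) ((η / 2) ^ 2 / (20 * m)), lt_min (by positivity) (by positivity),
      min_le_left _ _, min_le_right _ _⟩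
  have hθ3 : θ ≤ 1 := hθ1.trans (by rw [div_le_one (by positivity)]; linarith)
  rw [le_div_iff₀ (by positivity)] at hθ2
  have hAF := isFUB_CC e x hθ0 hm
  have hA𝓔 := hFUB𝓔 _ hAF
  obtain ⟨S, hS, hlim⟩ := hall _ hA𝓔
  have hev := hlim.eventually_lt_const
    (measure_closedBall_pos volume (0 : Euc n) (show 0 < θ ^ (m + 1) by positivity))
  obtain ⟨k, hk⟩ := hev.exists
  obtain ⟨l, -, hl, hSl⟩ := hS k
  have hSl' : S k = PL l := hSl
  rw [hSl'] at hk
  -- images of the small balls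
  have hsub : ∀ i < m, ∀ s : ℝ, closedBall (x i + s • e) (θ ^ (i + 1)) ⊆
      (⋃ i ∈ Finset.range m, CC e x θ i) →
      volume (closedBall (x i + ((b - 1) * (⟪x i, u⟫ - t₀)) • u + s • e) (θ ^ (i + 1)) \
        D (⋃ i ∈ Finset.range m, CC e x θ i)) = 0 := by
    intro i hi s hs
    have hr : 0 < θ ^ (i + 1) := by positivity
    have h1 := hmono _ (hFUB𝓔 _ (isFUB_ball (x i + s • e) hr)) _ hA𝓔
      (by unfold essSub; rw [Set.sdiff_eq_empty.2 hs, measure_empty])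
    have h2 := hψ (x i + s • e) _ hr
    have h3 : x i + s • e + ((b - 1) * (⟪x i + s • e, u⟫ - t₀)) • u =
        x i + ((b - 1) * (⟪x i, u⟫ - t₀)) • u + s • e := by
      rw [inner_add_left, real_inner_smul_left, heu, mul_zero, add_zero]; abel
    rw [h3] at h2
    unfold essEq at h2
    unfold essSub at h1
    refine measure_mono_null ?_ (measure_union_null h1 h2)
    rintro z ⟨hz, hz'⟩
    by_cases hzD : z ∈ D (closedBall (x i + s • e) (θ ^ (i + 1)))
    · exact Or.inl ⟨hzD, hz'⟩
    · exact Or.inr (Or.inr ⟨hz, hzD⟩)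
  have hpin : ∀ i < m, ‖FL l (x i) - (x i + ((b - 1) * (⟪x i, u⟫ - t₀)) • u)‖ ≤ η / 2 := by
    intro i hi
    have hCA : CC e x θ i ⊆ ⋃ i ∈ Finset.range m, CC e x θ i :=
      Set.subset_biUnion_of_mem (u := fun i => CC e x θ i)
        (show i ∈ (Finset.range m : Set ℕ) by simpa using hi)
    have a1 := hit hn he hx hθ0 hm hθ1 _ l hl hk i hi _
      (hsub i hi (4 * ((i : ℝ) + 1)) (Set.subset_union_left.trans hCA))
    have a2 := hit hn he hx hθ0 hm hθ1 _ l hl hk i hi _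
      (hsub i hi (-(4 * ((i : ℝ) + 1)))
        (by rw [neg_smul, ← sub_eq_add_neg]; exact Set.subset_union_right.trans hCA))
    obtain ⟨R, hR⟩ : ∃ R : ℝ, R = 4 * ((i : ℝ) + 1) := ⟨_, rfl⟩
    obtain ⟨r, hr⟩ : ∃ r : ℝ, r = θ ^ (i + 1) := ⟨_, rfl⟩
    rw [← hR, ← hr] at a1 a2
    obtain ⟨d, hd⟩ : ∃ d, d = x i + ((b - 1) * (⟪x i, u⟫ - t₀)) • u - FL l (x i) := ⟨_, rfl⟩
    rw [add_sub_right_comm, ← hd] at a1 a2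
    rw [neg_smul, ← sub_eq_add_neg] at a2
    rw [norm_sub_rev, ← hd]
    have hpar := parallelogram_law_with_norm ℝ d (R • e)
    have hRe : ‖R • e‖ = R := by
      rw [norm_smul, he, mul_one, Real.norm_eq_abs, abs_of_nonneg (by rw [hR]; positivity)]
    rw [hRe] at hpar
    have hi' : (i : ℝ) + 1 ≤ m := by exact_mod_cast hi
    have hr0 : 0 < r := by rw [hr]; positivity
    have hrθ : r ≤ θ := by rw [hr]; exact pow_le_of_le_one hθ0.le hθ3 (by omega)
    have hR0 : 0 < R := by rw [hR]; positivity
    have hRm : R ≤ 4 * m := by linarith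
    have hsq1 : ‖d + R • e‖ * ‖d + R • e‖ ≤ (R + 2 * r) * (R + 2 * r) :=
      mul_self_le_mul_self (norm_nonneg _) a1
    have hsq2 : ‖d - R • e‖ * ‖d - R • e‖ ≤ (R + 2 * r) * (R + 2 * r) :=
      mul_self_le_mul_self (norm_nonneg _) a2
    refine le_of_sq_le_sq ?_ (by linarith)
    have b1 : R * r ≤ 4 * m * θ := mul_le_mul hRm hrθ hr0.le (by positivity)
    have b2 : r * r ≤ m * θ := mul_le_mul (by linarith) hrθ hr0.le (by positivity)
    nlinarith
  refine not_close hb0 hb1 u hu t₀ l hl η hη1 hη2 ?_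
  intro y hy
  have hyc := hcov (show y ∈ closedBall (0 : Euc n) 1 by simpa using hy)
  simp only [Set.mem_iUnion] at hyc
  obtain ⟨z, hz, hyz⟩ := hyc
  obtain ⟨i, hi, rfl⟩ := hxt z hz
  rw [mem_ball, dist_eq_norm] at hyz
  have c1 := FL_lip l hl y (x i)
  have c2 := hpin i hi
  have c3 : ‖(x i + ((b - 1) * (⟪x i, u⟫ - t₀)) • u) - (y + ((b - 1) * (⟪y, u⟫ - t₀)) • u)‖ ≤
      ‖y - x i‖ := by
    rw [norm_sub_rev]
    have : (y + ((b - 1) * (⟪y, u⟫ - t₀)) • u) - (x i + ((b - 1) * (⟪x i, u⟫ - t₀)) • u)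
      = (y - x i) + ((b - 1) * ⟪y - x i, u⟫) • u := by
      have : (b - 1) * ⟪y - x i, u⟫ = (b - 1) * (⟪y, u⟫ - t₀) - (b - 1) * (⟪x i, u⟫ - t₀) := by
        rw [inner_sub_left]; ring
      rw [this, sub_smul]; abel
    rw [this]
    refine le_of_sq_le_sq ?_ (norm_nonneg _)
    rw [norm_add_sq_real, norm_smul, real_inner_smul_right, hu, mul_one, Real.norm_eq_abs, sq_abs]
    nlinarith [mul_nonneg (sq_nonneg ⟪y - x i, u⟫) (show 0 ≤ 1 - b ^ 2 by nlinarith)]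
  have e4 : FL l y - (y + ((b - 1) * (⟪y, u⟫ - t₀)) • u) = (FL l y - FL l (x i)) +
      (FL l (x i) - (x i + ((b - 1) * (⟪x i, u⟫ - t₀)) • u)) +
      ((x i + ((b - 1) * (⟪x i, u⟫ - t₀)) • u) - (y + ((b - 1) * (⟪y, u⟫ - t₀)) • u)) := by abel
  rw [e4]
  refine norm_add₃_le.trans ?_
  linarith
end
end
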